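/- arXiv:2110.05670 — 4 statements merged into one kernel-verified Lean document; each statement's English description precedes it below -/
import Mathlib

section
/- Let $G$ be a graph with minimum degree $\delta(G) \geq 1$. Then for any vertex $v$ of $G$, $\rho^2(G - v) \geq \rho^2(G) - 2 d_G(v) + 1$. -/
open SimpleGraph

attribute [local instance] Classical.propDecidable

noncomputable def specRad {V : Type*} [Fintype V] (G : SimpleGraph V) : ℝ :=
  sSup {μ : ℝ | Module.End.HasEigenvalue (Matrix.toLin' (G.adjMatrix ℝ)) μ}

/-!
Write `r = ρ(G)`, `L = ρ(G - v)`, `d = d(v)`, let `B` be the adjacency matrix of `G - v` and `a` the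
indicator of the neighbours of `v`. An eigenvector of `G` for `r` with `v`-entry `t` restricts to
`y` on `G - v` with `a ⬝ y = r t` and `(r - B) y = t a`. If `L < r`, then `t ≠ 0`, since otherwise
`r` would be an eigenvalue of `B`. As `(r - B) (L² - B²)` is a product of commuting positive
semidefinite matrices, evaluating its quadratic form at `y` gives `r (r² - L²) ≤ r d + aᵀ B a`.

It remains to see that `aᵀ B a ≤ r (d - 1)`. If `r ≥ d`, this follows from `aᵀ B a ≤ d (d - 1)`, as
`aᵀ B a` counts the ordered pairs of adjacent neighbours of `v`. If `r ≤ d`, it follows from the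
Rayleigh bound `2 d + aᵀ B a ≤ r (d + 1)` for the indicator of the closed neighbourhood of `v`.
-/

open Matrix
open scoped MatrixOrder

section SymmetricMatrix

variable {n : Type*} [Fintype n]

lemma le_smul_one_iff_dotProduct_mulVec_le [DecidableEq n] {A : Matrix n n ℝ} (hA : A.IsHermitian)
    {c : ℝ} : A ≤ c • 1 ↔ ∀ x, x ⬝ᵥ A *ᵥ x ≤ c * (x ⬝ᵥ x) := by
  have hsub : (c • 1 - A).IsHermitian := (isHermitian_one.smul (.all c)).sub hA
  simp only [le_iff, posSemidef_iff_dotProduct_mulVec, hsub, true_and, star_trivial, sub_mulVec,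
    smul_mulVec, one_mulVec, dotProduct_sub, dotProduct_smul, smul_eq_mul, sub_nonneg]

lemma le_of_mulVec_eq_smul [DecidableEq n] {A : Matrix n n ℝ} {c μ : ℝ} (hA : A ≤ c • 1)
    {x : n → ℝ} (hx : x ≠ 0) (hAx : A *ᵥ x = μ • x) : μ ≤ c := by
  have hnonneg : 0 ≤ (c - μ) * (x ⬝ᵥ x) := by
    simpa only [star_trivial, sub_mulVec, smul_mulVec, one_mulVec, hAx, ← sub_smul,
      dotProduct_smul, smul_eq_mul] using (le_iff.1 hA).dotProduct_mulVec_nonneg x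
  have hx_pos : 0 < x ⬝ᵥ x := by simpa only [star_trivial] using dotProduct_star_self_pos_iff.2 hx
  exact sub_nonneg.1 (nonneg_of_mul_nonneg_left hnonneg hx_pos)

lemma neg_dotProduct_mulVec_le_abs {A : Matrix n n ℝ} (hA : ∀ i j, 0 ≤ A i j) (x : n → ℝ) :
    -(x ⬝ᵥ A *ᵥ x) ≤ |x| ⬝ᵥ A *ᵥ |x| := by
  simp only [dotProduct, mulVec, Finset.mul_sum, ← Finset.sum_neg_distrib, Pi.abs_apply]
  refine Finset.sum_le_sum fun i _ ↦ Finset.sum_le_sum fun j _ ↦ ?_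
  calc -(x i * (A i j * x j)) ≤ |x i * (A i j * x j)| := neg_le_abs _
    _ = |x i| * (A i j * |x j|) := by rw [abs_mul, abs_mul, abs_of_nonneg (hA i j)]

lemma neg_le_smul_one_of_nonneg {m : Type*} [Finite m] [DecidableEq m] {A : Matrix m m ℝ}
    (hA : A.IsHermitian) (hA₀ : ∀ i j, 0 ≤ A i j) {c : ℝ} (hAc : A ≤ c • 1) : -A ≤ c • 1 := by
  have := Fintype.ofFinite m
  rw [le_smul_one_iff_dotProduct_mulVec_le hA.neg]
  intro x
  calc x ⬝ᵥ (-A) *ᵥ x = -(x ⬝ᵥ A *ᵥ x) := by rw [neg_mulVec, dotProduct_neg]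
    _ ≤ |x| ⬝ᵥ A *ᵥ |x| := neg_dotProduct_mulVec_le_abs hA₀ x
    _ ≤ c * (|x| ⬝ᵥ |x|) := (le_smul_one_iff_dotProduct_mulVec_le hA).1 hAc _
    _ = c * (x ⬝ᵥ x) := by simp only [dotProduct, Pi.abs_apply, abs_mul_abs_self]

lemma mulVec_dotProduct_mulVec_nonneg_of_commute {P Q : Matrix n n ℝ} (hP : P.PosSemidef)
    (hQ : Q.PosSemidef) (hPQ : Commute P Q) (y : n → ℝ) : 0 ≤ P *ᵥ y ⬝ᵥ Q *ᵥ y := by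
  classical
  have hPQ_pos : (P * Q).PosSemidef := (hPQ.mul_nonneg hP.nonneg hQ.nonneg).posSemidef
  have hP_symm : Pᵀ = P := hP.isHermitian
  calc 0 ≤ y ⬝ᵥ (P * Q) *ᵥ y := hPQ_pos.dotProduct_mulVec_nonneg y
    _ = P *ᵥ y ⬝ᵥ Q *ᵥ y := by
      rw [← mulVec_mulVec, dotProduct_mulVec, ← mulVec_transpose, hP_symm]

lemma sub_mulVec_dotProduct_sub_mul_add_mulVec_nonneg [DecidableEq n] {B : Matrix n n ℝ} {r L : ℝ}
    (hLr : L ≤ r) (hB : B ≤ L • 1) (hB' : -B ≤ L • 1) (y : n → ℝ) :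
    0 ≤ (r • 1 - B) *ᵥ y ⬝ᵥ ((L • 1 - B) * (L • 1 + B)) *ᵥ y := by
  have hcomm (c : ℝ) {X : Matrix n n ℝ} (hX : Commute B X) : Commute (c • 1 - B) X :=
    ((Commute.one_left X).smul_left c).sub_left hX
  have hB_sub : Commute B (L • 1 - B) := ((Commute.one_right B).smul_right L).sub_right rfl
  have hB_add : Commute B (L • 1 + B) := ((Commute.one_right B).smul_right L).add_right rfl
  have hplus : 0 ≤ L • 1 + B := by simpa only [sub_neg_eq_add] using sub_nonneg.2 hB'
  have hscalar : L • (1 : Matrix n n ℝ) ≤ r • 1 := by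
    simpa only [le_iff, sub_smul] using
      (PosSemidef.one (n := n) (R := ℝ)).smul (sub_nonneg.2 hLr)
  exact mulVec_dotProduct_mulVec_nonneg_of_commute (hB.trans hscalar)
    ((hcomm L hB_add).mul_nonneg (sub_nonneg.2 hB) hplus).posSemidef
    (hcomm r (hB_sub.mul_right hB_add)) y

lemma sq_apply_self_of_isHermitian [DecidableEq n] {A : Matrix n n ℝ} (hA : A.IsHermitian) (i : n) :
    (A ^ 2) i i = A i ⬝ᵥ A i := by
  calc (A ^ 2) i i = A i ⬝ᵥ Aᵀ i := by rw [sq]; rfl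
    _ = A i ⬝ᵥ A i := congrArg (A i ⬝ᵥ ·) (congrFun hA i)

lemma pow_three_apply_self_of_isHermitian [DecidableEq n] {A : Matrix n n ℝ} (hA : A.IsHermitian)
    (i : n) : (A ^ 3) i i = A i ⬝ᵥ A *ᵥ A i := by
  calc (A ^ 3) i i = A i ⬝ᵥ A *ᵥ Aᵀ i := by rw [pow_three]; rfl
    _ = A i ⬝ᵥ A *ᵥ A i := congrArg (A i ⬝ᵥ A *ᵥ ·) (congrFun hA i)

lemma mul_sq_sub_sq_le_of_bordered_eigenvector [DecidableEq n] {B : Matrix n n ℝ} {a y : n → ℝ}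
    {r t L : ℝ} (ht : t ≠ 0) (hay : a ⬝ᵥ y = r * t) (hBy : B *ᵥ y + t • a = r • y) (hLr : L ≤ r)
    (hB : B ≤ L • 1) (hB' : -B ≤ L • 1) :
    r * (r ^ 2 - L ^ 2) ≤ r * (a ⬝ᵥ a) + a ⬝ᵥ B *ᵥ a := by
  have hBy' : B *ᵥ y = r • y - t • a := eq_sub_of_add_eq hBy
  have hres : (r • 1 - B) *ᵥ y = t • a := by
    rw [sub_mulVec, smul_mulVec, one_mulVec, hBy', sub_sub_cancel]
  have hsq : ((L • 1 - B) * (L • 1 + B)) *ᵥ y = (L ^ 2 - r ^ 2) • y + t • (r • a + B *ᵥ a) := by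
    simp only [← mulVec_mulVec, add_mulVec, sub_mulVec, smul_mulVec, one_mulVec, hBy', mulVec_add,
      mulVec_sub, mulVec_smul]
    module
  have hnonneg := sub_mulVec_dotProduct_sub_mul_add_mulVec_nonneg hLr hB hB' y
  rw [hres, hsq] at hnonneg
  simp only [dotProduct_add, smul_dotProduct, dotProduct_smul, smul_eq_mul, hay] at hnonneg
  have hscaled : 0 ≤ t ^ 2 * (r * (a ⬝ᵥ a) + a ⬝ᵥ B *ᵥ a - r * (r ^ 2 - L ^ 2)) := by
    linear_combination hnonneg
  exact sub_nonneg.1 (nonneg_of_mul_nonneg_right hscaled (by positivity))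

end SymmetricMatrix

section VertexDeletion

variable {V : Type*} [Fintype V]

lemma dotProduct_eq_add_dotProduct_ne (v : V) (f g : V → ℝ) :
    f ⬝ᵥ g = f v * g v + (fun w : {w // w ≠ v} ↦ f w) ⬝ᵥ fun w ↦ g w :=
  Fintype.sum_eq_add_sum_subtype_ne (fun w ↦ f w * g w) v

lemma mulVec_apply_ne {A : Matrix V V ℝ} (hA : A.IsHermitian) {v : V} (f : V → ℝ)
    (w : {w // w ≠ v}) :
    (A *ᵥ f) w = f v * A v w + (A.toSquareBlockProp (· ≠ v) *ᵥ fun u ↦ f u) w := by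
  rw [mulVec, dotProduct_eq_add_dotProduct_ne v, ← hA.apply w v, star_trivial, mul_comm]
  rfl

lemma mul_sq_sub_sq_le_of_eigenvector {A : Matrix V V ℝ} (hA : A.IsHermitian) {v : V}
    (hv : A v v = 0) {x : V → ℝ} {r L : ℝ} (hx : x ≠ 0) (hAx : A *ᵥ x = r • x) (hLr : L < r)
    (hB : A.toSquareBlockProp (· ≠ v) ≤ L • 1) (hB' : -A.toSquareBlockProp (· ≠ v) ≤ L • 1) :
    r * (r ^ 2 - L ^ 2) ≤ r * (A ^ 2) v v + (A ^ 3) v v := by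
  set B := A.toSquareBlockProp (· ≠ v)
  set a : {w // w ≠ v} → ℝ := fun w ↦ A v w
  set y : {w // w ≠ v} → ℝ := fun w ↦ x w
  have hay : a ⬝ᵥ y = r * x v := by
    simpa [mulVec, dotProduct_eq_add_dotProduct_ne v, hv] using congrFun hAx v
  have hBy : B *ᵥ y + x v • a = r • y := by
    ext w
    rw [Pi.add_apply, add_comm]
    exact (mulVec_apply_ne hA x w).symm.trans (congrFun hAx w)
  have haa : (A ^ 2) v v = a ⬝ᵥ a := by
    rw [sq_apply_self_of_isHermitian hA, dotProduct_eq_add_dotProduct_ne v, hv, zero_mul, zero_add]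
  have haBa : (A ^ 3) v v = a ⬝ᵥ B *ᵥ a := by
    simp only [pow_three_apply_self_of_isHermitian hA, dotProduct_eq_add_dotProduct_ne v,
      mulVec_apply_ne hA, hv, zero_mul, zero_add]
    rfl
  have hxv : x v ≠ 0 := by
    intro hxv
    have hy_ne : y ≠ 0 := by
      obtain ⟨w, hw⟩ := Function.ne_iff.1 hx
      exact Function.ne_iff.2 ⟨⟨w, fun hwv ↦ hw (hwv ▸ hxv)⟩, hw⟩
    rw [hxv, zero_smul, add_zero] at hBy
    exact hLr.not_ge (le_of_mulVec_eq_smul hB hy_ne hBy)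
  rw [haa, haBa]
  exact mul_sq_sub_sq_le_of_bordered_eigenvector hxv hay hBy hLr.le hB hB'

end VertexDeletion

section SpectralRadius

variable {V : Type*} [Fintype V] (G : SimpleGraph V)

lemma specRad_eq_sSup_spectrum : specRad G = sSup (spectrum ℝ (G.adjMatrix ℝ)) := by
  simp only [specRad, Module.End.hasEigenvalue_iff_mem_spectrum, spectrum_toLin', Set.ofPred_mem_eq]

lemma adjMatrix_le_specRad_smul_one : G.adjMatrix ℝ ≤ specRad G • 1 := by
  rw [← Algebra.algebraMap_eq_smul_one, specRad_eq_sSup_spectrum]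
  exact le_algebraMap_of_spectrum_le (fun μ hμ ↦ le_csSup finite_real_spectrum.bddAbove hμ)
    (G.isHermitian_adjMatrix ℝ)

lemma neg_adjMatrix_le_specRad_smul_one : -G.adjMatrix ℝ ≤ specRad G • 1 := by
  refine neg_le_smul_one_of_nonneg (G.isHermitian_adjMatrix ℝ) (fun u w ↦ ?_)
    (adjMatrix_le_specRad_smul_one G)
  rw [adjMatrix_apply]
  positivity

lemma exists_mulVec_eq_specRad_smul [Nonempty V] :
    ∃ x : V → ℝ, x ≠ 0 ∧ G.adjMatrix ℝ *ᵥ x = specRad G • x := by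
  have hne : (spectrum ℝ (G.adjMatrix ℝ)).Nonempty :=
    ⟨_, (G.isHermitian_adjMatrix ℝ).eigenvalues_mem_spectrum_real (Classical.arbitrary V)⟩
  have hmem := hne.csSup_mem finite_real_spectrum
  rw [← specRad_eq_sSup_spectrum, ← spectrum_toLin',
    ← Module.End.hasEigenvalue_iff_mem_spectrum] at hmem
  obtain ⟨x, hx⟩ := hmem.exists_hasEigenvector
  exact ⟨x, hx.2, by simpa only [toLin'_apply] using hx.apply_eq_smul⟩

variable (v : V)

lemma adjMatrix_sq_apply_self : (G.adjMatrix ℝ ^ 2) v v = G.degree v := by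
  rw [sq, adjMatrix_mul_self_apply_self]

lemma adjMatrix_pow_three_apply_self :
    (G.adjMatrix ℝ ^ 3) v v =
      ∑ u ∈ G.neighborFinset v, G.adjMatrix ℝ u ⬝ᵥ G.adjMatrix ℝ v := by
  rw [pow_three_apply_self_of_isHermitian (G.isHermitian_adjMatrix ℝ), adjMatrix_dotProduct]
  rfl

lemma two_mul_degree_add_adjMatrix_pow_three_le_specRad_mul :
    2 * G.degree v + (G.adjMatrix ℝ ^ 3) v v ≤ specRad G * (G.degree v + 1) := by
  set A := G.adjMatrix ℝ with hA
  have hcol : A.col v = A v := congrFun (G.isHermitian_adjMatrix ℝ) v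
  have hvv : A v v = 0 := by simp [hA]
  have hrow : A v ⬝ᵥ A v = G.degree v := by
    rw [← sq_apply_self_of_isHermitian (G.isHermitian_adjMatrix ℝ), adjMatrix_sq_apply_self]
  have hAv : (A *ᵥ A v) v = G.degree v := hrow
  have hrayleigh := (le_smul_one_iff_dotProduct_mulVec_le (G.isHermitian_adjMatrix ℝ)).1
    (adjMatrix_le_specRad_smul_one G) (A v + Pi.single v 1)
  simp only [mulVec_add, mulVec_single_one, add_dotProduct, dotProduct_add, single_one_dotProduct,
    dotProduct_single_one, Pi.add_apply, Pi.single_eq_same, ← hA, hcol, hvv, hrow, hAv]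
    at hrayleigh
  rw [pow_three_apply_self_of_isHermitian (G.isHermitian_adjMatrix ℝ)]
  linarith

lemma adjMatrix_row_dotProduct_row_le {u v : V} (huv : G.Adj v u) :
    G.adjMatrix ℝ u ⬝ᵥ G.adjMatrix ℝ v ≤ G.degree v - 1 := by
  have hu : u ∈ G.neighborFinset v := (G.mem_neighborFinset v u).2 huv
  calc G.adjMatrix ℝ u ⬝ᵥ G.adjMatrix ℝ v = ∑ w ∈ G.neighborFinset v, G.adjMatrix ℝ u w := by
        rw [dotProduct_comm, adjMatrix_dotProduct]
    _ = ∑ w ∈ (G.neighborFinset v).erase u, G.adjMatrix ℝ u w :=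
        (Finset.sum_erase _ (by simp)).symm
    _ ≤ ∑ w ∈ (G.neighborFinset v).erase u, 1 := by
        refine Finset.sum_le_sum fun w _ ↦ ?_
        rw [adjMatrix_apply]
        split_ifs <;> norm_num
    _ = G.degree v - 1 := by
        rw [Finset.sum_const, nsmul_one, Finset.cast_card_erase_of_mem hu,
          card_neighborFinset_eq_degree]

lemma adjMatrix_pow_three_apply_self_le :
    (G.adjMatrix ℝ ^ 3) v v ≤ G.degree v * (G.degree v - 1) := by
  rw [adjMatrix_pow_three_apply_self, ← card_neighborFinset_eq_degree, ← nsmul_eq_mul]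
  refine Finset.sum_le_card_nsmul _ _ _ fun u hu ↦ ?_
  rw [card_neighborFinset_eq_degree]
  exact adjMatrix_row_dotProduct_row_le G ((G.mem_neighborFinset v u).1 hu)

lemma adjMatrix_pow_three_apply_self_le_specRad_mul (hv : 0 < G.degree v) :
    (G.adjMatrix ℝ ^ 3) v v ≤ specRad G * (G.degree v - 1) := by
  have hd : (1 : ℝ) ≤ G.degree v := mod_cast hv
  rcases le_total (G.degree v : ℝ) (specRad G) with hdr | hrd
  · calc _ ≤ (G.degree v : ℝ) * (G.degree v - 1) := adjMatrix_pow_three_apply_self_le G v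
      _ ≤ specRad G * (G.degree v - 1) := mul_le_mul_of_nonneg_right hdr (sub_nonneg.2 hd)
  · linarith [two_mul_degree_add_adjMatrix_pow_three_le_specRad_mul G v]

lemma specRad_pos_of_degree_pos (hv : 0 < G.degree v) : 0 < specRad G := by
  have hd : (0 : ℝ) < G.degree v := mod_cast hv
  have hnonneg : 0 ≤ (G.adjMatrix ℝ ^ 3) v v := by
    rw [adjMatrix_pow_apply_eq_card_walk]
    positivity
  have hpos : 0 < specRad G * (G.degree v + 1) := by
    linarith [two_mul_degree_add_adjMatrix_pow_three_le_specRad_mul G v]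
  exact pos_of_mul_pos_left hpos (by positivity)

lemma toSquareBlockProp_adjMatrix {V : Type*} (G : SimpleGraph V) (p : V → Prop) :
    (G.adjMatrix ℝ).toSquareBlockProp p = (G.induce {w | p w}).adjMatrix ℝ := by
  ext u w
  simp [toSquareBlockProp_def, adjMatrix_apply]

lemma specRad_mul_sq_sub_sq_le (h : specRad (G.induce {w | w ≠ v}) < specRad G) :
    specRad G * (specRad G ^ 2 - specRad (G.induce {w | w ≠ v}) ^ 2) ≤
      specRad G * G.degree v + (G.adjMatrix ℝ ^ 3) v v := by
  have : Nonempty V := ⟨v⟩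
  obtain ⟨x, hx, hAx⟩ := exists_mulVec_eq_specRad_smul G
  have hH := adjMatrix_le_specRad_smul_one (G.induce {w | w ≠ v})
  have hH' := neg_adjMatrix_le_specRad_smul_one (G.induce {w | w ≠ v})
  rw [← adjMatrix_sq_apply_self]
  refine mul_sq_sub_sq_le_of_eigenvector (G.isHermitian_adjMatrix ℝ) (by simp) hx hAx h ?_ ?_
  · convert hH
    exact toSquareBlockProp_adjMatrix G _
  · convert hH'
    exact toSquareBlockProp_adjMatrix G _

theorem sun_das_general (hv : 0 < G.degree v) :
    specRad G ^ 2 - 2 * (G.degree v : ℝ) + 1 ≤ specRad (G.induce {w | w ≠ v}) ^ 2 := by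
  have hr : 0 < specRad G := specRad_pos_of_degree_pos G v hv
  have hd : (1 : ℝ) ≤ G.degree v := mod_cast hv
  rcases le_or_gt (specRad G) (specRad (G.induce {w | w ≠ v})) with hle | hlt
  · linarith [pow_le_pow_left₀ hr.le hle 2]
  · have hscaled : specRad G * (specRad G ^ 2 - specRad (G.induce {w | w ≠ v}) ^ 2) ≤
        specRad G * (2 * G.degree v - 1) := by
      linarith [specRad_mul_sq_sub_sq_le G v hlt,
        adjMatrix_pow_three_apply_self_le_specRad_mul G v hv]
    linarith [le_of_mul_le_mul_left hscaled hr]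

end SpectralRadius

/-- Sun–Das inequality: if `δ(G) ≥ 1`, then for every vertex `v`,
`ρ²(G - v) ≥ ρ²(G) - 2 d(v) + 1`. -/
theorem sun_das {V : Type*} [Fintype V] (G : SimpleGraph V)
    (hδ : 1 ≤ G.minDegree) (v : V) :
    specRad G ^ 2 - 2 * (G.degree v : ℝ) + 1 ≤
      specRad (G.induce {w | w ≠ v}) ^ 2 :=
  sun_das_general G v (hδ.trans (G.minDegree_le_degree v))
end

section
/- Every 2-connected graph $G$ with minimum degree $\delta(G) \geq k$ for some integer $k \geq 3$ and with at least $2k+1$ vertices contains an even cycle of length at least $2k$. -/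
open SimpleGraph

attribute [local instance] Classical.propDecidable

/-- `G` is 2-connected: at least 3 vertices and deleting any vertex leaves a
connected graph. -/
def TwoConnected {V : Type*} [Fintype V] (G : SimpleGraph V) : Prop :=
  3 ≤ Fintype.card V ∧ ∀ v : V, (G.induce {w | w ≠ v}).Connected

/-!
Suppose that every even cycle is shorter than `2k`, and let `C` be a longest cycle, of length `n`.

If `C` misses a vertex, descend through the cut vertices of a component of `G - C` to find an ear:
a path from some `x` on `C` that otherwise avoids `C` and ends in a vertex `q` adjacent to `C - x`,
such that the path has at least `k` vertices or contains all neighbours of `q` outside `C - x`.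
Let `τ` be the number of its vertices and `A ⊆ {1, …, n - 1}` the positions, counted from `x`, of
the neighbours of `q` on `C`. The ear closes up to cycles of lengths `τ + g` and `τ + n - g` for
`g ∈ A`, and a detour through `q` gives the length `n - (h - g) + 2` for `g < h` in `A`. As no
such length exceeds `n` or is even and at least `2k`, a count with parities yields `|A| + τ ≤ k`,
against the length of the ear or the degree of `q`.

If `C` is Hamiltonian, then `n > 2k` is odd. Let `O i` and `E i` be the sets of odd and of even
offsets `x` in `(0, n)` for which `v i` and `v (i + x)` are adjacent. Crossing chords from `v i` and
`v (i + 1)` close up to an even cycle, which makes `O i + 1` and `E (i + 1)` disjoint subsets of a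
set of `k` even numbers. Together with the degree condition this gives `|E (i + 1)| ≤ |E i|`, so
going once around `C` every estimate is an equality. The resulting rigidity forces all chords
`v i v (i + 3)`, and these span a zigzag cycle of length exactly `2k`.
-/

section PathsAndCycles

variable {V : Type*} {G : SimpleGraph V} {S T : Finset V} {a b c d : V}

/-- There is a path of `G` from `a` to `b` whose vertex set is exactly `S`. -/
def PathOn (G : SimpleGraph V) (S : Finset V) (a b : V) : Prop :=
  ∃ p : G.Walk a b, p.IsPath ∧ p.support.toFinset = S

namespace PathOn

theorem single (a : V) : PathOn G {a} a a :=
  ⟨.nil, .nil, by simp⟩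

theorem start_mem (h : PathOn G S a b) : a ∈ S := by
  obtain ⟨p, -, rfl⟩ := h
  simp

theorem end_mem (h : PathOn G S a b) : b ∈ S := by
  obtain ⟨p, -, rfl⟩ := h
  simp

theorem symm (h : PathOn G S a b) : PathOn G S b a := by
  obtain ⟨p, hp, rfl⟩ := h
  exact ⟨p.reverse, hp.reverse, by simp⟩

theorem append (h : PathOn G S a b) (hbc : G.Adj b c) (h' : PathOn G T c d)
    (hST : Disjoint S T) : PathOn G (S ∪ T) a d := by
  obtain ⟨p, hp, rfl⟩ := h
  obtain ⟨q, hq, rfl⟩ := h'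
  have support_eq : (p.append (.cons hbc q)).support = p.support ++ q.support := by
    simp [Walk.support_append]
  refine ⟨p.append (.cons hbc q), ?_, by rw [support_eq, List.toFinset_append]⟩
  rw [Walk.isPath_def, support_eq]
  exact hp.support_nodup.append hq.support_nodup (List.disjoint_toFinset_iff_disjoint.mp hST)

theorem concat (h : PathOn G S a b) (hbc : G.Adj b c) (hc : c ∉ S) :
    PathOn G (insert c S) a c := by
  rw [Finset.insert_eq, Finset.union_comm]
  exact h.append hbc (single c) (Finset.disjoint_singleton_right.mpr hc)

theorem exists_pathOn_subset (h : PathOn G S a b) (hc : c ∈ S) : ∃ S' ⊆ S, PathOn G S' a c := by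
  obtain ⟨p, hp, rfl⟩ := h
  rw [List.mem_toFinset] at hc
  refine ⟨_, fun x hx ↦ ?_, p.takeUntil c hc, hp.takeUntil hc, rfl⟩
  rw [List.mem_toFinset] at hx ⊢
  exact p.support_takeUntil_subset_support hc hx

end PathOn

/-- `S` is the vertex set of a cycle of `G`; a single edge counts as a cycle on two vertices. -/
def CycleOn (G : SimpleGraph V) (S : Finset V) : Prop :=
  ∃ a b, PathOn G S a b ∧ G.Adj b a

namespace CycleOn

theorem pair (h : G.Adj a b) : CycleOn G {a, b} :=
  ⟨b, a, (PathOn.single b).concat h.symm (by simpa using h.ne), h⟩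

theorem two_le_card (h : CycleOn G S) : 2 ≤ S.card := by
  obtain ⟨a, b, hab, hba⟩ := h
  exact Finset.one_lt_card.mpr ⟨b, hab.end_mem, a, hab.start_mem, hba.ne⟩

theorem exists_isCycle (h : CycleOn G S) (hS : 3 ≤ S.card) :
    ∃ (v : V) (c : G.Walk v v), c.IsCycle ∧ c.length = S.card := by
  obtain ⟨a, b, ⟨p, hp, rfl⟩, hba⟩ := h
  rw [List.toFinset_card_of_nodup hp.support_nodup, Walk.length_support] at hS ⊢
  refine ⟨b, .cons hba p, ?_, rfl⟩
  rw [Walk.isCycle_iff_isPath_tail_and_le_length]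
  exact ⟨by simpa using hp, hS⟩

end CycleOn

/-- Every cycle of `G`, single edges included, that has even length is shorter than `2 * k`. -/
def NoLongEvenCycle (G : SimpleGraph V) (k : ℕ) : Prop :=
  ∀ S, CycleOn G S → Even S.card → S.card < 2 * k

end PathsAndCycles

section Parametrization

variable {V : Type*} {G : SimpleGraph V} {v : ℤ → V} {n : ℕ} {a b c d i j : ℤ}

/-- `v` runs with period `n` around a cycle of length `n` (around a single edge if `n = 2`), so
that arcs of the cycle correspond to intervals of integers. -/
structure IsCycleParam (G : SimpleGraph V) (v : ℤ → V) (n : ℕ) : Prop where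
  two_le : 2 ≤ n
  eq_iff_dvd : ∀ i j, v i = v j ↔ (n : ℤ) ∣ j - i
  adj : ∀ i, G.Adj (v i) (v (i + 1))

/-- The vertices `v a, …, v b`. -/
noncomputable def arc (v : ℤ → V) (a b : ℤ) : Finset V :=
  (Finset.Icc a b).image v

theorem mem_arc {w : V} : w ∈ arc v a b ↔ ∃ i, (a ≤ i ∧ i ≤ b) ∧ v i = w := by
  simp [arc]

theorem insert_arc (hab : a ≤ b + 1) : insert (v (b + 1)) (arc v a b) = arc v a (b + 1) := by
  rw [arc, arc, ← Finset.image_insert, Finset.insert_Icc_right_eq_Icc_add_one hab]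

theorem CycleOn.exists_isCycleParam {S : Finset V} (h : CycleOn G S) :
    ∃ v : ℤ → V, IsCycleParam G v S.card ∧ Set.range v = S := by
  have two_le := h.two_le_card
  obtain ⟨a, b, ⟨p, hp, rfl⟩, hba⟩ := h
  have card_eq : p.support.toFinset.card = p.length + 1 := by
    rw [List.toFinset_card_of_nodup hp.support_nodup, Walk.length_support]
  rw [card_eq] at two_le ⊢
  have hn : (0 : ℤ) < (p.length + 1 : ℕ) := by omega
  have emod_nonneg (i : ℤ) := Int.emod_nonneg i hn.ne'
  have emod_lt (i : ℤ) := Int.emod_lt_of_pos i hn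
  refine ⟨fun i ↦ p.getVert (i % (p.length + 1 : ℕ)).toNat, ⟨two_le, fun i j ↦ ?_, fun i ↦ ?_⟩, ?_⟩
  · have hi := emod_nonneg i
    have hi' := emod_lt i
    have hj := emod_nonneg j
    have hj' := emod_lt j
    rw [← Int.modEq_iff_dvd, hp.getVert_injOn.eq_iff (by grind) (by grind), Int.ModEq]
    omega
  · have hi := emod_nonneg i
    have hi' := emod_lt i
    rw [← Int.emod_add_emod i _ 1]
    by_cases hlast : i % (p.length + 1 : ℕ) = p.length
    · rw [hlast]
      simpa using hba
    · rw [Int.emod_eq_of_lt (a := _ + 1) (by omega) (by omega), Int.toNat_add hi (by norm_num)]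
      exact p.adj_getVert_succ (by omega)
  · ext x
    simp only [Set.mem_range, Finset.mem_coe, List.mem_toFinset,
      Walk.mem_support_iff_exists_getVert]
    refine ⟨fun ⟨i, hi⟩ ↦ ⟨_, hi, ?_⟩, fun ⟨i, hi, hi_le⟩ ↦ ⟨i, ?_⟩⟩
    · have := emod_nonneg i
      have := emod_lt i
      omega
    · rwa [Int.emod_eq_of_lt (by omega) (by omega), Int.toNat_natCast]

namespace IsCycleParam

theorem add_period (h : IsCycleParam G v n) (i : ℤ) : v (i + n) = v i := by
  simp [h.eq_iff_dvd]

theorem apply_period (h : IsCycleParam G v n) : v n = v 0 := by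
  simpa using h.add_period 0

theorem shift (h : IsCycleParam G v n) (i₀ : ℤ) : IsCycleParam G (fun i ↦ v (i₀ + i)) n where
  two_le := h.two_le
  eq_iff_dvd i j := by rw [h.eq_iff_dvd, add_sub_add_left_eq_sub]
  adj i := by rw [← add_assoc]; exact h.adj _

theorem ne_of_lt (h : IsCycleParam G v n) (hij : i < j) (hji : j < i + n) : v i ≠ v j := by
  rw [ne_eq, h.eq_iff_dvd]
  intro hdvd
  have := Int.le_of_dvd (by omega) hdvd
  omega

theorem exists_mem_Ico (h : IsCycleParam G v n) (a i : ℤ) :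
    ∃ j ∈ Set.Ico a (a + n), v j = v i := by
  have hn : (0 : ℤ) < n := by have := h.two_le; omega
  refine ⟨a + (i - a) % n, ⟨?_, ?_⟩, ?_⟩
  · linarith [Int.emod_nonneg (i - a) hn.ne']
  · linarith [Int.emod_lt_of_pos (i - a) hn]
  · rw [h.eq_iff_dvd]
    exact ⟨(i - a) / n, by linarith [Int.mul_ediv_add_emod (i - a) n]⟩

theorem card_arc (h : IsCycleParam G v n) (hb : b < a + n) :
    (arc v a b).card = (b + 1 - a).toNat := by
  rw [arc, Finset.card_image_of_injOn, Int.card_Icc]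
  intro i hi j hj hij
  rw [Finset.coe_Icc, Set.mem_Icc] at hi hj
  by_contra hne
  rcases lt_or_gt_of_ne hne with hlt | hlt
  · exact h.ne_of_lt hlt (by omega) hij
  · exact h.ne_of_lt hlt (by omega) hij.symm

theorem disjoint_arc (h : IsCycleParam G v n) (hbc : b < c) (hda : d < a + n) :
    Disjoint (arc v a b) (arc v c d) := by
  rw [Finset.disjoint_left]
  intro w hw hw'
  obtain ⟨i, hi, rfl⟩ := mem_arc.mp hw
  obtain ⟨j, hj, hji⟩ := mem_arc.mp hw'
  exact h.ne_of_lt (by omega) (by omega) hji.symm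

theorem pathOn_arc (h : IsCycleParam G v n) (hab : a ≤ b) (hb : b < a + n) :
    PathOn G (arc v a b) (v a) (v b) := by
  induction b, hab using Int.leInduction with
  | base => simpa [arc] using PathOn.single (v a)
  | succ b hab ih =>
    rw [← insert_arc (by omega)]
    refine (ih (by omega)).concat (h.adj b) fun hmem ↦ ?_
    obtain ⟨i, hi, hib⟩ := mem_arc.mp hmem
    exact h.ne_of_lt (by omega) (by omega) hib

theorem cycleOn_union_arc (h : IsCycleParam G v n) {P : Finset V} {p q : V} (hP : PathOn G P p q)
    (hab : a ≤ b) (hb : b < a + n) (hq : G.Adj q (v a)) (hp : G.Adj (v b) p)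
    (hdisj : Disjoint P (arc v a b)) : CycleOn G (P ∪ arc v a b) :=
  ⟨p, v b, hP.append hq (h.pathOn_arc hab hb) hdisj, hp⟩

theorem card_union_arc (h : IsCycleParam G v n) {P : Finset V} (hab : a ≤ b) (hb : b < a + n)
    (hdisj : Disjoint P (arc v a b)) : ((P ∪ arc v a b).card : ℤ) = P.card + (b + 1 - a) := by
  rw [Finset.card_union_of_disjoint hdisj, h.card_arc hb]
  omega

end IsCycleParam

end Parametrization

section Anchored

variable {V : Type*} {G : SimpleGraph V} {S K : Finset V} {Z Z' : Set V} {u v : V}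

/-- Every component of the subgraph induced on `S` has a neighbour in `Z`. This is expressed by
cuts: every nonempty part of `S` has a neighbour in the rest of `S` or in `Z`. -/
def Anchored (G : SimpleGraph V) (S : Finset V) (Z : Set V) : Prop :=
  ∀ L ⊆ S, L.Nonempty → ∃ a ∈ L, ∃ b, G.Adj a b ∧ (b ∈ S \ L ∨ b ∈ Z)

namespace Anchored

theorem restrict (h : Anchored G S Z) (hK : K ⊆ S)
    (hS : ∀ a ∈ K, ∀ b ∈ S, G.Adj a b → b ∈ K ∨ b ∈ Z')
    (hZ : ∀ a ∈ K, ∀ b ∈ Z, G.Adj a b → b ∈ Z') : Anchored G K Z' := by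
  intro L hL hne
  obtain ⟨a, ha, b, hab, hb⟩ := h L (hL.trans hK) hne
  refine ⟨a, ha, b, hab, ?_⟩
  have := hS a (hL ha) b
  have := hZ a (hL ha) b
  grind

theorem insert (h : Anchored G K Z) (huv : G.Adj u v) (hv : v ∈ K ∨ v ∈ Z) :
    Anchored G (insert u K) Z := by
  intro L hL hne
  by_cases huL : u ∈ L ∧ v ∉ L
  · exact ⟨u, huL.1, v, huv, by grind⟩
  by_cases huK : u ∈ K
  · rw [Finset.insert_eq_of_mem huK] at hL ⊢
    exact h L hL hne
  · have hne' : (L.erase u).Nonempty := by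
      by_cases hu : u ∈ L
      · exact ⟨v, Finset.mem_erase.mpr ⟨huv.ne', by tauto⟩⟩
      · rwa [Finset.erase_eq_of_notMem hu]
    obtain ⟨a, ha, b, hab, hb⟩ := h (L.erase u) (by grind) hne'
    exact ⟨a, Finset.mem_of_mem_erase ha, b, hab, by grind⟩

theorem sdiff (h : Anchored G S Z) (hKS : K ⊆ S)
    (hS : ∀ a ∈ K, ∀ b ∈ S, G.Adj a b → b ∈ K ∨ b = v)
    (hZ : ∀ a ∈ K, ∀ b ∈ Z, ¬ G.Adj a b) : Anchored G (S \ K) Z := by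
  intro L hL hne
  by_cases hvL : v ∈ L
  · obtain ⟨a, ha, b, hab, hb⟩ := h (L ∪ K) (by grind) (hne.mono Finset.subset_union_left)
    have := hS a
    have := hZ a
    exact ⟨a, by grind, b, hab, by grind⟩
  · obtain ⟨a, ha, b, hab, hb⟩ := h L (by grind) hne
    have hbK : b ∉ K := fun hbK ↦ by
      have := hS b hbK a (by grind) hab.symm
      grind
    exact ⟨a, ha, b, hab, by grind⟩

theorem exists_pathOn (h : Anchored G S Z) (hu : u ∈ S) :
    ∃ P ⊆ S, ∃ q, PathOn G P u q ∧ ∃ z ∈ Z, G.Adj q z := by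
  let R := S.filter fun w ↦ ∃ P ⊆ S, PathOn G P u w
  have huR : u ∈ R :=
    Finset.mem_filter.mpr ⟨hu, {u}, Finset.singleton_subset_iff.mpr hu, .single u⟩
  obtain ⟨a, ha, b, hab, hb⟩ := h R (Finset.filter_subset _ _) ⟨u, huR⟩
  obtain ⟨-, P, hPS, hP⟩ := Finset.mem_filter.mp ha
  refine ⟨P, hPS, a, hP, b, hb.resolve_left fun hbS ↦ ?_, hab⟩
  obtain ⟨hbS, hbR⟩ := Finset.mem_sdiff.mp hbS
  refine hbR (Finset.mem_filter.mpr ⟨hbS, ?_⟩)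
  by_cases hbP : b ∈ P
  · obtain ⟨P', hP', hPb⟩ := hP.exists_pathOn_subset hbP
    exact ⟨P', hP'.trans hPS, hPb⟩
  · exact ⟨_, Finset.insert_subset hbS hPS, hP.concat hab hbP⟩

end Anchored

theorem exists_anchored (S : Finset V) (Z : Set V) :
    ∃ K ⊆ S, Anchored G K Z ∧ ∀ u ∈ S, ∀ v, v ∈ K ∨ v ∈ Z → G.Adj v u → u ∈ K := by
  have empty_mem : ∅ ∈ S.powerset.filter (Anchored G · Z) := by
    simp only [Finset.mem_filter, Finset.mem_powerset, Finset.empty_subset, true_and]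
    intro L hL hne
    exact absurd (Finset.subset_empty.mp hL) hne.ne_empty
  obtain ⟨K, hK, hmax⟩ := Finset.exists_max_image _ Finset.card ⟨∅, empty_mem⟩
  obtain ⟨hKS, hKZ⟩ := Finset.mem_filter.mp hK
  rw [Finset.mem_powerset] at hKS
  refine ⟨K, hKS, hKZ, fun u hu v hv hvu ↦ by_contra fun huK ↦ ?_⟩
  have := hmax (insert u K) (Finset.mem_filter.mpr
    ⟨Finset.mem_powerset.mpr (Finset.insert_subset hu hKS), hKZ.insert hvu.symm hv⟩)
  rw [Finset.card_insert_of_notMem huK] at this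
  omega

end Anchored

section Ears

variable {V : Type*} {G : SimpleGraph V} {k : ℕ} {S K P X : Finset V} {T : Set V} {x x₀ q v u : V}

/-- A nonempty vertex set that is 2-connected relative to its attachments `x` and `T`: its
components reach both, and after the deletion of any vertex they still reach one of the two. -/
structure RootedPiece (G : SimpleGraph V) (S : Finset V) (x : V) (T : Set V) : Prop where
  nonempty : S.Nonempty
  anchored_root : Anchored G S {x}
  anchored : Anchored G S T
  anchored_erase : ∀ v ∈ S, Anchored G (S.erase v) (insert x T)

namespace RootedPiece

theorem of_separator (h : RootedPiece G S x T) (hv : v ∈ S) (hK : K ⊆ S.erase v)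
    (hne : K.Nonempty) (hS : ∀ a ∈ K, ∀ b ∈ S, G.Adj a b → b ∈ K ∨ b = v)
    (hT : ∀ a ∈ K, ∀ b ∈ T, ¬ G.Adj a b) : RootedPiece G K x {v} where
  nonempty := hne
  anchored_root := (h.anchored_erase v hv).restrict hK (by grind) (by grind)
  anchored := h.anchored.restrict (by grind) hS (by grind)
  anchored_erase w hw := (h.anchored_erase w (by grind)).restrict (by grind) (by grind) (by grind)

theorem of_anchored_erase (hT : ∀ v ∈ S, Anchored G (S.erase v) T) (hu : u ∈ S)
    (hK : K ⊆ S.erase u) (hne : K.Nonempty) (hKu : Anchored G K {u})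
    (hS : ∀ a ∈ K, ∀ b ∈ S, G.Adj a b → b ∈ K ∨ b = u) : RootedPiece G K u T where
  nonempty := hne
  anchored_root := hKu
  anchored := (hT u hu).restrict hK (by grind) (by grind)
  anchored_erase w hw := (hT w (by grind)).restrict (by grind) (by grind) (by grind)

end RootedPiece

/-- `P` is a path from `x` to a vertex `q` adjacent to `T` which either has at least `k` vertices
or contains all neighbours of `q` outside `T`. -/
structure IsEar (G : SimpleGraph V) (k : ℕ) (x : V) (T : Set V) (P : Finset V) (q : V) : Prop where
  pathOn : PathOn G P x q
  exists_adj : ∃ y ∈ T, G.Adj q y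
  long_or_closed : k ≤ P.card ∨ ∀ w, G.Adj q w → w ∈ P ∨ w ∈ T

namespace IsEar

theorem le_card_of_singleton [Fintype V] (hδ : ∀ u, k ≤ G.degree u)
    (h : IsEar G k x {v} P q) : k ≤ P.card := by
  refine h.long_or_closed.elim id fun hclosed ↦ ?_
  have hsub : G.neighborFinset q ⊆ insert v (P.erase q) := fun w hw ↦ by
    rw [mem_neighborFinset] at hw
    have := hclosed w hw
    have := hw.ne
    grind
  have := Finset.card_le_card hsub
  have := Finset.card_insert_le v (P.erase q)
  have := Finset.card_erase_add_one h.pathOn.end_mem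
  have := hδ q
  rw [← card_neighborFinset_eq_degree] at this
  omega

theorem exists_extension [Fintype V] (hδ : ∀ u, k ≤ G.degree u) (h : IsEar G k x {v} P q)
    (hS : Anchored G S T) (hv : v ∈ S) (hPS : Disjoint P S) :
    ∃ P' q', IsEar G k x T P' q' ∧ P' ⊆ P ∪ S ∧ q' ∈ S := by
  obtain ⟨_, rfl, hqv⟩ := h.exists_adj
  obtain ⟨R, hRS, r, hR, hrT⟩ := hS.exists_pathOn hv
  refine ⟨P ∪ R, r, ⟨h.pathOn.append hqv hR (hPS.mono_right hRS), hrT, .inl ?_⟩,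
    Finset.union_subset_union_right hRS, hRS hR.end_mem⟩
  exact (h.le_card_of_singleton hδ).trans (Finset.card_le_card Finset.subset_union_left)

end IsEar

theorem RootedPiece.exists_isEar [Fintype V] (hδ : ∀ u, k ≤ G.degree u) (h : RootedPiece G S x T)
    (hX : PathOn G X x₀ x) (hXS : Disjoint X S)
    (hclosed : ∀ u ∈ S, ∀ w, G.Adj u w → w ∈ S ∨ w ∈ T ∨ w ∈ X) :
    ∃ P q, IsEar G k x₀ T P q ∧ P ⊆ X ∪ S ∧ q ∈ S := by
  induction S using Finset.strongInduction generalizing x T X with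
  | H S ih =>
  have hXS' := Finset.disjoint_left.mp hXS
  by_cases hcut : ∀ v ∈ S, Anchored G (S.erase v) T
  · obtain ⟨u, hu, b, hub, hb⟩ := h.anchored_root S subset_rfl h.nonempty
    obtain rfl : b = x := by simpa using hb
    have hX' : PathOn G (insert u X) x₀ u := hX.concat hub.symm (by grind)
    obtain ⟨K, hK, hKu, hKmax⟩ := exists_anchored (G := G) (S.erase u) {u}
    have hKS : ∀ a ∈ K, ∀ b ∈ S, G.Adj a b → b ∈ K ∨ b = u := fun a ha b hb hab ↦
      or_iff_not_imp_right.mpr fun hbu ↦ hKmax b (by grind) a (.inl ha) hab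
    rcases K.eq_empty_or_nonempty with rfl | hne
    · have hu_nbr : ∀ w ∈ S, ¬ G.Adj u w := fun w hw huw ↦
        Finset.notMem_empty w (hKmax w (Finset.mem_erase.mpr ⟨huw.ne', hw⟩) u (.inr rfl) huw)
      obtain ⟨_, ha, y, huy, hy⟩ := h.anchored {u} (by simpa) (by simp)
      refine ⟨insert u X, u, ⟨hX', ⟨y, ?_, ?_⟩, .inr fun w huw ↦ ?_⟩, by grind, hu⟩
      all_goals grind
    · obtain ⟨P, q, hP, hPX, hq⟩ := ih K (by grind)
        (of_anchored_erase hcut hu hK hne hKu hKS) hX' (Finset.disjoint_left.mpr (by grind))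
        fun a ha w haw ↦ by have := hKS a ha w; have := hclosed a; grind
      exact ⟨P, q, hP, by grind, by grind⟩
  · push Not at hcut
    obtain ⟨v, hv, hvT⟩ := hcut
    simp only [Anchored, not_forall, not_exists, not_and, not_or] at hvT
    obtain ⟨K, hK, hne, hout⟩ := hvT
    have hKS : ∀ a ∈ K, ∀ b ∈ S, G.Adj a b → b ∈ K ∨ b = v := fun a ha b hb hab ↦ by
      have := hout a ha b hab
      grind
    have hKT : ∀ a ∈ K, ∀ b ∈ T, ¬ G.Adj a b := fun a ha b hb hab ↦ (hout a ha b hab).2 hb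
    obtain ⟨P, q, hP, hPX, -⟩ := ih K (by grind) (h.of_separator hv hK hne hKS hKT) hX
      (hXS.mono_right (by grind)) fun a ha w haw ↦ by
        have := hKS a ha w; have := hclosed a; have := hKT a ha w; grind
    obtain ⟨P', q', hP', hPP', hq'⟩ := hP.exists_extension hδ (h.anchored.sdiff (by grind) hKS hKT)
      (by grind) (Finset.disjoint_left.mpr (by grind))
    exact ⟨P', q', hP', by grind, by grind⟩

theorem TwoConnected.exists_adj_of_cut [Fintype V] (h : TwoConnected G) {z : V} (hu : u ∈ K)
    (huv : u ≠ v) (hz : z ∉ K) (hzv : z ≠ v) : ∃ a ∈ K, ∃ b ∉ K, b ≠ v ∧ G.Adj a b := by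
  obtain ⟨p⟩ := (h.2 v).preconnected ⟨u, huv⟩ ⟨z, hzv⟩
  obtain ⟨d, -, hd, hd'⟩ := p.exists_boundary_dart (Subtype.val ⁻¹' (K : Set V)) hu hz
  exact ⟨d.fst, hd, d.snd, hd', d.snd.2, d.adj⟩

theorem TwoConnected.anchored [Fintype V] (h : TwoConnected G) {z : V} (hv : v ∉ S) (hz : z ∉ S)
    (hzv : z ≠ v) (hclosed : ∀ a ∈ S, ∀ b, G.Adj a b → b ∈ S ∨ b = v ∨ b ∈ T) :
    Anchored G S T := by
  rintro L hL ⟨u, hu⟩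
  obtain ⟨a, ha, b, hb, hbv, hab⟩ :=
    h.exists_adj_of_cut hu (ne_of_mem_of_not_mem (hL hu) hv) (fun hzL ↦ hz (hL hzL)) hzv
  have := hclosed a (hL ha) b hab
  exact ⟨a, ha, b, hab, by grind⟩

theorem TwoConnected.exists_isEar [Fintype V] (h : TwoConnected G) (hδ : ∀ u, k ≤ G.degree u)
    {C : Finset V} (hC : 1 < C.card) (hne : C ≠ Finset.univ) :
    ∃ x ∈ C, ∃ P q, IsEar G k x (C \ {x}) P q ∧ q ∉ C ∧ ∀ w ∈ P, w ∈ C → w = x := by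
  obtain ⟨z₁, hz₁, z₂, hz₂, hz₁₂⟩ := Finset.one_lt_card.mp hC
  obtain ⟨u, hu⟩ : ∃ u, u ∉ C := by simpa [Finset.eq_univ_iff_forall] using hne
  obtain ⟨a, ha, x, hx, -, hax⟩ := h.exists_adj_of_cut (Finset.mem_compl.mpr hu)
    (ne_of_mem_of_not_mem hz₁ hu).symm (by simpa : z₂ ∉ Cᶜ) hz₁₂.symm
  rw [Finset.mem_compl, not_not] at hx
  obtain ⟨H, hHC, hHx, hHmax⟩ := exists_anchored (G := G) Cᶜ {x}
  obtain ⟨z, hz, hzx⟩ : ∃ z ∈ C, z ≠ x := Finset.exists_mem_ne hC x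
  have hHC' : ∀ w ∈ H, w ∉ C := fun w hw ↦ Finset.mem_compl.mp (hHC hw)
  have hclosed : ∀ a ∈ H, ∀ b, G.Adj a b → b ∈ H ∨ b ∈ C := fun a ha b hab ↦
    or_iff_not_imp_right.mpr fun hb ↦ hHmax b (Finset.mem_compl.mpr hb) a (.inl ha) hab
  have hH : RootedPiece G H x (C \ {x}) :=
    { nonempty := ⟨a, hHmax a ha x (.inr rfl) hax.symm⟩
      anchored_root := hHx
      anchored := h.anchored (fun hxH ↦ hHC' x hxH hx) (fun hzH ↦ hHC' z hzH hz) hzx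
        fun a ha b hab ↦ by have := hclosed a ha b hab; grind
      anchored_erase v hv := h.anchored (Finset.notMem_erase v H) (z := x) (by grind) (by grind)
        fun a ha b hab ↦ by have := hclosed a (Finset.mem_of_mem_erase ha) b hab; grind }
  obtain ⟨P, q, hP, hPH, hq⟩ := hH.exists_isEar hδ (.single x) (by grind [Finset.disjoint_left])
    fun a ha b hab ↦ by have := hclosed a ha b hab; grind
  exact ⟨x, hx, P, q, hP, hHC' q hq, by grind⟩

end Ears

section SpacedSets

variable {A : Finset ℤ} {l r : ℤ}

theorem two_mul_card_le_of_spaced (hl : ∀ x ∈ A, l ≤ x) (hr : ∀ x ∈ A, x ≤ r)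
    (hA : ∀ x ∈ A, ∀ y ∈ A, x < y → x + 2 ≤ y) (hlr : l ≤ r + 2) :
    2 * (A.card : ℤ) ≤ r - l + 2 := by
  have disjoint_succ : Disjoint A (A.image (· + 1)) := by
    simp only [Finset.disjoint_left, Finset.mem_image, not_exists, not_and]
    intro x hx y hy hyx
    have := hA y hy x hx (by omega)
    omega
  have hsub : A ∪ A.image (· + 1) ⊆ Finset.Icc l (r + 1) := by
    grind
  have := Finset.card_le_card hsub
  rw [Finset.card_union_of_disjoint disjoint_succ,
    Finset.card_image_of_injective _ (add_left_injective 1), Int.card_Icc] at this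
  omega

theorem exists_consecutive {p : ℤ → Prop} (hl : l ∈ A) (hr : r ∈ A) (hlr : l ≤ r) (hpl : p l)
    (hpr : ¬ p r) :
    ∃ x ∈ A, ∃ y ∈ A, x < y ∧ p x ∧ ¬ p y ∧ ∀ z ∈ A, z ≤ x ∨ y ≤ z := by
  obtain ⟨x, hx, hx_max⟩ := Finset.exists_max_image (A.filter fun z ↦ p z ∧ z ≤ r) id
    ⟨l, by simp [*]⟩
  simp only [Finset.mem_filter, id] at hx hx_max
  obtain ⟨y, hy, hy_min⟩ := Finset.exists_min_image (A.filter (x < ·)) id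
    ⟨r, by grind⟩
  simp only [Finset.mem_filter, id] at hy hy_min
  have hyr : y ≤ r := hy_min r (by grind)
  refine ⟨x, hx.1, y, hy.1, hy.2, hx.2.1, fun hpy ↦ ?_, fun z hz ↦ ?_⟩
  · have := hx_max y ⟨hy.1, hpy, hyr⟩
    omega
  · have := hy_min z
    grind

/-- The lengths a cycle may have when `n` is the length of a longest cycle and no even cycle has
length `2 * k` or more. -/
def AdmissibleLength (n k : ℕ) (l : ℤ) : Prop :=
  l ≤ n ∧ (Even l → l < 2 * k)

theorem AdmissibleLength.card_add_le {n k : ℕ} {τ : ℤ} (hA : A.Nonempty)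
    (hn : AdmissibleLength n k n)
    (hleft : ∀ g ∈ A, AdmissibleLength n k (τ + g))
    (hright : ∀ g ∈ A, AdmissibleLength n k (τ + (n - g)))
    (hgap : ∀ x ∈ A, ∀ y ∈ A, x < y → AdmissibleLength n k (n - (y - x) + 2)) :
    A.card + τ ≤ k := by
  simp only [AdmissibleLength, Int.even_iff] at *
  have hspaced : ∀ x ∈ A, ∀ y ∈ A, x < y → x + 2 ≤ y := fun x hx y hy hxy ↦ by
    have := hgap x hx y hy hxy
    omega
  obtain ⟨l, hl, hl_min⟩ := Finset.exists_min_image A id hA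
  obtain ⟨r, hr, hr_max⟩ := Finset.exists_max_image A id hA
  dsimp only [id] at hl_min hr_max
  have hlr := hl_min r hr
  have hcard := two_mul_card_le_of_spaced hl_min hr_max hspaced (by omega)
  by_contra! hk
  have hl' := hright l hl
  have hr' := hleft r hr
  have l_even : (τ + l) % 2 = 0 := by omega
  have r_odd : (τ + r) % 2 ≠ 0 := by omega
  obtain ⟨x, hx, y, hy, hxy, x_even, y_odd, hconsec⟩ :=
    exists_consecutive (p := fun z ↦ (τ + z) % 2 = 0) hl hr hlr l_even r_odd
  have hgap := hgap x hx y hy hxy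
  have hlow := two_mul_card_le_of_spaced (A := A.filter (· ≤ x)) (l := l) (r := x)
    (by grind) (by grind) (by grind) (by grind)
  have hhigh := two_mul_card_le_of_spaced (A := A.filter (¬ · ≤ x)) (l := y) (r := r)
    (by grind) (by grind) (by grind) (by grind)
  have := Finset.card_filter_add_card_filter_not (s := A) (· ≤ x)
  omega

end SpacedSets

section LongestCycle

variable {V : Type*} {G : SimpleGraph V} {v : ℤ → V} {n k : ℕ} {P : Finset V} {q : V}

/-- The positions of the neighbours of `q` on the cycle `v`, except for the base point `v 0`. -/
noncomputable def neighborPositions (G : SimpleGraph V) (v : ℤ → V) (n : ℕ) (q : V) : Finset ℤ :=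
  (Finset.Ioo (0 : ℤ) n).filter fun g ↦ G.Adj q (v g)

theorem mem_neighborPositions {g : ℤ} :
    g ∈ neighborPositions G v n q ↔ (0 < g ∧ g < n) ∧ G.Adj q (v g) := by
  simp [neighborPositions]

namespace IsCycleParam

theorem exists_mem_neighborPositions (h : IsCycleParam G v n) {i : ℤ} (hqi : G.Adj q (v i))
    (hi : v i ≠ v 0) : ∃ j ∈ neighborPositions G v n q, v j = v i := by
  obtain ⟨j, ⟨hj, hjn⟩, hji⟩ := h.exists_mem_Ico 0 i
  have hj0 : j ≠ 0 := by rintro rfl; exact hi hji.symm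
  exact ⟨j, mem_neighborPositions.mpr ⟨by omega, hji ▸ hqi⟩, hji⟩

theorem cycleOn_arc (h : IsCycleParam G v n) : CycleOn G (arc v 0 (n - 1)) := by
  have := h.two_le
  refine ⟨_, _, h.pathOn_arc (by omega) (by omega), ?_⟩
  simpa [h.apply_period] using h.adj (n - 1)

theorem admissibleLength_add (h : IsCycleParam G v n)
    (hadm : ∀ S, CycleOn G S → AdmissibleLength n k S.card) {p : V} (hP : PathOn G P p q)
    {a b : ℤ} (hab : a ≤ b) (hb : b < a + n) (hq : G.Adj q (v a)) (hp : G.Adj (v b) p)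
    (hdisj : Disjoint P (arc v a b)) : AdmissibleLength n k (P.card + (b + 1 - a)) := by
  rw [← h.card_union_arc hab hb hdisj]
  exact hadm _ (h.cycleOn_union_arc hP hab hb hq hp hdisj)

theorem degree_lt_of_closed [Fintype V] (h : IsCycleParam G v n) (hqP : q ∈ P)
    (hclosed : ∀ w, G.Adj q w → w ∈ P ∨ w ∈ Set.range v \ {v 0}) :
    G.degree q < (neighborPositions G v n q).card + P.card := by
  have hsub : G.neighborFinset q ⊆ (neighborPositions G v n q).image v ∪ P.erase q := fun w hw ↦ by
    rw [mem_neighborFinset] at hw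
    rw [Finset.mem_union, Finset.mem_erase, Finset.mem_image]
    refine (hclosed w hw).symm.imp ?_ fun hwP ↦ ⟨hw.ne', hwP⟩
    rintro ⟨⟨i, rfl⟩, hi⟩
    exact h.exists_mem_neighborPositions hw hi
  rw [← card_neighborFinset_eq_degree]
  calc (G.neighborFinset q).card
      ≤ ((neighborPositions G v n q).image v).card + (P.erase q).card :=
        (Finset.card_le_card hsub).trans (Finset.card_union_le _ _)
    _ ≤ (neighborPositions G v n q).card + (P.erase q).card := by
        gcongr; exact Finset.card_image_le
    _ < (neighborPositions G v n q).card + P.card := by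
        gcongr; exact Finset.erase_ssubset hqP

theorem card_neighborPositions_add_le (h : IsCycleParam G v n)
    (hadm : ∀ S, CycleOn G S → AdmissibleLength n k S.card) (hpath : PathOn G P (v 0) q)
    (hq : q ∉ Set.range v) (hP : ∀ w ∈ P, w ∈ Set.range v → w = v 0)
    (hne : (neighborPositions G v n q).Nonempty) :
    (neighborPositions G v n q).card + (P.card : ℤ) ≤ k := by
  have hPdisj {a b : ℤ} (ha : 0 < a) (hb : b < n) : Disjoint P (arc v a b) := by
    rw [Finset.disjoint_left]
    intro w hw hw'
    obtain ⟨j, hj, rfl⟩ := mem_arc.mp hw'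
    exact h.ne_of_lt (by omega) (by omega) (hP _ hw ⟨j, rfl⟩).symm
  have hqdisj (a b : ℤ) : Disjoint {q} (arc v a b) := by
    rw [Finset.disjoint_singleton_left, mem_arc]
    exact fun ⟨j, _, hj⟩ ↦ hq ⟨j, hj⟩
  refine AdmissibleLength.card_add_le (n := n) hne ?_ (fun g hg ↦ ?_) (fun g hg ↦ ?_)
    fun x hx y hy hxy ↦ ?_
  · simpa [h.card_arc] using hadm _ h.cycleOn_arc
  · obtain ⟨hg, hqg⟩ := mem_neighborPositions.mp hg
    simpa using h.admissibleLength_add hadm hpath.symm (a := 1) (b := g) (by omega) (by omega)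
      (h.adj 0) hqg.symm (hPdisj (by omega) (by omega))
  · obtain ⟨hg, hqg⟩ := mem_neighborPositions.mp hg
    have hlast : G.Adj (v (n - 1)) (v 0) := by simpa [h.apply_period] using h.adj (n - 1)
    simpa using h.admissibleLength_add hadm hpath (a := g) (b := n - 1) (by omega) (by omega)
      hqg hlast (hPdisj (by omega) (by omega))
  · obtain ⟨hx, hqx⟩ := mem_neighborPositions.mp hx
    obtain ⟨hy, hqy⟩ := mem_neighborPositions.mp hy
    convert h.admissibleLength_add hadm (.single q) (a := y) (b := x + n) (by omega) (by omega)
      hqy (by rw [h.add_period]; exact hqx.symm) (hqdisj _ _) using 1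
    rw [Finset.card_singleton]
    omega

theorem not_isEar [Fintype V] (h : IsCycleParam G v n) (hδ : ∀ u, k ≤ G.degree u)
    (hadm : ∀ S, CycleOn G S → AdmissibleLength n k S.card) (hq : q ∉ Set.range v)
    (hP : ∀ w ∈ P, w ∈ Set.range v → w = v 0) :
    ¬ IsEar G k (v 0) (Set.range v \ {v 0}) P q := by
  rintro ⟨hpath, ⟨_, ⟨⟨i, rfl⟩, hi⟩, hqi⟩, hlong | hclosed⟩ <;>
    obtain ⟨j, hj, -⟩ := h.exists_mem_neighborPositions hqi hi <;>
    have hcard := h.card_neighborPositions_add_le hadm hpath hq hP ⟨j, hj⟩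
  · have := Finset.card_pos.mpr ⟨j, hj⟩
    omega
  · have := h.degree_lt_of_closed hpath.end_mem hclosed
    have := hδ q
    omega

end IsCycleParam

end LongestCycle

section OddHamiltonianCycle

variable {V : Type*} {G : SimpleGraph V} {v : ℤ → V} {n k : ℕ} {a b c i r x y z M : ℤ}

/-- The offsets `x ≡ r [ZMOD 2]` strictly between `0` and `n` for which `v i` and `v (i + x)` are
adjacent. -/
noncomputable def offsets (G : SimpleGraph V) (v : ℤ → V) (n : ℕ) (r i : ℤ) : Finset ℤ :=
  (neighborPositions G (fun x ↦ v (i + x)) n (v i)).filter (· % 2 = r)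

theorem mem_offsets :
    x ∈ offsets G v n r i ↔ (0 < x ∧ x < n) ∧ G.Adj (v i) (v (i + x)) ∧ x % 2 = r := by
  rw [offsets, Finset.mem_filter, mem_neighborPositions, and_assoc]

/-- The even numbers in `(0, n)` outside the window `(M + 1, M + n - 2 * k]`. If `M` is the largest
odd offset at `i` and there is no long even cycle, the even offsets at `i + 1` avoid this window. -/
noncomputable def evensOutsideGap (n k : ℕ) (M : ℤ) : Finset ℤ :=
  (Finset.Ioo (0 : ℤ) n).filter fun z ↦ z % 2 = 0 ∧ (z ≤ M + 1 ∨ M + n - 2 * k < z)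

/-- The bound of `IsCycleParam.card_offsets_add_le` is attained, even when the odd and the even
offsets are taken at unrelated base points. -/
def OffsetsTight (G : SimpleGraph V) (v : ℤ → V) (n k : ℕ) : Prop :=
  ∀ i j, (offsets G v n 1 i).card + (offsets G v n 0 j).card = k

theorem eq_of_antitone_of_periodic {α β : Type*} [PartialOrder α] [AddCommGroup β] [LinearOrder β]
    [IsOrderedAddMonoid β] [Archimedean β] {f : β → α} {c : β} (hf : Antitone f) (hc : 0 < c)
    (hper : Function.Periodic f c) (i j : β) : f i = f j := by
  wlog hij : i ≤ j generalizing i j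
  · exact (this j i (le_of_not_ge hij)).symm
  obtain ⟨m, hm⟩ := Archimedean.arch (j - i) hc
  refine le_antisymm ?_ (hf hij)
  rw [← hper.nsmul m i]
  exact hf (sub_le_iff_le_add'.mp hm)

namespace IsCycleParam

theorem lt_of_crossing_chords (h : IsCycleParam G v n) (hne : NoLongEvenCycle G k) (hab : a < b)
    (hbc : b < c) (hca : c ≤ a + n) (heven : (n + 1 - (c - b)) % 2 = 0) (hadj : G.Adj (v a) (v b))
    (hadj' : G.Adj (v (a + 1)) (v c)) : n + 1 - (c - b) < 2 * k := by
  have hpath := (h.pathOn_arc (a := a + 1) (b := b) (by omega) (by omega)).symm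
  have hdisj := h.disjoint_arc (a := a + 1) (d := a + n) hbc (by omega)
  have hcyc := h.cycleOn_union_arc hpath hca (by omega) hadj' (by rwa [h.add_period]) hdisj
  have hcard := h.card_union_arc hca (by omega) hdisj
  rw [h.card_arc (by omega)] at hcard
  have := hne _ hcyc (by rw [Nat.even_iff]; omega)
  omega

theorem pathOn_zigzag (h : IsCycleParam G v n) (hadj : ∀ i, G.Adj (v i) (v (i + 3))) (t : ℕ)
    (ht : 2 * t + 2 ≤ n) : PathOn G (arc v 0 (2 * t + 1)) (v (2 * t)) (v (2 * t + 1)) := by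
  induction t with
  | zero => simpa using h.pathOn_arc (a := 0) (b := 1) (by omega) (by omega)
  | succ t ih =>
    have hnot {j : ℤ} (hj : 2 * t + 1 < j) (hjn : j < n) : v j ∉ arc v 0 (2 * t + 1) := by
      intro hmem
      obtain ⟨i, hi, hij⟩ := mem_arc.mp hmem
      exact h.ne_of_lt (by omega) (by omega) hij
    have hlong := (ih (by omega)).symm.concat (hadj (2 * t)) (hnot (by omega) (by omega))
    have hback : G.Adj (v (2 * t + 1)) (v (2 * t + 2)) := by
      simpa [add_assoc] using h.adj (2 * t + 1)
    have hmem : v (2 * t + 2) ∉ insert (v (2 * t + 3)) (arc v 0 (2 * t + 1)) := by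
      rw [Finset.mem_insert, not_or]
      exact ⟨h.ne_of_lt (by omega) (by omega), hnot (by omega) (by omega)⟩
    have := (hlong.symm.concat hback hmem).symm
    rw [Finset.insert_comm, show (2 * t + 2 : ℤ) = 2 * t + 1 + 1 by ring, insert_arc (by omega),
      show (2 * t + 3 : ℤ) = 2 * t + 1 + 1 + 1 by ring, insert_arc (by omega)] at this
    push_cast
    convert this using 2 <;> ring

theorem offsets_periodic (h : IsCycleParam G v n) (r : ℤ) :
    Function.Periodic (offsets G v n r) n := fun i ↦ by
  ext x
  rw [mem_offsets, mem_offsets, add_right_comm, h.add_period, h.add_period]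

theorem sub_mem_offsets (h : IsCycleParam G v n) (hn : n % 2 = 1) (hy : y ∈ offsets G v n 0 i) :
    n - y ∈ offsets G v n 1 (i + y) := by
  rw [mem_offsets] at hy ⊢
  refine ⟨by omega, ?_, by omega⟩
  rw [show i + y + (n - y) = i + n by ring, h.add_period]
  exact hy.2.1.symm

theorem one_mem_offsets (h : IsCycleParam G v n) (i : ℤ) : 1 ∈ offsets G v n 1 i := by
  have := h.two_le
  exact mem_offsets.mpr ⟨by omega, h.adj i, rfl⟩

theorem offsets_gap (h : IsCycleParam G v n) (hne : NoLongEvenCycle G k) (hn : n % 2 = 1)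
    (hx : x ∈ offsets G v n 1 i) (hy : y ∈ offsets G v n 0 (i + 1)) (hxy : x < y) :
    n - 2 * k + 2 ≤ y - x := by
  rw [mem_offsets] at hx hy
  have := h.lt_of_crossing_chords hne (by omega) (by omega) (by omega) (by omega) hx.2.1 hy.2.1
  omega

theorem lt_of_mem_offsets (h : IsCycleParam G v n) (hne : NoLongEvenCycle G k) (hn : n % 2 = 1)
    (hx : x ∈ offsets G v n 1 i) : x < 2 * k := by
  have last_mem : (n - 1 : ℤ) ∈ offsets G v n 0 (i + 1) := by
    rw [mem_offsets]
    refine ⟨by have := h.two_le; omega, ?_, by omega⟩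
    rw [show i + 1 + (n - 1 : ℤ) = i + n by ring, h.add_period]
    exact (h.adj i).symm
  have := mem_offsets.mp hx
  have := h.offsets_gap hne hn hx last_mem (by omega)
  omega

theorem card_evensOutsideGap_le (h : IsCycleParam G v n) (hne : NoLongEvenCycle G k)
    (hn : n % 2 = 1) (hM : M ∈ offsets G v n 1 i) : (evensOutsideGap n k M).card ≤ k := by
  have hMk := h.lt_of_mem_offsets hne hn hM
  rw [mem_offsets] at hM
  have hsub : evensOutsideGap n k M ⊆ (Finset.Icc (1 : ℤ) k).image
      fun j ↦ if 2 * j ≤ M + 1 then 2 * j else 2 * j + (n - 1 - 2 * k) := fun z hz ↦ by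
    simp only [evensOutsideGap, Finset.mem_filter, Finset.mem_Ioo] at hz
    simp only [Finset.mem_image, Finset.mem_Icc]
    by_cases hzM : z ≤ M + 1
    · exact ⟨z / 2, by omega, by rw [if_pos (by omega)]; omega⟩
    · exact ⟨(z + 1 - n) / 2 + k, by omega, by rw [if_neg (by omega)]; omega⟩
  simpa using (Finset.card_le_card hsub).trans Finset.card_image_le

theorem offsets_subset_evensOutsideGap (h : IsCycleParam G v n) (hne : NoLongEvenCycle G k)
    (hn : n % 2 = 1) (hM : M ∈ offsets G v n 1 i) (hmax : ∀ x ∈ offsets G v n 1 i, x ≤ M) :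
    (offsets G v n 1 i).image (· + 1) ∪ offsets G v n 0 (i + 1) ⊆ evensOutsideGap n k M := by
  intro z hz
  rw [evensOutsideGap, Finset.mem_filter, Finset.mem_Ioo]
  rcases Finset.mem_union.mp hz with hz | hz
  · obtain ⟨x, hx, rfl⟩ := Finset.mem_image.mp hz
    have := hmax x hx
    rw [mem_offsets] at hx
    omega
  · have := h.offsets_gap hne hn hM hz
    rw [mem_offsets] at hz
    omega

theorem card_offsets_union (h : IsCycleParam G v n) (hne : NoLongEvenCycle G k) (hn : n % 2 = 1)
    (hnk : 2 * k < n) (i : ℤ) :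
    ((offsets G v n 1 i).image (· + 1) ∪ offsets G v n 0 (i + 1)).card =
      (offsets G v n 1 i).card + (offsets G v n 0 (i + 1)).card := by
  rw [Finset.card_union_of_disjoint, Finset.card_image_of_injective _ (add_left_injective 1)]
  simp only [Finset.disjoint_left, Finset.mem_image]
  rintro _ ⟨x, hx, rfl⟩ hy
  have := h.offsets_gap hne hn hx hy (by omega)
  omega

theorem exists_max_offset (h : IsCycleParam G v n) (i : ℤ) :
    ∃ M ∈ offsets G v n 1 i, ∀ x ∈ offsets G v n 1 i, x ≤ M :=
  Finset.exists_max_image _ id ⟨1, h.one_mem_offsets i⟩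

theorem card_offsets_add_le (h : IsCycleParam G v n) (hne : NoLongEvenCycle G k) (hn : n % 2 = 1)
    (hnk : 2 * k < n) (i : ℤ) :
    (offsets G v n 1 i).card + (offsets G v n 0 (i + 1)).card ≤ k := by
  obtain ⟨M, hM, hmax⟩ := h.exists_max_offset i
  rw [← h.card_offsets_union hne hn hnk]
  exact (Finset.card_le_card (h.offsets_subset_evensOutsideGap hne hn hM hmax)).trans
    (h.card_evensOutsideGap_le hne hn hM)

theorem mem_offsets_of_mem_evensOutsideGap (h : IsCycleParam G v n) (hne : NoLongEvenCycle G k)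
    (hn : n % 2 = 1) (hnk : 2 * k < n)
    (htight : k ≤ (offsets G v n 1 i).card + (offsets G v n 0 (i + 1)).card)
    (hM : M ∈ offsets G v n 1 i) (hmax : ∀ x ∈ offsets G v n 1 i, x ≤ M)
    (hz : z ∈ evensOutsideGap n k M) : z - 1 ∈ offsets G v n 1 i ∨ z ∈ offsets G v n 0 (i + 1) := by
  have hcard := h.card_evensOutsideGap_le hne hn hM
  rw [← Finset.eq_of_subset_of_card_le (h.offsets_subset_evensOutsideGap hne hn hM hmax)
    (by rw [h.card_offsets_union hne hn hnk]; omega), Finset.mem_union, Finset.mem_image] at hz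
  refine hz.imp_left ?_
  rintro ⟨x, hx, rfl⟩
  simpa using hx

theorem degree_le_card_offsets [Fintype V] (h : IsCycleParam G v n) (hv : Set.range v = Set.univ)
    (i : ℤ) : G.degree (v i) ≤ (offsets G v n 1 i).card + (offsets G v n 0 i).card := by
  have hdeg := (h.shift i).degree_lt_of_closed (P := {v i}) (q := v i) (by simp) fun w _ ↦ by
    obtain ⟨j, rfl⟩ : w ∈ Set.range v := hv ▸ Set.mem_univ w
    simp only [Finset.mem_singleton, add_zero]
    refine or_iff_not_imp_left.mpr fun hj ↦ ⟨⟨j - i, by simp⟩, hj⟩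
  rw [Finset.card_singleton, ← Finset.card_filter_add_card_filter_not (· % 2 = 1)] at hdeg
  simp only [Int.emod_two_ne_one] at hdeg
  exact Nat.le_of_lt_succ hdeg

theorem offsetsTight [Fintype V] (h : IsCycleParam G v n) (hne : NoLongEvenCycle G k)
    (hn : n % 2 = 1) (hnk : 2 * k < n) (hv : Set.range v = Set.univ) (hδ : ∀ u, k ≤ G.degree u) :
    OffsetsTight G v n k := by
  intro i j
  have hle := h.card_offsets_add_le hne hn hnk
  have hge (i : ℤ) := (hδ (v i)).trans (h.degree_le_card_offsets hv i)
  have hanti : Antitone fun i ↦ (offsets G v n 0 i).card :=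
    antitone_int_of_succ_le fun i ↦ by linarith [hle i, hge i]
  have hconst := eq_of_antitone_of_periodic hanti (c := (n : ℤ)) (by omega)
    fun i ↦ by simp only [h.offsets_periodic 0 i]
  linarith [hle i, hge i, hconst i j, hconst (i + 1) j]

theorem exists_one_lt_offset (h : IsCycleParam G v n) (hk : 3 ≤ k) (hn : n % 2 = 1)
    (htight : OffsetsTight G v n k) (i : ℤ) : ∃ x ∈ offsets G v n 1 i, 1 < x := by
  by_contra! hle
  have odd_card : (offsets G v n 1 i).card ≤ 1 :=
    (Finset.card_le_card fun x hx ↦ Finset.mem_singleton.mpr <|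
      le_antisymm (hle x hx) (mem_offsets.mp hx).1.1).trans_eq (Finset.card_singleton 1)
  have even_card : (offsets G v n 0 i).card ≤ 1 := by
    refine (Finset.card_le_card fun y hy ↦ Finset.mem_singleton.mpr ?_).trans_eq
      (Finset.card_singleton (n - 1 : ℤ))
    have hcard : (offsets G v n 1 (i + y)).card ≤ 1 := by
      linarith [htight i i, htight (i + y) i]
    have := Finset.card_le_one.mp hcard _ (h.sub_mem_offsets hn hy) _ (h.one_mem_offsets _)
    omega
  have := htight i i
  omega

theorem adj_add_three_of_lt (h : IsCycleParam G v n) (hne : NoLongEvenCycle G k) (hk : 3 ≤ k)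
    (hn : n % 2 = 1) (hnk : 2 * k + 1 < n) (htight : OffsetsTight G v n k) (i : ℤ) :
    G.Adj (v i) (v (i + 3)) := by
  obtain ⟨M, hM, hmax⟩ := h.exists_max_offset i
  obtain ⟨x, hx, hx_gt⟩ := h.exists_one_lt_offset hk hn htight i
  have four_mem : 4 ∈ evensOutsideGap n k M := by
    have := hmax x hx
    rw [mem_offsets] at hx
    rw [evensOutsideGap, Finset.mem_filter, Finset.mem_Ioo]
    omega
  rcases h.mem_offsets_of_mem_evensOutsideGap hne hn (by omega) (htight i (i + 1)).ge hM hmax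
    four_mem with hthree | hfour
  · exact (mem_offsets.mp hthree).2.1
  · have := h.offsets_gap hne hn (h.one_mem_offsets i) hfour (by norm_num)
    omega

theorem adj_iff_not_crossing (h : IsCycleParam G v (2 * k + 1)) (hne : NoLongEvenCycle G k)
    (htight : OffsetsTight G v (2 * k + 1) k) (hab : a < b) (hba : b < a + 2 * k)
    (hodd : (b - a) % 2 = 1) : G.Adj (v a) (v b) ↔ ¬ G.Adj (v (a + 1)) (v (b + 2)) := by
  have hn : (2 * k + 1) % 2 = 1 := by omega
  have mem_odd : b - a ∈ offsets G v (2 * k + 1) 1 a ↔ G.Adj (v a) (v b) := by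
    rw [mem_offsets, add_sub_cancel]
    exact ⟨fun hx ↦ hx.2.1, fun hx ↦ ⟨by omega, hx, hodd⟩⟩
  have mem_even : b - a + 1 ∈ offsets G v (2 * k + 1) 0 (a + 1) ↔
      G.Adj (v (a + 1)) (v (b + 2)) := by
    rw [mem_offsets, show a + 1 + (b - a + 1) = b + 2 by ring]
    exact ⟨fun hy ↦ hy.2.1, fun hy ↦ ⟨by omega, hy, by omega⟩⟩
  rw [← mem_odd, ← mem_even]
  refine ⟨fun hx hy ↦ ?_, fun hy ↦ ?_⟩
  · have := h.offsets_gap hne hn hx hy (by omega)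
    omega
  · obtain ⟨M, hM, hmax⟩ := h.exists_max_offset a
    have hz : b - a + 1 ∈ evensOutsideGap (2 * k + 1) k M := by
      rw [evensOutsideGap, Finset.mem_filter, Finset.mem_Ioo]
      omega
    simpa using (h.mem_offsets_of_mem_evensOutsideGap hne hn (by omega) (htight a (a + 1)).ge
      hM hmax hz).resolve_right hy

theorem adj_rotate_three_iff (h : IsCycleParam G v (2 * k + 1)) (hne : NoLongEvenCycle G k)
    (htight : OffsetsTight G v (2 * k + 1) k) (hab : a < b) (hba : b < a + 2 * k)
    (hodd : (b - a) % 2 = 1) : G.Adj (v (a + 3)) (v (b + 3)) ↔ G.Adj (v a) (v b) := by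
  -- Read across the base point, `v (a + 1) v (b + 2)` is again a chord of odd length.
  have hsecond := h.adj_iff_not_crossing hne htight (a := b + 2) (b := a + 1 + (2 * k + 1 : ℕ))
    (by omega) (by omega) (by omega)
  rw [h.add_period, add_right_comm _ _ (2 : ℤ), h.add_period, G.adj_comm] at hsecond
  rw [h.adj_iff_not_crossing hne htight hab hba hodd, hsecond, not_not, G.adj_comm, add_assoc a,
    add_assoc b]
  norm_num

theorem adj_of_adj_add_two_add_four (h : IsCycleParam G v (2 * k + 1)) (hne : NoLongEvenCycle G k)
    (htight : OffsetsTight G v (2 * k + 1) k) (hab : a < b) (hba : b + 2 < a + 2 * k)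
    (hodd : (b - a) % 2 = 1) (hadj : G.Adj (v (a + 2)) (v (b + 4))) : G.Adj (v a) (v b) := by
  rw [h.adj_iff_not_crossing hne htight hab (by omega) hodd]
  intro hcross
  have := h.lt_of_crossing_chords hne (by omega) (by omega) (by omega) (by omega) hcross
    (by rwa [add_assoc] : G.Adj (v (a + 1 + 1)) (v (b + 4)))
  omega

theorem adj_sub_add_three_of_adj (h : IsCycleParam G v (2 * k + 1)) (hne : NoLongEvenCycle G k)
    (htight : OffsetsTight G v (2 * k + 1) k) (t : ℕ) (ht : t + 2 ≤ k)
    (hadj : G.Adj (v a) (v (a + 2 * t + 3))) : G.Adj (v (a - 2 * t)) (v (a - 2 * t + 3)) := by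
  induction t generalizing a with
  | zero => simpa using hadj
  | succ t ih =>
    have hshort : G.Adj (v (a - 2)) (v (a - 2 + 2 * t + 3)) :=
      h.adj_of_adj_add_two_add_four hne htight (by omega) (by omega) (by omega) (by
        convert hadj using 2 <;> push_cast <;> ring)
    convert ih (by omega) hshort using 2 <;> push_cast <;> ring

theorem adj_add_three_of_eq (h : IsCycleParam G v (2 * k + 1)) (hne : NoLongEvenCycle G k)
    (hk : 3 ≤ k) (htight : OffsetsTight G v (2 * k + 1) k) (i : ℤ) : G.Adj (v i) (v (i + 3)) := by
  have rotate (j : ℤ) : G.Adj (v (j + 3)) (v (j + 3 + 3)) ↔ G.Adj (v j) (v (j + 3)) :=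
    h.adj_rotate_three_iff hne htight (by omega) (by omega) (by omega)
  by_contra hnot
  have hcross : G.Adj (v (i + 1)) (v (i + 3 + 2)) := by
    rwa [h.adj_iff_not_crossing hne htight (by omega) (by omega) (by omega), not_not] at hnot
  have hlong : G.Adj (v (i + 5)) (v (i + 5 + 2 * (k - 3 : ℕ) + 3)) := by
    rw [← h.add_period (i + 1), G.adj_comm] at hcross
    convert hcross using 2 <;> push_cast [hk] <;> ring
  have hthree := h.adj_sub_add_three_of_adj hne htight (k - 3) (by omega) hlong
  have start_eq :
      i + 5 - 2 * (k - 3 : ℕ) = i - (2 * k + 1 : ℕ) + 3 + 3 + 3 + 3 := by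
    push_cast [hk]
    ring
  rw [start_eq, rotate, rotate, rotate, rotate, ← h.add_period (i - _), sub_add_cancel,
    ← h.add_period (i - _ + 3), add_right_comm, sub_add_cancel] at hthree
  exact hnot hthree

theorem adj_add_three (h : IsCycleParam G v n) (hne : NoLongEvenCycle G k) (hk : 3 ≤ k)
    (hn : n % 2 = 1) (hnk : 2 * k < n) (htight : OffsetsTight G v n k) (i : ℤ) :
    G.Adj (v i) (v (i + 3)) := by
  rcases (Nat.succ_le_of_lt hnk).eq_or_lt with rfl | hlt
  · exact h.adj_add_three_of_eq hne hk htight i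
  · exact h.adj_add_three_of_lt hne hk hn hlt htight i

theorem range_ne_univ [Fintype V] (h : IsCycleParam G v n) (hne : NoLongEvenCycle G k) (hk : 3 ≤ k)
    (hn : n % 2 = 1) (hnk : 2 * k < n) (hδ : ∀ u, k ≤ G.degree u) : Set.range v ≠ Set.univ := by
  intro hv
  obtain ⟨t, rfl⟩ : ∃ t, k = t + 1 := ⟨k - 1, by omega⟩
  have hadj := h.adj_add_three hne hk hn hnk (h.offsetsTight hne hn hnk hv hδ)
  have hcyc : CycleOn G (arc v 0 (2 * t + 1)) :=
    ⟨_, _, h.pathOn_zigzag hadj t (by omega), (h.adj (2 * t)).symm⟩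
  have hcard := h.card_arc (a := 0) (b := 2 * t + 1) (by omega)
  have := hne _ hcyc (by rw [Nat.even_iff]; omega)
  omega

end IsCycleParam

end OddHamiltonianCycle

section LongestCycleSpans

variable {V : Type*} [Fintype V] {G : SimpleGraph V} {k : ℕ} {C : Finset V}

theorem exists_longest_cycleOn (hk : 0 < k) (hδ : ∀ u, k ≤ G.degree u) [Nonempty V] :
    ∃ C, CycleOn G C ∧ ∀ S, CycleOn G S → S.card ≤ C.card := by
  let u := Classical.arbitrary V
  obtain ⟨w, hw⟩ := (G.degree_pos_iff_exists_adj u).mp (hk.trans_le (hδ u))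
  obtain ⟨C, hC, hmax⟩ := Finset.exists_max_image (Finset.univ.filter (CycleOn G)) Finset.card
    ⟨{u, w}, by simpa using CycleOn.pair hw⟩
  exact ⟨C, by simpa using hC, fun S hS ↦ hmax S (by simpa using hS)⟩

theorem CycleOn.eq_univ_of_longest (hC : CycleOn G C) (hmax : ∀ S, CycleOn G S → S.card ≤ C.card)
    (h2 : TwoConnected G) (hδ : ∀ u, k ≤ G.degree u) (hne : NoLongEvenCycle G k) :
    C = Finset.univ := by
  by_contra hC_univ
  obtain ⟨x, hx, P, q, hear, hq, hP⟩ := h2.exists_isEar hδ hC.two_le_card hC_univ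
  obtain ⟨v, hv, hrange⟩ := hC.exists_isCycleParam
  obtain ⟨i, rfl⟩ : x ∈ Set.range v := by simpa [hrange] using hx
  have hrange' : Set.range (fun j ↦ v (i + j)) = C := by
    rw [← hrange]
    exact (Equiv.addLeft i).surjective.range_comp v
  have hadm (S : Finset V) (hS : CycleOn G S) : AdmissibleLength C.card k S.card :=
    ⟨by exact_mod_cast hmax S hS, fun heven ↦ by
      exact_mod_cast hne S hS (by exact_mod_cast heven)⟩
  refine (hv.shift i).not_isEar hδ hadm (P := P) (q := q) ?_ ?_ ?_
  · simpa only [hrange', Finset.mem_coe] using hq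
  · simpa only [hrange', Finset.mem_coe, add_zero] using hP
  · simpa only [hrange', add_zero] using hear

theorem TwoConnected.not_noLongEvenCycle (h2 : TwoConnected G) (hk : 3 ≤ k)
    (hδ : ∀ u, k ≤ G.degree u) (hn : 2 * k < Fintype.card V) : ¬ NoLongEvenCycle G k := by
  intro hne
  have : Nonempty V := Fintype.card_pos_iff.mp (by omega)
  obtain ⟨C, hC, hmax⟩ := exists_longest_cycleOn (by omega) hδ
  obtain rfl := hC.eq_univ_of_longest hmax h2 hδ hne
  obtain ⟨v, hv, hrange⟩ := hC.exists_isCycleParam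
  have hlong := hne _ hC
  rw [Nat.even_iff] at hlong
  rw [Finset.card_univ] at hv hlong
  exact hv.range_ne_univ hne hk (by omega) hn hδ (by simpa using hrange)

end LongestCycleSpans

/-- Voss–Zuluaga (even case): a 2-connected graph with `δ(G) ≥ k ≥ 3` on at
least `2k+1` vertices contains an even cycle of length at least `2k`. -/
theorem voss_zuluaga_even {V : Type*} [Fintype V] (G : SimpleGraph V)
    (k : ℕ) (hk : 3 ≤ k) (h2 : TwoConnected G)
    (hδ : k ≤ G.minDegree) (hn : 2 * k + 1 ≤ Fintype.card V) :
    ∃ (v : V) (c : G.Walk v v), c.IsCycle ∧ Even c.length ∧ 2 * k ≤ c.length := by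
  have hdeg (u : V) : k ≤ G.degree u := hδ.trans (G.minDegree_le_degree u)
  obtain ⟨S, hS, heven, hlong⟩ : ∃ S, CycleOn G S ∧ Even S.card ∧ 2 * k ≤ S.card := by
    simpa [NoLongEvenCycle] using h2.not_noLongEvenCycle hk hdeg hn
  obtain ⟨v, c, hc, hlen⟩ := hS.exists_isCycle (by omega)
  exact ⟨v, c, hc, hlen ▸ heven, hlen ▸ hlong⟩
end

section
/- Every 2-connected non-bipartite graph $G$ with minimum degree $\delta(G) \geq k$ for some integer $k \geq 3$ and with at least $2k+1$ vertices contains an odd cycle of length at least $2k-1$. -/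
open SimpleGraph

attribute [local instance] Classical.propDecidable

/-!
Let `C` be a longest odd cycle, of length `c`, and suppose that `c + 2` is at most both `2 * δ(G)`
and the number of vertices; as `c` is odd, then even `c + 3 ≤ 2 * δ(G)`. If the vertices off `C` are
independent, each of them sees two consecutive vertices of `C` in at least two places, so two of
them can be inserted into `C`, giving an odd cycle of length `c + 2`. Otherwise some component `H`
of `G - C` contains an edge, and it provides long detours for `C`: induction on `|H|`, applied to
the components of what is left of `H` off a longest path between two attached vertices, yields one
of the configurations of `HasLongDetour`. Replacing an arc of `C` by a detour of the right parity
gives another odd cycle, so the maximality of `C` forces wide gaps between the places where the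
ends of the detour are attached, more than fit on `c` vertices.
-/

namespace VossZuluaga

/-! ### Counting with gaps in cyclic groups -/

section CyclicCounting

variable {A : Type*} [AddCommGroup A] {d : A} {n : ℕ}

theorem exists_nearest [Finite A] (hd : AddSubmonoid.multiples d = ⊤) {X Y : Finset A}
    (hX : X.Nonempty) (hY : Y.Nonempty) :
    ∃ x ∈ X, ∃ a : ℕ, 0 < a ∧ x + a • d ∈ Y ∧
      ∀ m : ℕ, 0 < m → m < a → x + m • d ∉ X ∧ x + m • d ∉ Y := by
  have hex : ∃ a : ℕ, 0 < a ∧ ∃ x ∈ X, x + a • d ∈ Y := by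
    obtain ⟨x, hx⟩ := hX
    obtain ⟨y, hy⟩ := hY
    obtain ⟨m, hm⟩ : y - x ∈ AddSubmonoid.multiples d := hd ▸ AddSubmonoid.mem_top _
    refine ⟨m + addOrderOf d, Nat.add_pos_right m (addOrderOf_pos d), x, hx, ?_⟩
    replace hm : m • d = y - x := hm
    rwa [add_nsmul, addOrderOf_nsmul_eq_zero, add_zero, hm, add_sub_cancel]
  obtain ⟨ha, x, hx, hxa⟩ := Nat.find_spec hex
  refine ⟨x, hx, Nat.find hex, ha, hxa, fun m hm hma => ⟨fun hmX => ?_, fun hmY => ?_⟩⟩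
  · refine Nat.find_min hex (m := Nat.find hex - m) (by omega) ⟨by omega, x + m • d, hmX, ?_⟩
    rwa [add_assoc, ← add_nsmul, Nat.add_sub_cancel' hma.le]
  · exact Nat.find_min hex hma ⟨hm, x, hx, hmY⟩

variable [Fintype A]

theorem card_add_card_mul_le {U E : Finset A} (hEU : E ⊆ U)
    (hgap : ∀ e ∈ E, ∀ m ∈ Finset.Icc 1 n, e + m • d ∉ U) :
    U.card + E.card * n ≤ Fintype.card A := by
  have hinj : Set.InjOn (fun p : A × ℕ => p.1 + p.2 • d)
      (E ×ˢ Finset.Icc 1 n : Finset (A × ℕ)) := by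
    have key : ∀ e ∈ E, ∀ e' ∈ E, ∀ m m' : ℕ, 1 ≤ m → m' ≤ n → m < m' →
        e + m • d ≠ e' + m' • d := by
      intro e he e' he' m m' hm hm' hlt heq
      refine hgap e' he' (m' - m) (Finset.mem_Icc.2 (by omega)) ?_
      rw [← Nat.sub_add_cancel hlt.le, add_nsmul, ← add_assoc] at heq
      exact add_right_cancel heq ▸ hEU he
    rintro ⟨e, m⟩ hp ⟨e', m'⟩ hp' heq
    simp only [Finset.coe_product, Finset.coe_Icc, Set.mem_prod, Finset.mem_coe, Set.mem_Icc]
      at hp hp' heq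
    rcases lt_trichotomy m m' with h | rfl | h
    · exact absurd heq (key e hp.1 e' hp'.1 m m' hp.2.1 hp'.2.2 h)
    · rw [add_right_cancel heq]
    · exact absurd heq.symm (key e' hp'.1 e hp.1 m' m hp'.2.1 hp.2.2 h)
  have hdisj : Disjoint U ((E ×ˢ Finset.Icc 1 n).image fun p : A × ℕ => p.1 + p.2 • d) := by
    rw [Finset.disjoint_right]
    rintro _ hx
    obtain ⟨⟨e, m⟩, hp, rfl⟩ := Finset.mem_image.1 hx
    exact hgap e (Finset.mem_product.1 hp).1 m (Finset.mem_product.1 hp).2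
  calc U.card + E.card * n
      = (U ∪ (E ×ˢ Finset.Icc 1 n).image fun p : A × ℕ => p.1 + p.2 • d).card := by
        rw [Finset.card_union_of_disjoint hdisj, Finset.card_image_of_injOn hinj]
        simp
    _ ≤ Fintype.card A := Finset.card_le_univ _

theorem card_add_card_add_le_of_forall_add_nsmul_ne (hd : AddSubmonoid.multiples d = ⊤)
    {X Y : Finset A} (hX : X.Nonempty) (hY : Y.Nonempty)
    (hXY : ∀ x ∈ X, ∀ y ∈ Y, ∀ m ≤ n, x + m • d ≠ y) :
    X.card + Y.card + n ≤ Fintype.card A := by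
  obtain ⟨x, hx, a, -, hxa, hfree⟩ := exists_nearest hd hX hY
  have hna : n < a := lt_of_not_ge fun h => hXY x hx _ hxa a h rfl
  have hdisj : Disjoint X Y :=
    Finset.disjoint_left.2 fun z hzX hzY => hXY z hzX z hzY 0 n.zero_le (by simp)
  have hcount := card_add_card_mul_le (U := X ∪ Y) (E := {x}) (d := d) (n := n)
    (by simp [hx]) fun e he m hm => by
      obtain rfl := Finset.mem_singleton.1 he
      have := Finset.mem_Icc.1 hm
      simpa using hfree m (by omega) (by omega)
  rwa [Finset.card_union_of_disjoint hdisj, Finset.card_singleton, one_mul] at hcount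

section CrossGap

variable {I J : Finset A}
  (hgap : ∀ i ∈ I, ∀ j ∈ J, ∀ m ∈ Finset.Icc 1 n, i + m • d ≠ j ∧ j + m • d ≠ i)

include hgap

theorem card_add_card_add_two_mul_le_of_disjoint (hd : AddSubmonoid.multiples d = ⊤)
    (hI : I.Nonempty) (hJ : J.Nonempty) (hIJ : Disjoint I J) :
    I.card + J.card + 2 * n ≤ Fintype.card A := by
  obtain ⟨x, hx, a, ha, hxa, hfree⟩ := exists_nearest hd hI hJ
  obtain ⟨y, hy, b, hb, hyb, hfree'⟩ := exists_nearest hd hJ hI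
  have hna : n < a := lt_of_not_ge fun h => (hgap x hx _ hxa a (Finset.mem_Icc.2 ⟨ha, h⟩)).1 rfl
  have hnb : n < b := lt_of_not_ge fun h => (hgap _ hyb y hy b (Finset.mem_Icc.2 ⟨hb, h⟩)).2 rfl
  have hcount := card_add_card_mul_le (U := I ∪ J) (E := {x, y}) (d := d) (n := n)
    (by simp [Finset.insert_subset_iff, hx, hy]) fun e he m hm => by
      have := Finset.mem_Icc.1 hm
      rcases Finset.mem_insert.1 he with rfl | he
      · simpa using hfree m (by omega) (by omega)
      · obtain rfl := Finset.mem_singleton.1 he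
        simpa [and_comm] using hfree' m (by omega) (by omega)
  rwa [Finset.card_union_of_disjoint hIJ,
    Finset.card_pair (Finset.disjoint_iff_ne.1 hIJ x hx y hy)] at hcount

theorem card_union_add_card_inter_succ_mul_le (hd : AddSubmonoid.multiples d = ⊤)
    (hIJ : I ≠ J) (hinter : (I ∩ J).Nonempty) :
    (I ∪ J).card + ((I ∩ J).card + 1) * n ≤ Fintype.card A := by
  have hsymm : ((I ∪ J) \ (I ∩ J)).Nonempty := by
    rw [Finset.sdiff_nonempty]
    exact fun h => hIJ <| (Finset.subset_union_left.trans h).trans Finset.inter_subset_right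
      |>.antisymm <| (Finset.subset_union_right.trans h).trans Finset.inter_subset_left
  obtain ⟨x, hx, a, ha, hxa, hfree⟩ := exists_nearest hd hsymm hinter
  obtain ⟨hxU, hxD⟩ := Finset.mem_sdiff.1 hx
  have hna : n < a := by
    refine lt_of_not_ge fun h => ?_
    have hm : a ∈ Finset.Icc 1 n := Finset.mem_Icc.2 ⟨ha, h⟩
    obtain ⟨hI, hJ⟩ := Finset.mem_inter.1 hxa
    rcases Finset.mem_union.1 hxU with hx | hx
    exacts [(hgap x hx _ hJ a hm).1 rfl, (hgap _ hI x hx a hm).2 rfl]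
  have hcount := card_add_card_mul_le (U := I ∪ J) (E := insert x (I ∩ J)) (d := d) (n := n)
    (Finset.insert_subset hxU (Finset.inter_subset_left.trans Finset.subset_union_left))
    fun e he m hm hmU => by
      rcases Finset.mem_insert.1 he with rfl | he
      · have hma := Finset.mem_Icc.1 hm
        obtain ⟨h₁, h₂⟩ := hfree m (by omega) (by omega)
        exact h₁ (Finset.mem_sdiff.2 ⟨hmU, h₂⟩)
      · obtain ⟨hI, hJ⟩ := Finset.mem_inter.1 he
        rcases Finset.mem_union.1 hmU with h | h
        exacts [(hgap _ h e hJ m hm).2 rfl, (hgap e hI _ h m hm).1 rfl]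
  rwa [Finset.card_insert_of_notMem hxD] at hcount

theorem card_add_card_add_two_mul_le_of_ne (hd : AddSubmonoid.multiples d = ⊤) (hn : 1 ≤ n)
    (hI : I.Nonempty) (hJ : J.Nonempty) (hIJ : I ≠ J) :
    I.card + J.card + 2 * n ≤ Fintype.card A + 1 := by
  by_cases hinter : (I ∩ J).Nonempty
  · have hcount := card_union_add_card_inter_succ_mul_le hgap hd hIJ hinter
    have := Finset.card_union_add_card_inter I J
    have := hinter.card_pos
    nlinarith
  · rw [Finset.not_nonempty_iff_eq_empty, ← Finset.disjoint_iff_inter_eq_empty] at hinter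
    exact (card_add_card_add_two_mul_le_of_disjoint hgap hd hI hJ hinter).trans (Nat.le_succ _)

theorem card_add_card_add_two_mul_le (hd : AddSubmonoid.multiples d = ⊤) (hn : 1 ≤ n)
    (hne : ∃ i ∈ I, ∃ j ∈ J, i ≠ j) :
    I.card + J.card + 2 * n ≤ Fintype.card A + 2 := by
  obtain ⟨i, hi, j, hj, hij⟩ := hne
  rcases eq_or_ne I J with rfl | hIJ
  · have hcount := card_add_card_mul_le (U := I) (E := I) (d := d) (n := n) subset_rfl
      fun e he m hm hmI => (hgap e he _ hmI m hm).1 rfl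
    have := Finset.one_lt_card.2 ⟨i, hi, j, hj, hij⟩
    nlinarith
  · have := card_add_card_add_two_mul_le_of_ne hgap hd hn ⟨i, hi⟩ ⟨j, hj⟩ hIJ
    omega

theorem card_add_card_add_two_mul_le_of_odd (hd : AddSubmonoid.multiples d = ⊤) (hn : 1 ≤ n)
    (hA : Odd (Fintype.card A)) (hne : ∃ i ∈ I, ∃ j ∈ J, i ≠ j) :
    I.card + J.card + 2 * n ≤ Fintype.card A + 1 := by
  have hle := card_add_card_add_two_mul_le hgap hd hn hne
  obtain ⟨i, hi, j, hj, -⟩ := hne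
  rcases eq_or_ne I J with rfl | hIJ
  · obtain ⟨r, hr⟩ := hA
    omega
  · exact card_add_card_add_two_mul_le_of_ne hgap hd hn ⟨i, hi⟩ ⟨j, hj⟩ hIJ

end CrossGap

end CyclicCounting

section ZModCounting

theorem val_sub_eq_of_add_natCast_eq {c m : ℕ} {i j : ZMod c} (hm : m < c) (h : i + m = j) :
    (j - i).val = m := by
  rw [← h, add_sub_cancel_left, ZMod.val_natCast_of_lt hm]

theorem ne_of_add_natCast_eq {c m : ℕ} {i j : ZMod c} (hm : ¬c ∣ m) (h : i + m = j) : i ≠ j := by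
  rintro rfl
  exact hm ((ZMod.natCast_eq_zero_iff m c).1 (add_eq_left.1 h))

variable {c n : ℕ} [NeZero c]

theorem multiples_eq_top_of_isUnit {d : ZMod c} (hd : IsUnit d) :
    AddSubmonoid.multiples d = ⊤ := by
  refine eq_top_iff.2 fun a _ => ⟨(a * ↑hd.unit⁻¹ : ZMod c).val, ?_⟩
  simp [mul_assoc]

theorem val_sub_add_val_sub {i j : ZMod c} (hij : i ≠ j) : (j - i).val + (i - j).val = c := by
  have : NeZero (j - i) := ⟨sub_ne_zero.2 hij.symm⟩
  rw [← neg_sub j i, ZMod.val_neg_of_ne_zero]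
  have := (ZMod.val_lt (j - i)).le
  omega

variable {I J : Finset (ZMod c)}

theorem card_add_card_add_two_mul_le_of_lt_val_sub
    (hn : 1 ≤ n) (hne : ∃ i ∈ I, ∃ j ∈ J, i ≠ j)
    (hgap : ∀ i ∈ I, ∀ j ∈ J, i ≠ j → n < (j - i).val ∧ n < (i - j).val) :
    I.card + J.card + 2 * n ≤ c + 2 := by
  have hnc : n < c := by
    obtain ⟨i, hi, j, hj, hij⟩ := hne
    exact (hgap i hi j hj hij).1.trans (ZMod.val_lt _)
  have hcount := card_add_card_add_two_mul_le (d := 1) (n := n) (I := I) (J := J)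
    (fun i hi j hj m hm => ?_) (multiples_eq_top_of_isUnit isUnit_one) hn hne
  · rwa [ZMod.card] at hcount
  obtain ⟨hm1, hmn⟩ := Finset.mem_Icc.1 hm
  have hcm : ¬c ∣ m := Nat.not_dvd_of_pos_of_lt hm1 (by omega)
  rw [nsmul_one]
  constructor <;> intro h
  · have := (hgap i hi j hj (ne_of_add_natCast_eq hcm h)).1
    rw [val_sub_eq_of_add_natCast_eq (by omega) h] at this
    omega
  · have := (hgap i hi j hj (ne_of_add_natCast_eq hcm h).symm).2
    rw [val_sub_eq_of_add_natCast_eq (by omega) h] at this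
    omega

section ParityGap

variable (hc : Odd c)
  (hgap : ∀ i ∈ I, ∀ j ∈ J, i ≠ j →
    ((j - i).val % 2 = (n + 1) % 2 → n < (j - i).val) ∧
    ((i - j).val % 2 = (n + 1) % 2 → n < (i - j).val))

include hc hgap

theorem lt_of_forall_parity_gap (hne : ∃ i ∈ I, ∃ j ∈ J, i ≠ j) : n < c := by
  obtain ⟨i, hi, j, hj, hij⟩ := hne
  have hsum := val_sub_add_val_sub hij
  have := hgap i hi j hj hij
  obtain ⟨r, hr⟩ := hc
  omega

theorem card_add_card_add_le_of_even (hn : Even n) (hn2 : 2 ≤ n)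
    (hne : ∃ i ∈ I, ∃ j ∈ J, i ≠ j) : I.card + J.card + n ≤ c + 1 := by
  have hnc := lt_of_forall_parity_gap hc hgap hne
  obtain ⟨i₀, hi₀, j₀, hj₀, -⟩ := hne
  have hunit : IsUnit ((2 : ℕ) : ZMod c) := (ZMod.isUnit_iff_coprime 2 c).2 hc.coprime_two_left
  have hcount := card_add_card_add_le_of_forall_add_nsmul_ne (n := n - 1)
    (X := I.map (Equiv.subRight ((n - 1 : ℕ) : ZMod c)).toEmbedding) (Y := J)
    (multiples_eq_top_of_isUnit hunit) (by simpa using ⟨i₀, hi₀⟩) ⟨j₀, hj₀⟩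
    fun x hx j hj m hm heq => ?_
  · rw [Finset.card_map, ZMod.card] at hcount
    omega
  obtain ⟨i, hi, rfl⟩ := Finset.mem_map.1 hx
  rw [Equiv.coe_toEmbedding, Equiv.subRight_apply, nsmul_eq_mul, ← Nat.cast_mul] at heq
  obtain ⟨g, rfl⟩ := hn
  rcases le_or_gt (g + g - 1) (m * 2) with hle | hlt
  · have h : i + (m * 2 - (g + g - 1) : ℕ) = j := by
      rw [Nat.cast_sub hle, ← heq]; ring
    have hgap := (hgap i hi j hj (ne_of_add_natCast_eq
      (Nat.not_dvd_of_pos_of_lt (by omega) (by omega)) h)).1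
    rw [val_sub_eq_of_add_natCast_eq (by omega) h] at hgap
    omega
  · have h : j + (g + g - 1 - m * 2 : ℕ) = i := by
      rw [Nat.cast_sub hlt.le, ← heq]; ring
    have hgap := (hgap i hi j hj (ne_of_add_natCast_eq
      (Nat.not_dvd_of_pos_of_lt (by omega) (by omega)) h).symm).2
    rw [val_sub_eq_of_add_natCast_eq (by omega) h] at hgap
    omega

theorem card_add_card_add_le_of_odd (hn : Odd n) (hn2 : 2 ≤ n)
    (hne : ∃ i ∈ I, ∃ j ∈ J, i ≠ j) : I.card + J.card + n ≤ c + 2 := by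
  have hnc := lt_of_forall_parity_gap hc hgap hne
  have hunit : IsUnit ((2 : ℕ) : ZMod c) := (ZMod.isUnit_iff_coprime 2 c).2 hc.coprime_two_left
  obtain ⟨h, rfl⟩ := hn
  have hcount := card_add_card_add_two_mul_le_of_odd (d := ((2 : ℕ) : ZMod c)) (n := h)
    (I := I) (J := J) (fun i hi j hj m hm => ?_) (multiples_eq_top_of_isUnit hunit) (by omega)
    (by rwa [ZMod.card]) hne
  · rw [ZMod.card] at hcount
    omega
  obtain ⟨hm1, hmh⟩ := Finset.mem_Icc.1 hm
  have hcm : ¬c ∣ m * 2 := Nat.not_dvd_of_pos_of_lt (by omega) (by omega)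
  rw [nsmul_eq_mul, ← Nat.cast_mul]
  constructor <;> intro heq
  · have hgap := (hgap i hi j hj (ne_of_add_natCast_eq hcm heq)).1
    rw [val_sub_eq_of_add_natCast_eq (by omega) heq] at hgap
    omega
  · have hgap := (hgap i hi j hj (ne_of_add_natCast_eq hcm heq).symm).2
    rw [val_sub_eq_of_add_natCast_eq (by omega) heq] at hgap
    omega

theorem card_add_card_add_two_mul_half_le (hn2 : 2 ≤ n) (hne : ∃ i ∈ I, ∃ j ∈ J, i ≠ j) :
    I.card + J.card + 2 * (n / 2) ≤ c + 1 := by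
  rcases Nat.even_or_odd n with heven | hodd
  · have := card_add_card_add_le_of_even hc hgap heven hn2 hne
    omega
  · have := card_add_card_add_le_of_odd hc hgap hodd hn2 hne
    obtain ⟨r, rfl⟩ := hodd
    omega

end ParityGap

end ZModCounting

theorem card_add_card_add_le_of_forall_lt_sub {I J : Finset ℕ} {q n : ℕ} (hn : 1 ≤ n)
    (hI : ∀ i ∈ I, i ≤ q) (hJ : ∀ j ∈ J, j ≤ q) (hne : ∃ i ∈ I, ∃ j ∈ J, i ≠ j)
    (hgap : ∀ i ∈ I, ∀ j ∈ J, (i < j → i + n < j) ∧ (j < i → j + n < i)) :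
    I.card + J.card + n ≤ q + 3 := by
  have hinj : Set.InjOn (Nat.cast : ℕ → ZMod (q + n + 1)) (Set.Iio (q + n + 1)) :=
    CharP.natCast_injOn_Iio _ _
  have hlt : ∀ {x m : ℕ}, x ≤ q → m ≤ n → x + m ∈ Set.Iio (q + n + 1) := fun hx hm => by
    rw [Set.mem_Iio]; omega
  obtain ⟨i, hi, j, hj, hij⟩ := hne
  have hcount := card_add_card_add_two_mul_le (A := ZMod (q + n + 1)) (d := 1) (n := n)
    (I := I.image Nat.cast) (J := J.image Nat.cast) ?_ (multiples_eq_top_of_isUnit isUnit_one) hn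
    ⟨i, Finset.mem_image_of_mem _ hi, j, Finset.mem_image_of_mem _ hj,
      fun h => hij (hinj (hlt (hI i hi) n.zero_le) (hlt (hJ j hj) n.zero_le) h)⟩
  · rw [Finset.card_image_of_injOn (hinj.mono fun i hi => hlt (hI i hi) n.zero_le),
      Finset.card_image_of_injOn (hinj.mono fun j hj => hlt (hJ j hj) n.zero_le),
      ZMod.card] at hcount
    omega
  simp only [Finset.forall_mem_image, Finset.mem_Icc, nsmul_one, ← Nat.cast_add]
  rintro i hi j hj m ⟨hm1, hmn⟩
  have := hgap i hi j hj
  constructor <;> intro h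
  · have := hinj (hlt (hI i hi) hmn) (hlt (hJ j hj) n.zero_le) h
    omega
  · have := hinj (hlt (hJ j hj) hmn) (hlt (hI i hi) n.zero_le) h
    omega

/-! ### Paths with prescribed support -/

variable {V : Type*} {G : SimpleGraph V}

section Paths

variable {A B H : Set V} {u v w x y : V} {m n : ℕ}

/-- Some `u`–`v` path of `G` has all its vertices in `A` and exactly `n` of them. Counting vertices
instead of edges makes concatenation along an edge additive. -/
def HasPathIn (G : SimpleGraph V) (A : Set V) (u v : V) (n : ℕ) : Prop :=
  ∃ p : G.Walk u v, p.IsPath ∧ (∀ x ∈ p.support, x ∈ A) ∧ p.length + 1 = n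

/-- Two vertices `x` and `y` (usually outside `H`) are joined by a path whose interior consists of
`n` vertices of `H`. -/
def HasLink (G : SimpleGraph V) (H : Set V) (x y : V) (n : ℕ) : Prop :=
  ∃ u v, HasPathIn G H u v n ∧ G.Adj x u ∧ G.Adj y v

namespace HasPathIn

theorem single (hu : u ∈ A) : HasPathIn G A u u 1 :=
  ⟨.nil, .nil, by simpa, rfl⟩

theorem symm (h : HasPathIn G A u v n) : HasPathIn G A v u n := by
  obtain ⟨p, hp, hpA, rfl⟩ := h
  exact ⟨p.reverse, hp.reverse, by simpa, by simp⟩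

theorem mono (h : HasPathIn G A u v n) (hAB : A ⊆ B) : HasPathIn G B u v n := by
  obtain ⟨p, hp, hpA, rfl⟩ := h
  exact ⟨p, hp, fun x hx => hAB (hpA x hx), rfl⟩

theorem append (h : HasPathIn G A u v m) (h' : HasPathIn G B x y n) (hvx : G.Adj v x)
    (hAB : Disjoint A B) : HasPathIn G (A ∪ B) u y (m + n) := by
  obtain ⟨p, hp, hpA, rfl⟩ := h
  obtain ⟨q, hq, hqB, rfl⟩ := h'
  refine ⟨p.append (.cons hvx q), ?_, fun z hz => ?_, by simp; omega⟩
  · rw [Walk.isPath_def, Walk.support_append, Walk.support_cons, List.tail_cons]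
    exact hp.support_nodup.append hq.support_nodup fun z hzp hzq =>
      Set.disjoint_left.1 hAB (hpA z hzp) (hqB z hzq)
  · rw [Walk.support_append, Walk.support_cons, List.tail_cons, List.mem_append] at hz
    exact hz.imp (hpA z) (hqB z)

theorem left_mem (h : HasPathIn G A u v n) : u ∈ A := by
  obtain ⟨p, -, hpA, -⟩ := h
  exact hpA u p.start_mem_support

theorem one_le (h : HasPathIn G A u v n) : 1 ≤ n := by
  obtain ⟨p, -, -, rfl⟩ := h
  omega

theorem two_le (h : HasPathIn G A u v n) (huv : u ≠ v) : 2 ≤ n := by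
  obtain ⟨p, -, -, rfl⟩ := h
  exact Nat.succ_le_succ (Nat.one_le_iff_ne_zero.2 fun h => huv (Walk.eq_of_length_eq_zero h))

theorem eq_one (h : HasPathIn G A u u n) : n = 1 := by
  obtain ⟨p, hp, -, rfl⟩ := h
  rw [Walk.length_eq_zero_iff.2 (Walk.isPath_iff_nil.1 hp)]

theorem ne (h : HasPathIn G A u v n) (hn : 2 ≤ n) : u ≠ v := by
  rintro rfl
  have := h.eq_one
  omega

theorem le_card [Fintype V] (h : HasPathIn G A u v n) : n ≤ Fintype.card V := by
  obtain ⟨p, hp, -, rfl⟩ := h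
  exact hp.length_lt

theorem exists_max_mod_two [Finite V] (h : HasPathIn G A u v n) : ∃ m, HasPathIn G A u v m ∧
    m % 2 = n % 2 ∧ ∀ l, HasPathIn G A u v l → l % 2 = n % 2 → l ≤ m := by
  have := Fintype.ofFinite V
  obtain ⟨hm, hpar⟩ := Nat.findGreatest_spec
    (P := fun l => HasPathIn G A u v l ∧ l % 2 = n % 2) h.le_card ⟨h, rfl⟩
  exact ⟨_, hm, hpar, fun l hl hlpar => Nat.le_findGreatest hl.le_card ⟨hl, hlpar⟩⟩

theorem dropLast (h : HasPathIn G A u v (n + 2)) :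
    ∃ w, HasPathIn G (A \ {v}) u w (n + 1) ∧ G.Adj w v := by
  obtain ⟨p, hp, hpA, hlen⟩ := h
  have hnil : ¬p.Nil := fun h => by
    have := Walk.length_eq_zero_iff.2 h
    omega
  have hnodup := hp.support_nodup
  rw [← Walk.support_dropLast_concat hnil, List.nodup_append] at hnodup
  refine ⟨p.penultimate, ⟨p.dropLast, hp.dropLast, fun z hz => ⟨hpA z ?_, ?_⟩, ?_⟩,
    Walk.adj_penultimate hnil⟩
  · rw [← Walk.support_dropLast_concat hnil]
    exact List.mem_append_left _ hz
  · exact hnodup.2.2 z hz v (by simp)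
  · rw [Walk.length_dropLast]
    omega

theorem exists_isCycle (h : HasPathIn G A u v n) (hvu : G.Adj v u) (hn : 3 ≤ n) :
    ∃ c : G.Walk v v, c.IsCycle ∧ c.length = n := by
  obtain ⟨p, hp, -, rfl⟩ := h
  refine ⟨.cons hvu p, (Walk.cons_isCycle_iff p hvu).2 ⟨hp, fun he => ?_⟩, by simp⟩
  have := hp.length_eq_one_of_mem_edges (Sym2.eq_swap ▸ he)
  omega

theorem image_Icc {z : ℕ → V} {a b : ℕ} (hab : a ≤ b)
    (hadj : ∀ i, a ≤ i → i < b → G.Adj (z i) (z (i + 1))) (hinj : Set.InjOn z (Set.Icc a b)) :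
    HasPathIn G (z '' Set.Icc a b) (z a) (z b) (b + 1 - a) := by
  induction b, hab using Nat.le_induction with
  | base => simpa using HasPathIn.single (G := G) (Set.mem_singleton (z a))
  | succ b hab ih =>
    have hpath := (ih (fun i hai hib => hadj i hai (by omega))
      (hinj.mono (Set.Icc_subset_Icc_right b.le_succ))).append
      (HasPathIn.single (Set.mem_singleton (z (b + 1)))) (hadj b hab (by omega)) <| by
        rw [Set.disjoint_singleton_right]
        rintro ⟨i, hi, hzi⟩
        have := hinj ⟨hi.1, hi.2.trans b.le_succ⟩ ⟨by omega, le_rfl⟩ hzi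
        have := hi.2
        omega
    convert hpath.mono ?_ using 1
    · omega
    · rintro _ (⟨i, hi, rfl⟩ | rfl)
      · exact Set.mem_image_of_mem z ⟨hi.1, hi.2.trans b.le_succ⟩
      · exact Set.mem_image_of_mem z ⟨by omega, le_rfl⟩

end HasPathIn

theorem HasLink.symm (h : HasLink G H x y n) : HasLink G H y x n := by
  obtain ⟨u, v, hp, hxu, hyv⟩ := h
  exact ⟨v, u, hp.symm, hyv, hxu⟩

end Paths

section Segments

variable {u v : V} {P : G.Walk u v} {a b a' b' : ℕ}

/-- The vertices of `P` in positions `a, …, b`. -/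
def seg (P : G.Walk u v) (a b : ℕ) : Set V :=
  P.getVert '' Set.Icc a b

theorem seg_subset_support : seg P a b ⊆ {x | x ∈ P.support} := by
  rintro _ ⟨i, -, rfl⟩
  exact P.getVert_mem_support i

theorem disjoint_seg (hP : P.IsPath) (h : b < a') (hb' : b' ≤ P.length) :
    Disjoint (seg P a b) (seg P a' b') := by
  rw [Set.disjoint_left]
  rintro _ ⟨i, hi, rfl⟩ ⟨j, hj, hij⟩
  have hjq : j ≤ P.length := hj.2.trans hb'
  have hiq : i ≤ P.length := by have := hi.2; have := hj.1; omega
  have := hP.getVert_injOn hjq hiq hij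
  have := hi.2
  have := hj.1
  omega

theorem hasPathIn_seg (hP : P.IsPath) (hab : a ≤ b) (hb : b ≤ P.length) :
    HasPathIn G (seg P a b) (P.getVert a) (P.getVert b) (b + 1 - a) :=
  .image_Icc hab (fun _ _ hib => P.adj_getVert_succ (by omega))
    (hP.getVert_injOn.mono fun _ hi => hi.2.trans hb)

end Segments

/-! ### Fragments and detours -/

section Rerouting

variable {u v : V} {P : G.Walk u v}

theorem hasPathIn_support (hP : P.IsPath) :
    HasPathIn G {x | x ∈ P.support} u v (P.length + 1) :=
  ⟨P, hP, fun _ hx => hx, rfl⟩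

theorem hasPathIn_union_of_hasLink {K : Set V} {i j n : ℕ} (hP : P.IsPath) (hij : i < j)
    (hj : j ≤ P.length) (hK : Disjoint K {x | x ∈ P.support})
    (h : HasLink G K (P.getVert i) (P.getVert j) n) :
    HasPathIn G (K ∪ {x | x ∈ P.support}) u v (i + 1 + n + (P.length + 1 - j)) := by
  obtain ⟨a, b, hab, hia, hjb⟩ := h
  have hstart := hasPathIn_seg hP i.zero_le (by omega)
  have hend := hasPathIn_seg hP hj le_rfl
  rw [Walk.getVert_zero] at hstart
  rw [Walk.getVert_length] at hend
  have hpath := (hstart.append hab hia (hK.symm.mono_left seg_subset_support)).append hend hjb.symm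
    (Set.disjoint_union_left.2 ⟨disjoint_seg hP hij le_rfl, hK.mono_right seg_subset_support⟩)
  refine hpath.mono (Set.union_subset (Set.union_subset ?_ Set.subset_union_left) ?_)
  all_goals exact seg_subset_support.trans Set.subset_union_right

theorem hasPathIn_of_chord {a : ℕ} (hP : P.IsPath) (ha : 1 ≤ a) (hap : a ≤ P.length)
    (hua : G.Adj u (P.getVert a)) :
    HasPathIn G {x | x ∈ P.support} u v (P.length + 2 - a) := by
  have hstart := hasPathIn_seg hP le_rfl P.length.zero_le
  have hend := hasPathIn_seg hP hap le_rfl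
  rw [Walk.getVert_zero] at hstart
  rw [Walk.getVert_length] at hend
  have hpath := hstart.append hend hua (disjoint_seg hP ha le_rfl)
  convert hpath.mono (Set.union_subset seg_subset_support seg_subset_support) using 1
  omega

theorem hasPathIn_of_crossing_chords {a b : ℕ} (hP : P.IsPath) (hb : 0 < b) (hba : b < a)
    (hap : a < P.length) (hua : G.Adj u (P.getVert a)) (hvb : G.Adj v (P.getVert b)) :
    HasPathIn G {x | x ∈ P.support} u v (a - b + 3) := by
  have hstart := hasPathIn_seg hP le_rfl P.length.zero_le
  have hmid := (hasPathIn_seg hP hba.le hap.le).symm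
  have hend := hasPathIn_seg hP le_rfl le_rfl
  rw [Walk.getVert_zero] at hstart
  rw [Walk.getVert_length] at hend
  have hpath := (hstart.append hmid hua (disjoint_seg hP hb hap.le)).append hend hvb.symm
    (Set.disjoint_union_left.2
      ⟨disjoint_seg hP (by omega) le_rfl, disjoint_seg hP hap le_rfl⟩)
  convert hpath.mono (Set.union_subset (Set.union_subset seg_subset_support seg_subset_support)
    seg_subset_support) using 1
  omega

end Rerouting

section Degrees

variable {S A B : Set V} {u v w x : V} {k : ℕ}

/-- The number of neighbours of `u` in `S`. -/
noncomputable def degIn (G : SimpleGraph V) (S : Set V) (u : V) : ℕ :=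
  (G.neighborSet u ∩ S).ncard

/-- The positions along the walk `P` of the neighbours of `x`. -/
noncomputable def nbrPos (P : G.Walk u v) (x : V) : Finset ℕ :=
  {i ∈ Finset.range (P.length + 1) | G.Adj x (P.getVert i)}

theorem mem_nbrPos {P : G.Walk u v} {i : ℕ} :
    i ∈ nbrPos P x ↔ i ≤ P.length ∧ G.Adj x (P.getVert i) := by
  rw [nbrPos, Finset.mem_filter, Finset.mem_range, Nat.lt_succ_iff]

theorem card_nbrPos {P : G.Walk u v} (hP : P.IsPath) :
    (nbrPos P x).card = degIn G {y | y ∈ P.support} x := by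
  have hinj : Set.InjOn P.getVert (nbrPos P x) :=
    hP.getVert_injOn.mono fun i hi => (mem_nbrPos.1 hi).1
  rw [degIn, ← Finset.card_image_of_injOn hinj, ← Set.ncard_coe_finset]
  congr 1
  ext y
  simp only [Finset.coe_image, Set.mem_image, Finset.mem_coe, mem_nbrPos, Set.mem_inter_iff,
    mem_neighborSet, Set.mem_ofPred_eq, Walk.mem_support_iff_exists_getVert]
  constructor
  · rintro ⟨i, ⟨hi, hxi⟩, rfl⟩
    exact ⟨hxi, i, rfl, hi⟩
  · rintro ⟨hxy, i, rfl, hi⟩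
    exact ⟨i, ⟨hi, hxy⟩, rfl⟩

theorem le_degIn_add_degIn [Finite V] (hk : k ≤ (G.neighborSet w).ncard)
    (hsub : G.neighborSet w ⊆ A ∪ B) : k ≤ degIn G A w + degIn G B w := by
  rw [degIn, degIn]
  refine hk.trans ((Set.ncard_le_ncard ?_).trans (Set.ncard_union_le _ _))
  rw [← Set.inter_union_distrib_left]
  exact Set.subset_inter subset_rfl hsub

end Degrees

section Fragments

variable {S H K T : Set V} {u v w x y : V} {k n : ℕ}

/-- `H` induces a connected subgraph and all its outer neighbours lie in `S`, so that `H` is a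
component of `G - S`. -/
structure IsFragment (G : SimpleGraph V) (S H : Set V) : Prop where
  disjoint : Disjoint S H
  connected : (G.induce H).Connected
  mem_or_mem : ∀ w ∈ H, ∀ y, G.Adj w y → y ∈ H ∨ y ∈ S

/-- The distinct vertices `u` and `v` have distinct neighbours in `S`, one each. -/
def IsAttachedPair (G : SimpleGraph V) (S : Set V) (u v : V) : Prop :=
  u ≠ v ∧ ∃ x ∈ S, ∃ y ∈ S, x ≠ y ∧ G.Adj u x ∧ G.Adj v y

theorem IsAttachedPair.symm (h : IsAttachedPair G S u v) : IsAttachedPair G S v u := by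
  obtain ⟨huv, x, hx, y, hy, hxy, hux, hvy⟩ := h
  exact ⟨huv.symm, y, hy, x, hx, hxy.symm, hvy, hux⟩

theorem IsAttachedPair.exists_hasLink (h : IsAttachedPair G S u v) (hp : HasPathIn G H u v n) :
    ∃ x ∈ S, ∃ y ∈ S, x ≠ y ∧ HasLink G H x y n := by
  obtain ⟨-, x, hx, y, hy, hxy, hux, hvy⟩ := h
  exact ⟨x, hx, y, hy, hxy, u, v, hp, hux.symm, hvy.symm⟩

theorem exists_isFragment (hw : w ∉ T) : ∃ K, w ∈ K ∧ IsFragment G T K := by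
  let K : Set V := {x | ∃ p : G.Walk w x, ∀ y ∈ p.support, y ∉ T}
  have hwK : w ∈ K := ⟨.nil, by simpa⟩
  refine ⟨K, hwK, ⟨?_, ?_, ?_⟩⟩
  · rw [Set.disjoint_right]
    rintro x ⟨p, hp⟩
    exact hp x p.end_mem_support
  · refine induce_connected_of_patches w hwK fun {x} ⟨p, hp⟩ =>
      ⟨{y | y ∈ p.support}, fun y hy => ⟨p.takeUntil y hy, fun z hz => hp z ?_⟩,
        p.start_mem_support, p.end_mem_support, p.connected_induce_support.preconnected _ _⟩
    exact p.support_takeUntil_subset_support hy hz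
  · rintro x ⟨p, hp⟩ y hxy
    by_cases hy : y ∈ T
    · exact .inr hy
    · refine .inl ⟨p.concat hxy, fun z hz => ?_⟩
      rw [Walk.support_concat, List.mem_append, List.mem_singleton] at hz
      rcases hz with hz | rfl
      exacts [hp z hz, hy]

theorem exists_hasPathIn (hH : (G.induce H).Connected) (hu : u ∈ H) (hv : v ∈ H) :
    ∃ n, HasPathIn G H u v n := by
  obtain ⟨p, hp⟩ := (hH.preconnected ⟨u, hu⟩ ⟨v, hv⟩).exists_isPath
  refine ⟨_, p.map (Embedding.induce H).toHom,
    hp.map (Embedding.induce (G := G) H).injective, fun x hx => ?_, rfl⟩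
  obtain ⟨y, -, rfl⟩ := List.mem_map.1 (Walk.support_map _ p ▸ hx)
  exact y.2

section TwoConnected

variable [Fintype V]

theorem exists_adj_of_twoConnected {b : V} (h2 : TwoConnected G) (hu : u ∈ H) (hb : b ∉ H)
    (hv : v ∉ H) (hvb : v ≠ b) : ∃ x ∈ H, ∃ z ∉ H, z ≠ b ∧ G.Adj x z := by
  obtain ⟨p⟩ := (h2.2 b).preconnected ⟨u, ne_of_mem_of_not_mem hu hb⟩ ⟨v, hvb⟩
  obtain ⟨d, -, hfst, hsnd⟩ := p.exists_boundary_dart (Subtype.val ⁻¹' H) hu hv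
  exact ⟨d.fst, hfst, d.snd, hsnd, d.snd.2, d.adj⟩

theorem exists_attached_ne {a : V} (h2 : TwoConnected G) (hSH : IsFragment G S H)
    (hS : S.Nonempty) (hH : H.Nontrivial) (ha : a ∈ H) :
    ∃ u ∈ H, u ≠ a ∧ ∃ x ∈ S, G.Adj u x := by
  obtain ⟨s, hs⟩ := hS
  have hsH : s ∉ H := Set.disjoint_left.1 hSH.disjoint hs
  obtain ⟨b, hb, hba⟩ := hH.exists_ne a
  obtain ⟨u, hu, x, hx, hxa, hux⟩ := exists_adj_of_twoConnected (H := H \ {a}) h2 ⟨hb, hba⟩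
    (b := a) (fun h => h.2 rfl) (fun h => hsH h.1) (ne_of_mem_of_not_mem ha hsH).symm
  refine ⟨u, hu.1, hu.2, x, (hSH.mem_or_mem u hu.1 x hux).resolve_left fun h => hx ⟨h, hxa⟩, hux⟩

theorem exists_adj_ne (h2 : TwoConnected G) (hSH : IsFragment G S H) (hS : S.Nontrivial)
    (hx : x ∈ S) : ∃ w ∈ H, ∃ y ∈ S, y ≠ x ∧ G.Adj w y := by
  have hdisj := Set.disjoint_left.1 hSH.disjoint
  obtain ⟨s, hs, hsx⟩ := hS.exists_ne x
  obtain ⟨⟨a, ha⟩⟩ := hSH.connected.nonempty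
  obtain ⟨w, hw, y, hy, hyx, hwy⟩ := exists_adj_of_twoConnected h2 ha (hdisj hx) (hdisj hs) hsx
  exact ⟨w, hw, y, (hSH.mem_or_mem w hw y hwy).resolve_left hy, hyx, hwy⟩

theorem exists_isAttachedPair (h2 : TwoConnected G) (hSH : IsFragment G S H) (hS : S.Nontrivial)
    (hH : H.Nontrivial) : ∃ u ∈ H, ∃ v ∈ H, IsAttachedPair G S u v := by
  obtain ⟨a, ha⟩ := hH.nonempty
  obtain ⟨u, hu, -, x, hx, hux⟩ := exists_attached_ne h2 hSH hS.nonempty hH ha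
  obtain ⟨v, hv, hvu, y, hy, hvy⟩ := exists_attached_ne h2 hSH hS.nonempty hH hu
  rcases eq_or_ne x y with rfl | hxy
  · obtain ⟨w, hw, z, hz, hzx, hwz⟩ := exists_adj_ne h2 hSH hS hx
    rcases eq_or_ne w u with rfl | hwu
    · exact ⟨v, hv, w, hw, hvu, x, hx, z, hz, hzx.symm, hvy, hwz⟩
    · exact ⟨w, hw, u, hu, hwu, z, hz, x, hx, hzx, hwz, hux⟩
  · exact ⟨v, hv, u, hu, hvu, y, hy, x, hx, hxy.symm, hvy, hux⟩

end TwoConnected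

/-- A fragment `H` of `G - S` provides detours between vertices of `S` which are long compared with
`k`, in one of four ways: one long link, two links of different parity, or, between two attached
vertices with many neighbours in `S`, a path or two paths of different parity. -/
inductive HasLongDetour (G : SimpleGraph V) (S H : Set V) (k : ℕ) : Prop
  | link {x y : V} {n : ℕ} (hx : x ∈ S) (hy : y ∈ S) (hxy : x ≠ y) (h : HasLink G H x y n)
      (hk : 2 * k ≤ n + 4)
  | links {x y : V} {n n' : ℕ} (hx : x ∈ S) (hy : y ∈ S) (hxy : x ≠ y) (h : HasLink G H x y n)
      (h' : HasLink G H x y n') (hpar : n % 2 ≠ n' % 2) (hk : 2 * k ≤ n + n' + 4)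
  | path {u v : V} {n : ℕ} (huv : IsAttachedPair G S u v) (h : HasPathIn G H u v n)
      (hk : 2 * k ≤ degIn G S u + degIn G S v + 2 * (n / 2) + 1)
  | paths {u v : V} {n n' : ℕ} (huv : IsAttachedPair G S u v) (h : HasPathIn G H u v n)
      (h' : HasPathIn G H u v n') (hpar : n % 2 ≠ n' % 2)
      (hk : 2 * k ≤ degIn G S u + degIn G S v + 2 * n)
      (hk' : 2 * k ≤ degIn G S u + degIn G S v + 2 * n')

end Fragments

/-! ### Rerouting a path through a detour -/

theorem exists_getVert_lt_of_ne {u v x y : V} {P : G.Walk u v} (hx : x ∈ P.support)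
    (hy : y ∈ P.support) (hxy : x ≠ y) : ∃ i j, i < j ∧ j ≤ P.length ∧
      (P.getVert i = x ∧ P.getVert j = y ∨ P.getVert i = y ∧ P.getVert j = x) := by
  obtain ⟨i, rfl, hi⟩ := Walk.mem_support_iff_exists_getVert.1 hx
  obtain ⟨j, rfl, hj⟩ := Walk.mem_support_iff_exists_getVert.1 hy
  rcases lt_trichotomy i j with h | rfl | h
  · exact ⟨i, j, h, hj, .inl ⟨rfl, rfl⟩⟩
  · exact absurd rfl hxy
  · exact ⟨j, i, h, hi, .inr ⟨rfl, rfl⟩⟩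

section LongestPath

variable {K : Set V} {u v a b x y : V} {P : G.Walk u v} {k n n' : ℕ} (hP : P.IsPath)
  (hPK : Disjoint K {x | x ∈ P.support})

include hP hPK

theorem exists_hasPathIn_union_of_parity_ne (hx : x ∈ P.support) (hy : y ∈ P.support)
    (hxy : x ≠ y) (h : HasLink G K x y n) (h' : HasLink G K x y n') (hpar : n % 2 ≠ n' % 2) :
    ∃ l, HasPathIn G (K ∪ {x | x ∈ P.support}) u v l ∧ l % 2 ≠ (P.length + 1) % 2 ∧
      (n + 2 ≤ l ∨ n' + 2 ≤ l) := by
  obtain ⟨i, j, hij, hj, hlink, hlink'⟩ : ∃ i j, i < j ∧ j ≤ P.length ∧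
      HasLink G K (P.getVert i) (P.getVert j) n ∧ HasLink G K (P.getVert i) (P.getVert j) n' := by
    obtain ⟨i, j, hij, hj, ⟨rfl, rfl⟩ | ⟨rfl, rfl⟩⟩ := exists_getVert_lt_of_ne hx hy hxy
    exacts [⟨i, j, hij, hj, h, h'⟩, ⟨i, j, hij, hj, h.symm, h'.symm⟩]
  have hpath := hasPathIn_union_of_hasLink hP hij hj hPK hlink
  have hpath' := hasPathIn_union_of_hasLink hP hij hj hPK hlink'
  by_cases hl : (i + 1 + n + (P.length + 1 - j)) % 2 = (P.length + 1) % 2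
  · exact ⟨_, hpath', by omega, .inr (by omega)⟩
  · exact ⟨_, hpath, hl, .inl (by omega)⟩

variable (hmax : ∀ n, HasPathIn G (K ∪ {x | x ∈ P.support}) u v n → n ≤ P.length + 1)

include hmax

theorem add_lt_of_hasLink_getVert {i j : ℕ} (hij : i < j) (hj : j ≤ P.length)
    (h : HasLink G K (P.getVert i) (P.getVert j) n) : i + n < j := by
  have := hmax _ (hasPathIn_union_of_hasLink hP hij hj hPK h)
  omega

theorem lt_length_of_hasLink (hx : x ∈ P.support) (hy : y ∈ P.support) (hxy : x ≠ y)
    (h : HasLink G K x y n) : n < P.length := by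
  obtain ⟨i, j, hij, hj, ⟨rfl, rfl⟩ | ⟨rfl, rfl⟩⟩ := exists_getVert_lt_of_ne hx hy hxy
  · have := add_lt_of_hasLink_getVert hP hPK hmax hij hj h
    omega
  · have := add_lt_of_hasLink_getVert hP hPK hmax hij hj h.symm
    omega

theorem degIn_add_degIn_add_le (h : HasPathIn G K a b n)
    (hne : ∃ x ∈ P.support, ∃ y ∈ P.support, x ≠ y ∧ G.Adj a x ∧ G.Adj b y) :
    degIn G {x | x ∈ P.support} a + degIn G {x | x ∈ P.support} b + n ≤ P.length + 3 := by
  rw [← card_nbrPos hP, ← card_nbrPos hP]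
  refine card_add_card_add_le_of_forall_lt_sub h.one_le (fun i hi => (mem_nbrPos.1 hi).1)
    (fun j hj => (mem_nbrPos.1 hj).1) ?_ fun i hi j hj => ?_
  · obtain ⟨x, hx, y, hy, hxy, hax, hby⟩ := hne
    obtain ⟨i, rfl, hi⟩ := Walk.mem_support_iff_exists_getVert.1 hx
    obtain ⟨j, rfl, hj⟩ := Walk.mem_support_iff_exists_getVert.1 hy
    exact ⟨i, mem_nbrPos.2 ⟨hi, hax⟩, j, mem_nbrPos.2 ⟨hj, hby⟩, fun h => hxy (h ▸ rfl)⟩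
  · obtain ⟨hiP, hai⟩ := mem_nbrPos.1 hi
    obtain ⟨hjP, hbj⟩ := mem_nbrPos.1 hj
    have hlink : HasLink G K (P.getVert i) (P.getVert j) n := ⟨a, b, h, hai.symm, hbj.symm⟩
    exact ⟨fun hij => add_lt_of_hasLink_getVert hP hPK hmax hij hjP hlink,
      fun hji => add_lt_of_hasLink_getVert hP hPK hmax hji hiP hlink.symm⟩

theorem two_mul_degIn_le (ha : a ∈ K) : 2 * degIn G {x | x ∈ P.support} a ≤ P.length + 2 := by
  rcases le_or_gt (degIn G {x | x ∈ P.support} a) 1 with hle | hlt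
  · omega
  · obtain ⟨x, ⟨hax, hx⟩, y, ⟨hay, hy⟩, hxy⟩ :=
      (Set.one_lt_ncard (P.support.finite_toSet.inter_of_right _)).1 hlt
    have := degIn_add_degIn_add_le hP hPK hmax (.single ha) ⟨x, hx, y, hy, hxy, hax, hay⟩
    omega

theorem two_mul_le_or_exists_hasPathIn_of_hasLongDetour
    (h : HasLongDetour G {x | x ∈ P.support} K k) : 2 * k ≤ P.length + 4 ∨
      ∃ n, HasPathIn G (K ∪ {x | x ∈ P.support}) u v n ∧ n % 2 ≠ (P.length + 1) % 2 ∧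
        2 * k ≤ P.length + n + 3 := by
  rcases h with ⟨hx, hy, hxy, h, hk⟩ | ⟨hx, hy, hxy, h, h', hpar, hk⟩ | ⟨hab, h, hk⟩ |
    ⟨hab, h, h', hpar, hk, hk'⟩
  · have := lt_length_of_hasLink hP hPK hmax hx hy hxy h
    exact .inl (by omega)
  · have := lt_length_of_hasLink hP hPK hmax hx hy hxy h
    have := lt_length_of_hasLink hP hPK hmax hx hy hxy h'
    obtain ⟨l, hl, hlpar, hle⟩ := exists_hasPathIn_union_of_parity_ne hP hPK hx hy hxy h h' hpar
    exact .inr ⟨l, hl, hlpar, by omega⟩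
  · have := degIn_add_degIn_add_le hP hPK hmax h hab.2
    exact .inl (by omega)
  · have := degIn_add_degIn_add_le hP hPK hmax h hab.2
    have := degIn_add_degIn_add_le hP hPK hmax h' hab.2
    obtain ⟨-, x, hx, y, hy, hxy, hax, hby⟩ := hab
    obtain ⟨l, hl, hlpar, hle⟩ := exists_hasPathIn_union_of_parity_ne hP hPK hx hy hxy
      ⟨_, _, h, hax.symm, hby.symm⟩ ⟨_, _, h', hax.symm, hby.symm⟩ hpar
    exact .inr ⟨l, hl, hlpar, by omega⟩

end LongestPath

theorem two_mul_le_or_exists_hasPathIn [Finite V] {K : Set V} {u v : V} {P : G.Walk u v} {k : ℕ}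
    (hP : P.IsPath) (hmax : ∀ n, HasPathIn G (K ∪ {x | x ∈ P.support}) u v n → n ≤ P.length + 1)
    (hK : IsFragment G {x | x ∈ P.support} K) (hdeg : ∀ w ∈ K, k ≤ (G.neighborSet w).ncard)
    (hdetour : K.Nontrivial → HasLongDetour G {x | x ∈ P.support} K k) : 2 * k ≤ P.length + 4 ∨
      ∃ n, HasPathIn G (K ∪ {x | x ∈ P.support}) u v n ∧ n % 2 ≠ (P.length + 1) % 2 ∧
        2 * k ≤ P.length + n + 3 := by
  have hPK := hK.disjoint.symm
  rcases K.subsingleton_or_nontrivial with hsub | hnt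
  · obtain ⟨⟨w, hw⟩⟩ := hK.connected.nonempty
    have hle := two_mul_degIn_le hP hPK hmax hw
    have hnbr : G.neighborSet w ⊆ {x | x ∈ P.support} := fun y hwy =>
      (hK.mem_or_mem w hw y hwy).resolve_left fun hy => hwy.ne (hsub hw hy)
    have := hdeg w hw
    rw [degIn, Set.inter_eq_left.2 hnbr] at hle
    exact .inl (by omega)
  · exact two_mul_le_or_exists_hasPathIn_of_hasLongDetour hP hPK hmax (hdetour hnt)

/-! ### Counting with parity -/

section ParityCounting

variable {A B X : Finset ℕ} {p L : ℕ}

theorem card_le_of_forall_mod_two_eq {r lo hi : ℕ} (h : ∀ x ∈ X, x % 2 = r ∧ lo ≤ x ∧ x ≤ hi) :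
    X.card ≤ hi / 2 + 1 - lo / 2 := by
  rw [← Nat.card_Icc]
  refine Finset.card_le_card_of_injOn (· / 2) (fun x hx => ?_) fun x hx y hy hxy => ?_
  · have := h x hx
    exact Finset.mem_coe.2 (Finset.mem_Icc.2 (by dsimp only; omega))
  · have := h x hx
    have := h y hy
    have : x / 2 = y / 2 := hxy
    omega

theorem card_le_card_filter_even_add_card_filter_odd (hA : ∀ a ∈ A, a ≤ p) :
    A.card ≤ {a ∈ A | a % 2 = 0 ∧ a < p}.card + {a ∈ A | a % 2 = 1 ∧ a < p}.card + 1 := by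
  rw [← Finset.card_union_of_disjoint, ← Finset.card_singleton p]
  · refine (Finset.card_le_card fun a ha => ?_).trans (Finset.card_union_le _ _)
    have := hA a ha
    rw [Finset.mem_union, Finset.mem_union, Finset.mem_filter, Finset.mem_filter,
      Finset.mem_singleton]
    grind
  · exact Finset.disjoint_filter.2 fun a _ h h' => by omega

theorem card_filter_odd_le : {a ∈ A | a % 2 = 1 ∧ a < p}.card ≤ p / 2 := by
  rw [← Finset.card_range (p / 2)]
  refine Finset.card_le_card_of_injOn (· / 2) (fun x hx => ?_) fun x hx y hy hxy => ?_
  · have := (Finset.mem_filter.1 hx).2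
    exact Finset.mem_coe.2 (Finset.mem_range.2 (by dsimp only; omega))
  · have := (Finset.mem_filter.1 hx).2
    have := (Finset.mem_filter.1 hy).2
    have : x / 2 = y / 2 := hxy
    omega

theorem card_filter_even_add_card_filter_odd_le (hpar : L % 2 ≠ p % 2)
    (hA : ∀ a ∈ A, a % 2 = 0 → p + 1 ≤ L + a)
    (hAB : ∀ a ∈ A, ∀ b ∈ B, (a + b) % 2 = 1 → a < p → b < p → p < a + b → a + b + 2 ≤ L + p)
    (hex : ∃ a ∈ A, a % 2 = 0 ∧ a < p) :
    {a ∈ A | a % 2 = 0 ∧ a < p}.card + {b ∈ B | b % 2 = 1 ∧ b < p}.card ≤ L := by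
  obtain ⟨m, hm, hmax⟩ := Finset.exists_max_image {a ∈ A | a % 2 = 0 ∧ a < p} id
    (hex.imp fun a ha => Finset.mem_filter.2 ha)
  obtain ⟨hmA, hm0, hmp⟩ := Finset.mem_filter.1 hm
  have heven : {a ∈ A | a % 2 = 0 ∧ a < p}.card ≤ m / 2 + 1 - (p + 1 - L) / 2 :=
    card_le_of_forall_mod_two_eq (r := 0) fun a ha => by
      obtain ⟨haA, ha0, -⟩ := Finset.mem_filter.1 ha
      have := hA a haA ha0
      exact ⟨ha0, by omega, hmax a ha⟩
  have hodd : {b ∈ B | b % 2 = 1 ∧ b < p}.card ≤ (L + p - 2 - m) / 2 + 1 - 1 / 2 :=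
    card_le_of_forall_mod_two_eq (r := 1) fun b hb => by
      obtain ⟨hbB, hb1, hbp⟩ := Finset.mem_filter.1 hb
      have := hAB m hmA b hbB (by omega) hmp hbp
      have := hA m hmA hm0
      omega
  have := hA m hmA hm0
  omega

theorem card_add_card_le_two_mul_add_two (hA : ∀ a ∈ A, a ≤ p) (hB : ∀ b ∈ B, b ≤ p)
    (hpar : L % 2 ≠ p % 2) (hA0 : ∀ a ∈ A, a % 2 = 0 → p + 1 ≤ L + a)
    (hB0 : ∀ b ∈ B, b % 2 = 0 → p + 1 ≤ L + b)
    (hAB : ∀ a ∈ A, ∀ b ∈ B, (a + b) % 2 = 1 → a < p → b < p → p < a + b → a + b + 2 ≤ L + p)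
    (hbig : p + 2 ≤ A.card + B.card) (hex : ∃ a ∈ A, a % 2 = 0 ∧ a < p) :
    A.card + B.card ≤ 2 * L + 2 := by
  have hAcard := card_le_card_filter_even_add_card_filter_odd hA
  have hBcard := card_le_card_filter_even_add_card_filter_odd hB
  have hAL := card_filter_even_add_card_filter_odd_le hpar hA0 hAB hex
  by_cases hexB : ∃ b ∈ B, b % 2 = 0 ∧ b < p
  · have hBL := card_filter_even_add_card_filter_odd_le hpar hB0
      (fun b hb a ha hab hbp hap hlt => add_comm a b ▸
        hAB a ha b hb (add_comm b a ▸ hab) hap hbp (add_comm b a ▸ hlt)) hexB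
    omega
  · have hBempty : {b ∈ B | b % 2 = 0 ∧ b < p} = ∅ :=
      Finset.filter_eq_empty_iff.2 fun b hb h => hexB ⟨b, hb, h⟩
    have := card_filter_odd_le (A := A) (p := p)
    rw [hBempty, Finset.card_empty] at hBcard
    omega

theorem card_le_of_forall_odd_or_eq (hA : ∀ a ∈ A, a ≤ p) (h : ∀ a ∈ A, a % 2 = 0 → a = p) :
    A.card ≤ p / 2 + 1 := by
  have hempty : {a ∈ A | a % 2 = 0 ∧ a < p} = ∅ :=
    Finset.filter_eq_empty_iff.2 fun a ha ha' => ha'.2.ne (h a ha ha'.1)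
  have := card_le_card_filter_even_add_card_filter_odd hA
  have := card_filter_odd_le (A := A) (p := p)
  rw [hempty, Finset.card_empty] at *
  omega

theorem mem_iff_odd_or_eq (hA : ∀ a ∈ A, 1 ≤ a ∧ a ≤ p) (h : ∀ a ∈ A, a % 2 = 0 → a = p)
    (hcard : p / 2 + 1 ≤ A.card) {i : ℕ} : i ∈ A ↔ 1 ≤ i ∧ i ≤ p ∧ (i % 2 = 1 ∨ i = p) := by
  have hsub : A ⊆ {i ∈ Finset.Icc 1 p | i % 2 = 1 ∨ i = p} := fun a ha =>
    Finset.mem_filter.2 ⟨Finset.mem_Icc.2 (hA a ha), by have := h a ha; omega⟩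
  have hle := card_le_of_forall_odd_or_eq (A := {i ∈ Finset.Icc 1 p | i % 2 = 1 ∨ i = p}) (p := p)
    (fun a ha => by simp only [Finset.mem_filter, Finset.mem_Icc] at ha; omega)
    (fun a ha => by simp only [Finset.mem_filter, Finset.mem_Icc] at ha; omega)
  rw [Finset.eq_of_subset_of_card_le hsub (hle.trans hcard), Finset.mem_filter, Finset.mem_Icc,
    and_assoc]

end ParityCounting

/-! ### Longest paths between attached vertices -/

section LongestAttached

variable {S H K A B : Set V} {u v w w₀ a b x y : V} {P : G.Walk u v} {k : ℕ}

/-- `P` is a longest path among the paths inside `H` whose ends have distinct neighbours in `S`. -/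
structure IsLongestAttached (S H : Set V) (P : G.Walk u v) : Prop where
  isPath : P.IsPath
  subset : {x | x ∈ P.support} ⊆ H
  isAttachedPair : IsAttachedPair G S u v
  le : ∀ {a b n}, IsAttachedPair G S a b → HasPathIn G H a b n → n ≤ P.length + 1

theorem exists_isLongestAttached [Finite V] (hH : (G.induce H).Connected) (ha : a ∈ H) (hb : b ∈ H)
    (hab : IsAttachedPair G S a b) :
    ∃ (u v : V) (P : G.Walk u v), IsLongestAttached S H P := by
  have := Fintype.ofFinite V
  let IsOrder (n : ℕ) : Prop := ∃ u v, IsAttachedPair G S u v ∧ HasPathIn G H u v n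
  obtain ⟨n, hn⟩ := exists_hasPathIn hH ha hb
  obtain ⟨m, ⟨u, v, huv, P, hP, hPH, rfl⟩, hmax⟩ : ∃ m, IsOrder m ∧ ∀ n, IsOrder n → n ≤ m :=
    ⟨_, Nat.findGreatest_spec hn.le_card ⟨a, b, hab, hn⟩, fun n ⟨u, v, huv, h⟩ =>
      Nat.le_findGreatest h.le_card ⟨u, v, huv, h⟩⟩
  exact ⟨u, v, P, hP, hPH, huv, fun huv h => hmax _ ⟨_, _, huv, h⟩⟩

theorem IsFragment.of_union_compl (hSH : IsFragment G S H) (hK : IsFragment G (Hᶜ ∪ A) K)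
    (hAB : A ⊆ B) (hBK : Disjoint B K) (hS : ∀ w ∈ K, ∀ y ∈ S, G.Adj w y → y ∈ B) :
    IsFragment G B K := by
  refine ⟨hBK, hK.connected, fun w hw y hwy => ?_⟩
  have hKH : K ⊆ H := Set.disjoint_compl_left_iff_subset.1 (Set.disjoint_union_left.1 hK.disjoint).1
  rcases hK.mem_or_mem w hw y hwy with hy | hy | hy
  · exact .inl hy
  · exact .inr (hS w hw y ((hSH.mem_or_mem w (hKH hw) y hwy).resolve_left hy) hwy)
  · exact .inr (hAB hy)

namespace IsLongestAttached

theorem reverse (hP : IsLongestAttached S H P) : IsLongestAttached S H P.reverse where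
  isPath := hP.isPath.reverse
  subset := by simpa using hP.subset
  isAttachedPair := hP.isAttachedPair.symm
  le hab h := by simpa using hP.le hab h

theorem hasPathIn (hP : IsLongestAttached S H P) : HasPathIn G H u v (P.length + 1) :=
  (hasPathIn_support hP.isPath).mono hP.subset

theorem not_isAttachedPair_of_adj (hP : IsLongestAttached S H P)
    (hK : IsFragment G (Hᶜ ∪ {x | x ∈ P.support}) K) (hw₀ : w₀ ∈ K) (hw : w ∈ K)
    (hab : HasPathIn G {x | x ∈ P.support} a b (P.length + 1)) (hadj : G.Adj w₀ a) :
    ¬IsAttachedPair G S w b := fun hwb => by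
  obtain ⟨hHK, hPK⟩ := Set.disjoint_union_left.1 hK.disjoint
  obtain ⟨n, hn⟩ := exists_hasPathIn hK.connected hw hw₀
  have := hP.le hwb ((hn.append hab hadj hPK.symm).mono
    (Set.union_subset (Set.disjoint_compl_left_iff_subset.1 hHK) hP.subset))
  have := hn.one_le
  omega

variable [Finite V] (hP : IsLongestAttached S H P) (hSH : IsFragment G S H)
  (hdeg : ∀ w ∈ H, k ≤ (G.neighborSet w).ncard)
  (ih : ∀ T K, K ⊂ H → IsFragment G T K → T.Nontrivial → K.Nontrivial → HasLongDetour G T K k)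

include hP hSH hdeg ih

theorem hasLongDetour_of_isFragment_support_concat (hKH : K ⊆ H) (hx : x ∈ S) (hy : y ∈ S)
    (hxy : x ≠ y) (hux : G.Adj u x) (hvy : G.Adj v y)
    (hK : IsFragment G {z | z ∈ (P.concat hvy).support} K) : HasLongDetour G S H k := by
  have hyH : y ∉ H := Set.disjoint_left.1 hSH.disjoint hy
  have huH : u ∈ H := hP.subset P.start_mem_support
  have hu : u ∉ K := Set.disjoint_left.1 hK.disjoint (P.concat hvy).start_mem_support
  have hQ : (P.concat hvy).IsPath := hP.isPath.concat (fun h => hyH (hP.subset h)) hvy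
  have hQlen : (P.concat hvy).length = P.length + 1 := P.length_concat hvy
  have hdrop : ∀ n, HasPathIn G (K ∪ {z | z ∈ (P.concat hvy).support}) u y n →
      ∃ w m, HasPathIn G H u w m ∧ G.Adj w y ∧ n = m + 1 := by
    intro n hn
    obtain ⟨m, rfl⟩ := Nat.exists_eq_add_of_le' (hn.two_le (ne_of_mem_of_not_mem huH hyH))
    obtain ⟨w, hw, hwy⟩ := hn.dropLast
    refine ⟨w, m + 1, hw.mono ?_, hwy, rfl⟩
    rintro z ⟨hz | hz, hzy⟩
    · exact hKH hz
    · rw [Set.mem_ofPred_eq, Walk.support_concat, List.mem_append, List.mem_singleton] at hz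
      exact hP.subset (hz.resolve_right hzy)
  have hmax : ∀ n, HasPathIn G (K ∪ {z | z ∈ (P.concat hvy).support}) u y n →
      n ≤ (P.concat hvy).length + 1 := by
    intro n hn
    obtain ⟨w, m, hm, hwy, rfl⟩ := hdrop n hn
    rcases eq_or_ne u w with rfl | huw
    · have := hm.eq_one
      omega
    · have := hP.le ⟨huw, x, hx, y, hy, hxy, hux, hwy⟩ hm
      omega
  have hlink : HasLink G H x y (P.length + 1) := ⟨u, v, hP.hasPathIn, hux.symm, hvy.symm⟩
  rcases two_mul_le_or_exists_hasPathIn hQ hmax hK (fun w hw => hdeg w (hKH hw))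
      (ih _ K ⟨hKH, fun h => hu (h huH)⟩ hK
        ⟨u, Walk.start_mem_support _, y, Walk.end_mem_support _, ne_of_mem_of_not_mem huH hyH⟩)
    with hle | ⟨n, hn, hpar, hle⟩
  · exact .link hx hy hxy hlink (by omega)
  · obtain ⟨w, m, hm, hwy, rfl⟩ := hdrop n hn
    exact .links hx hy hxy hlink ⟨u, w, hm, hux.symm, hwy.symm⟩ (by omega) (by omega)

theorem hasLongDetour_of_isFragment (hK : IsFragment G (Hᶜ ∪ {x | x ∈ P.support}) K)
    (huniq : ∀ w ∈ K, ∀ x ∈ S, G.Adj w x → ∀ y ∈ S, G.Adj v y → y = x) :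
    HasLongDetour G S H k := by
  obtain ⟨hHK, hPK⟩ := Set.disjoint_union_left.1 hK.disjoint
  have hKH := Set.disjoint_compl_left_iff_subset.1 hHK
  obtain ⟨-, x, hx, y, hy, hxy, hux, hvy⟩ := hP.isAttachedPair
  have hyH : y ∉ H := Set.disjoint_left.1 hSH.disjoint hy
  have hsupp : {z | z ∈ (P.concat hvy).support} = insert y {z | z ∈ P.support} := by
    ext z
    simp [Walk.support_concat, or_comm]
  refine hP.hasLongDetour_of_isFragment_support_concat hSH hdeg ih hKH hx hy hxy hux hvy
    (hSH.of_union_compl hK ?_ ?_ fun w hw z hz hwz => ?_) <;> rw [hsupp]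
  · exact Set.subset_insert _ _
  · exact Set.disjoint_insert_left.2 ⟨fun h => hyH (hKH h), hPK⟩
  · exact .inl (huniq w hw z hz hwz y hy hvy).symm

theorem hasLongDetour_of_adj_start (hw : w ∈ H) (hwP : w ∉ P.support) (huw : G.Adj u w) :
    HasLongDetour G S H k := by
  obtain ⟨K, hwK, hK⟩ := exists_isFragment (G := G) (T := Hᶜ ∪ {x | x ∈ P.support})
    fun h => h.elim (· hw) hwP
  refine hP.hasLongDetour_of_isFragment hSH hdeg ih hK fun w' hw' x hx hwx y hy hvy => ?_
  by_contra hyx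
  have hne : w' ≠ v := fun h => Set.disjoint_left.1 hK.disjoint (.inr P.end_mem_support) (h ▸ hw')
  exact hP.not_isAttachedPair_of_adj hK hwK hw' (hasPathIn_support hP.isPath) huw.symm
    ⟨hne, x, hx, y, hy, Ne.symm hyx, hwx, hvy⟩

end IsLongestAttached

end LongestAttached

/-! ### Rerouting along chords -/

section Rotations

variable {u v : V} {P : G.Walk u v} {i j : ℕ}

theorem disjoint_start_seg (hP : P.IsPath) (hi : 0 < i) (hj : j ≤ P.length) :
    Disjoint {u} (seg P i j) := by
  simpa [seg] using disjoint_seg (a := 0) hP hi hj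

theorem disjoint_seg_end (hP : P.IsPath) (hj : j < P.length) : Disjoint (seg P i j) {v} := by
  simpa [seg] using disjoint_seg (a := i) hP hj le_rfl

theorem hasPathIn_seg_end (hP : P.IsPath) (hj : j ≤ P.length) :
    HasPathIn G (seg P j P.length) (P.getVert j) v (P.length + 1 - j) := by
  simpa using hasPathIn_seg hP hj le_rfl

theorem singleton_start_subset_support : {u} ⊆ {x | x ∈ P.support} :=
  Set.singleton_subset_iff.2 P.start_mem_support

theorem singleton_end_subset_support : {v} ⊆ {x | x ∈ P.support} :=
  Set.singleton_subset_iff.2 P.end_mem_support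

theorem hasPathIn_rotate (hP : P.IsPath) (hi : i < P.length) (hui : G.Adj u (P.getVert (i + 1))) :
    HasPathIn G {x | x ∈ P.support} (P.getVert i) v (P.length + 1) := by
  have hstart := (hasPathIn_seg hP i.zero_le hi.le).symm
  rw [Walk.getVert_zero] at hstart
  have hpath := hstart.append (hasPathIn_seg_end hP hi) hui (disjoint_seg hP i.lt_succ_self le_rfl)
  convert hpath.mono (Set.union_subset seg_subset_support seg_subset_support) using 1
  omega

theorem hasPathIn_rotate_end (hP : P.IsPath) (hi : i < P.length) (hvi : G.Adj v (P.getVert i)) :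
    HasPathIn G {x | x ∈ P.support} (P.getVert (i + 1)) u (P.length + 1) := by
  have hstart := (hasPathIn_seg hP i.zero_le hi.le).symm
  rw [Walk.getVert_zero] at hstart
  have hpath := (hasPathIn_seg_end hP hi).append hstart hvi
    (disjoint_seg hP i.lt_succ_self le_rfl).symm
  convert hpath.mono (Set.union_subset seg_subset_support seg_subset_support) using 1
  omega

theorem hasPathIn_start_of_adj_ends (hP : P.IsPath) (hj : 0 < j) (hjP : j ≤ P.length)
    (huv : G.Adj u v) :
    HasPathIn G {x | x ∈ P.support} (P.getVert j) u (P.length + 2 - j) := by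
  have hpath := (hasPathIn_seg_end hP hjP).append (.single (Set.mem_singleton u)) huv.symm
    (disjoint_start_seg hP hj le_rfl).symm
  convert hpath.mono
    (Set.union_subset seg_subset_support singleton_start_subset_support) using 1
  omega

theorem hasPathIn_end_of_adj_ends (hP : P.IsPath) (hj : 0 < j) (hjP : j < P.length)
    (huv : G.Adj u v) (hu : G.Adj u (P.getVert (P.length - 1))) :
    HasPathIn G {x | x ∈ P.support} (P.getVert j) v (P.length + 2 - j) := by
  have hpath := ((hasPathIn_seg hP (Nat.le_sub_one_of_lt hjP) (Nat.sub_le _ _)).append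
    (.single (Set.mem_singleton u)) hu.symm (disjoint_start_seg hP hj (Nat.sub_le _ _)).symm).append
    (.single (Set.mem_singleton v)) huv (Set.disjoint_union_left.2
      ⟨disjoint_seg_end hP (by omega), Set.disjoint_singleton.2 huv.ne⟩)
  convert hpath.mono (Set.union_subset (Set.union_subset seg_subset_support
    singleton_start_subset_support) singleton_end_subset_support) using 1
  omega

theorem hasPathIn_of_parallel_chords (hP : P.IsPath) (hj : 0 < j) (hji : j < i)
    (hi : i ≤ P.length) (hu : G.Adj u (P.getVert (i - 1)))
    (hij : G.Adj (P.getVert j) (P.getVert i)) :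
    HasPathIn G {x | x ∈ P.support} u v (P.length + 2 - j) := by
  have hpath := ((HasPathIn.single (Set.mem_singleton u)).append
    (hasPathIn_seg hP (Nat.le_sub_one_of_lt hji) (by omega)).symm hu
    (disjoint_start_seg hP hj (by omega))).append (hasPathIn_seg_end hP hi) hij
    (Set.disjoint_union_left.2 ⟨disjoint_start_seg hP (by omega) le_rfl,
      disjoint_seg hP (by omega) le_rfl⟩)
  convert hpath.mono (Set.union_subset (Set.union_subset singleton_start_subset_support
    seg_subset_support) seg_subset_support) using 1
  omega

end Rotations

section EndNeighbors

variable {u v : V} {P : G.Walk u v} {i : ℕ}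

theorem pos_and_le_of_mem_nbrPos_start (hi : i ∈ nbrPos P u) : 1 ≤ i ∧ i ≤ P.length := by
  obtain ⟨hiP, hui⟩ := mem_nbrPos.1 hi
  refine ⟨Nat.one_le_iff_ne_zero.2 ?_, hiP⟩
  rintro rfl
  exact hui.ne P.getVert_zero.symm

theorem hasPathIn_of_mem_nbrPos (hP : P.IsPath) (hi : i ∈ nbrPos P u) :
    HasPathIn G {x | x ∈ P.support} u v (P.length + 2 - i) :=
  hasPathIn_of_chord hP (pos_and_le_of_mem_nbrPos_start hi).1 (pos_and_le_of_mem_nbrPos_start hi).2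
    (mem_nbrPos.1 hi).2

theorem hasPathIn_of_mem_nbrPos_reverse (hP : P.IsPath) (hi : i ∈ nbrPos P.reverse v) :
    HasPathIn G {x | x ∈ P.support} u v (P.length + 2 - i) := by
  simpa using (hasPathIn_of_mem_nbrPos hP.reverse hi).symm

theorem card_nbrPos_add_card_nbrPos_reverse_le {m : ℕ} (hP : P.IsPath)
    (hpar : m % 2 = P.length % 2)
    (hmax : ∀ n, HasPathIn G {x | x ∈ P.support} u v n → n % 2 = P.length % 2 → n ≤ m)
    (hbig : P.length + 2 ≤ (nbrPos P u).card + (nbrPos P.reverse v).card)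
    (hex : ∃ a ∈ nbrPos P u, a % 2 = 0 ∧ a < P.length) :
    (nbrPos P u).card + (nbrPos P.reverse v).card ≤ 2 * m := by
  have hA : ∀ a ∈ nbrPos P u, a % 2 = 0 → P.length + 1 ≤ (m - 1) + a ∧ 1 ≤ m := fun a ha ha0 => by
    have := pos_and_le_of_mem_nbrPos_start ha
    have := hmax _ (hasPathIn_of_mem_nbrPos hP ha) (by omega)
    omega
  have hB : ∀ b ∈ nbrPos P.reverse v, b % 2 = 0 → P.length + 1 ≤ (m - 1) + b := fun b hb hb0 => by
    have := pos_and_le_of_mem_nbrPos_start hb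
    rw [Walk.length_reverse] at this
    have := hmax _ (hasPathIn_of_mem_nbrPos_reverse hP hb) (by omega)
    omega
  have hm : 1 ≤ m := by
    obtain ⟨a, ha, ha0, -⟩ := hex
    exact (hA a ha ha0).2
  have := card_add_card_le_two_mul_add_two (L := m - 1)
    (fun a ha => (pos_and_le_of_mem_nbrPos_start ha).2)
    (fun b hb => P.length_reverse ▸ (pos_and_le_of_mem_nbrPos_start hb).2) (by omega)
    (fun a ha ha0 => (hA a ha ha0).1) hB (fun a ha b hb hab hap hbp hlt => by
      have hvb := (mem_nbrPos.1 hb).2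
      rw [Walk.getVert_reverse] at hvb
      have := hmax _ (hasPathIn_of_crossing_chords hP (by omega) (by omega) hap
        (mem_nbrPos.1 ha).2 hvb) (by omega)
      omega) hbig hex
  omega

end EndNeighbors

/-! ### Every fragment has a long detour -/

variable {V : Type*} {G : SimpleGraph V} {S H : Set V}

theorem IsAttachedPair.or_of_adj {u v w x : V} (h : IsAttachedPair G S u v) (hwu : w ≠ u)
    (hwv : w ≠ v) (hx : x ∈ S) (hwx : G.Adj w x) :
    IsAttachedPair G S w u ∨ IsAttachedPair G S w v := by
  obtain ⟨-, y, hy, z, hz, hyz, huy, hvz⟩ := h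
  rcases eq_or_ne x y with rfl | hxy
  · exact .inr ⟨hwv, x, hx, z, hz, hyz, hwx, hvz⟩
  · exact .inl ⟨hwu, x, hx, y, hy, hxy, hwx, huy⟩

section NeighborPositions

variable {u v a : V} {P : G.Walk u v}

theorem card_nbrPos_le_length (ha : a ∈ P.support) : (nbrPos P a).card ≤ P.length := by
  obtain ⟨j, rfl, hj⟩ := Walk.mem_support_iff_exists_getVert.1 ha
  have hsub : nbrPos P (P.getVert j) ⊆ (Finset.range (P.length + 1)).erase j := fun i hi => by
    obtain ⟨hiP, hji⟩ := mem_nbrPos.1 hi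
    exact Finset.mem_erase.2 ⟨fun h => hji.ne (h ▸ rfl), Finset.mem_range.2 (Nat.lt_succ_of_le hiP)⟩
  simpa [Nat.lt_succ_iff, hj] using Finset.card_le_card hsub

theorem card_nbrPos_getVert_two_le (hu : ¬G.Adj u (P.getVert 2))
    (h : ∀ i, 2 < i → i ≤ P.length → G.Adj (P.getVert 2) (P.getVert i) → i % 2 = 1) :
    (nbrPos P (P.getVert 2)).card ≤ P.length / 2 + 1 :=
  card_le_of_forall_mod_two_eq (r := 1) (lo := 1) fun i hi => by
    obtain ⟨hiP, hai⟩ := mem_nbrPos.1 hi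
    obtain rfl | rfl | rfl | hi2 : i = 0 ∨ i = 1 ∨ i = 2 ∨ 2 < i := by omega
    · rw [P.getVert_zero] at hai
      exact absurd hai.symm hu
    · exact ⟨rfl, le_rfl, hiP⟩
    · exact absurd rfl hai.ne
    · exact ⟨h i hi2 hiP hai, by omega, hiP⟩

end NeighborPositions

namespace IsLongestAttached

variable {u v a b w : V} {P : G.Walk u v} {k : ℕ}

theorem hasLongDetour_of_two_mul_le (hP : IsLongestAttached S H P) (hk : 2 * k ≤ P.length + 5) :
    HasLongDetour G S H k := by
  obtain ⟨x, hx, y, hy, hxy, hlink⟩ := hP.isAttachedPair.exists_hasLink hP.hasPathIn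
  exact .link hx hy hxy hlink hk

theorem hasLongDetour_of_hasPathIn (hP : IsLongestAttached S H P) (hab : IsAttachedPair G S a b)
    (hk : 2 * k ≤ degIn G S a + degIn G S b + 2 * P.length)
    (h : HasPathIn G {x | x ∈ P.support} a b (P.length + 1))
    (h' : HasPathIn G {x | x ∈ P.support} a b P.length) : HasLongDetour G S H k :=
  .paths hab (h.mono hP.subset) (h'.mono hP.subset) (by omega) (by omega) hk

theorem hasLongDetour_of_even_chord [Finite V] (hP : IsLongestAttached S H P)
    (hdu : k ≤ degIn G S u + (nbrPos P u).card) (hdv : k ≤ degIn G S v + (nbrPos P.reverse v).card)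
    (hbig : P.length + 2 ≤ (nbrPos P u).card + (nbrPos P.reverse v).card)
    (hex : ∃ i ∈ nbrPos P u, i % 2 = 0 ∧ i < P.length) : HasLongDetour G S H k := by
  obtain ⟨i, hi, hi0, hiP⟩ := hex
  obtain ⟨m, hm, hmpar, hmax⟩ :=
    ((hasPathIn_of_mem_nbrPos hP.isPath hi).mono hP.subset).exists_max_mod_two
  have := hP.le hP.isAttachedPair hm
  have := card_nbrPos_add_card_nbrPos_reverse_le hP.isPath (by omega)
    (fun n hn hpar => hmax n (hn.mono hP.subset) (by omega)) hbig ⟨i, hi, hi0, hiP⟩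
  exact .paths hP.isAttachedPair hP.hasPathIn hm (by omega) (by omega) (by omega)

variable [Finite V] (hP : IsLongestAttached S H P) (hSH : IsFragment G S H)
  (hdeg : ∀ w ∈ H, k ≤ (G.neighborSet w).ncard)

include hP hSH hdeg

theorem le_degIn_add_card_nbrPos (hw : w ∈ H) (hout : ∀ y ∈ H, G.Adj w y → y ∈ P.support) :
    k ≤ degIn G S w + (nbrPos P w).card := by
  rw [card_nbrPos hP.isPath]
  refine le_degIn_add_degIn (hdeg w hw) fun y hwy => ?_
  exact (hSH.mem_or_mem w hw y hwy).symm.imp_right fun hy => hout y hy hwy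

section OddChords

variable (ih : ∀ T K, K ⊂ H → IsFragment G T K → T.Nontrivial → K.Nontrivial →
  HasLongDetour G T K k)

include ih

theorem hasLongDetour_of_adj_of_hasPathIn (hau : HasPathIn G {x | x ∈ P.support} a u (P.length + 1))
    (hav : HasPathIn G {x | x ∈ P.support} a v (P.length + 1)) (hw : w ∈ H) (hwP : w ∉ P.support)
    (haw : G.Adj a w) : HasLongDetour G S H k := by
  obtain ⟨K, hwK, hK⟩ := exists_isFragment (G := G) (T := Hᶜ ∪ {x | x ∈ P.support})
    fun h => h.elim (· hw) hwP
  have hPK := Set.disjoint_left.1 (Set.disjoint_union_left.1 hK.disjoint).2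
  refine hP.hasLongDetour_of_isFragment hSH hdeg ih hK fun y hy x hx hyx => ?_
  rcases hP.isAttachedPair.or_of_adj (fun h => hPK P.start_mem_support (h ▸ hy))
    (fun h => hPK P.end_mem_support (h ▸ hy)) hx hyx with hyu | hyv
  · exact absurd hyu (hP.not_isAttachedPair_of_adj hK hwK hy hau haw.symm)
  · exact absurd hyv (hP.not_isAttachedPair_of_adj hK hwK hy hav haw.symm)

variable (h4 : 4 ≤ P.length) (heven : P.length % 2 = 0)
  (hu : ∀ i ≤ P.length, G.Adj u (P.getVert i) ↔ i % 2 = 1 ∨ i = P.length)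
  (hv : ∀ i ≤ P.length, G.Adj v (P.getVert i) ↔ i % 2 = 1 ∨ i = 0)

include h4 heven hu hv

theorem hasLongDetour_of_odd_chords (hdu : k ≤ degIn G S u + (P.length / 2 + 1))
    (hdv : k ≤ degIn G S v + (P.length / 2 + 1)) : HasLongDetour G S H k := by
  have huv : G.Adj u v := by simpa using (hu P.length le_rfl).2 (.inr rfl)
  have hau : HasPathIn G {x | x ∈ P.support} (P.getVert 2) u (P.length + 1) :=
    hasPathIn_rotate_end hP.isPath (by omega) ((hv 1 (by omega)).2 (.inl rfl))
  have hav : HasPathIn G {x | x ∈ P.support} (P.getVert 2) v (P.length + 1) :=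
    hasPathIn_rotate hP.isPath (by omega) ((hu 3 (by omega)).2 (.inl rfl))
  by_cases hout : ∃ w ∈ H, w ∉ P.support ∧ G.Adj (P.getVert 2) w
  · obtain ⟨w, hw, hwP, haw⟩ := hout
    exact hP.hasLongDetour_of_adj_of_hasPathIn hSH hdeg ih hau hav hw hwP haw
  have hda := hP.le_degIn_add_card_nbrPos hSH hdeg (hP.subset hau.left_mem)
    fun y hy hay => by_contra fun hyP => hout ⟨y, hy, hyP, hay⟩
  by_cases hS : ∃ x ∈ S, G.Adj (P.getVert 2) x
  · obtain ⟨x, hx, hax⟩ := hS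
    have hcard := card_nbrPos_le_length (P.getVert_mem_support 2)
    rcases hP.isAttachedPair.or_of_adj (hau.ne (by omega)) (hav.ne (by omega)) hx hax with h | h
    · exact hP.hasLongDetour_of_hasPathIn h (by omega) hau
        (hasPathIn_start_of_adj_ends hP.isPath two_pos (by omega) huv)
    · exact hP.hasLongDetour_of_hasPathIn h (by omega) hav (hasPathIn_end_of_adj_ends hP.isPath
        two_pos (by omega) huv ((hu _ (by omega)).2 (.inl (by omega))))
  have hdS : degIn G S (P.getVert 2) = 0 := by
    rw [degIn, Set.ncard_eq_zero, Set.eq_empty_iff_forall_notMem]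
    exact fun x ⟨hax, hx⟩ => hS ⟨x, hx, hax⟩
  by_cases hchord : ∃ i, 2 < i ∧ i ≤ P.length ∧ i % 2 = 0 ∧ G.Adj (P.getVert 2) (P.getVert i)
  · obtain ⟨i, hi2, hiP, hi0, hai⟩ := hchord
    exact hP.hasLongDetour_of_hasPathIn hP.isAttachedPair (by omega) (hasPathIn_support hP.isPath)
      (hasPathIn_of_parallel_chords hP.isPath two_pos hi2 hiP
        ((hu _ (by omega)).2 (.inl (by omega))) hai)
  · have := card_nbrPos_getVert_two_le (P := P)
      (fun h => by have := (hu 2 (by omega)).1 h; omega)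
      fun i hi2 hiP hai => by_contra fun hi => hchord ⟨i, hi2, hiP, by omega, hai⟩
    exact hP.hasLongDetour_of_two_mul_le (by omega)

end OddChords

theorem hasLongDetour_of_ends (ih : ∀ T K, K ⊂ H → IsFragment G T K → T.Nontrivial →
    K.Nontrivial → HasLongDetour G T K k)
    (hu : ∀ y ∈ H, G.Adj u y → y ∈ P.support) (hv : ∀ y ∈ H, G.Adj v y → y ∈ P.support) :
    HasLongDetour G S H k := by
  have hdu := hP.le_degIn_add_card_nbrPos hSH hdeg (hP.subset P.start_mem_support) hu
  have hdv := hP.reverse.le_degIn_add_card_nbrPos hSH hdeg (hP.subset P.end_mem_support)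
    (by simpa using hv)
  have hA := fun i hi => pos_and_le_of_mem_nbrPos_start (P := P) (i := i) hi
  have hB := fun i hi => pos_and_le_of_mem_nbrPos_start (P := P.reverse) (i := i) hi
  by_cases hsmall : (nbrPos P u).card + (nbrPos P.reverse v).card ≤ 2 * ((P.length + 1) / 2) + 1
  · exact .path hP.isAttachedPair hP.hasPathIn (by omega)
  by_cases hexA : ∃ i ∈ nbrPos P u, i % 2 = 0 ∧ i < P.length
  · exact hP.hasLongDetour_of_even_chord hdu hdv (by omega) hexA
  by_cases hexB : ∃ i ∈ nbrPos P.reverse v, i % 2 = 0 ∧ i < P.length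
  · exact hP.reverse.hasLongDetour_of_even_chord hdv (by simpa using hdu) (by simp; omega)
      (by simpa using hexB)
  rw [Walk.length_reverse] at hB
  have hA' : ∀ i ∈ nbrPos P u, i % 2 = 0 → i = P.length := fun i hi hi0 =>
    (hA i hi).2.antisymm (not_lt.1 fun h => hexA ⟨i, hi, hi0, h⟩)
  have hB' : ∀ i ∈ nbrPos P.reverse v, i % 2 = 0 → i = P.length := fun i hi hi0 =>
    (hB i hi).2.antisymm (not_lt.1 fun h => hexB ⟨i, hi, hi0, h⟩)
  have hcardA := card_le_of_forall_odd_or_eq (fun i hi => (hA i hi).2) hA'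
  have hcardB := card_le_of_forall_odd_or_eq (fun i hi => (hB i hi).2) hB'
  have hmemA := fun i => mem_iff_odd_or_eq (i := i) hA hA' (by omega)
  have hmemB := fun i => mem_iff_odd_or_eq (i := i) hB hB' (by omega)
  obtain h2 | h4 : P.length = 2 ∨ 4 ≤ P.length := by
    have := hP.hasPathIn.two_le hP.isAttachedPair.1
    omega
  · have h := hasPathIn_of_mem_nbrPos hP.isPath ((hmemA 2).2 (by omega))
    exact hP.hasLongDetour_of_hasPathIn hP.isAttachedPair (by omega) (hasPathIn_support hP.isPath)
      (by simpa [h2] using h)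
  · refine hP.hasLongDetour_of_odd_chords hSH hdeg ih h4 (by omega) (fun i hi => ?_)
      (fun i hi => ?_) (by omega) (by omega)
    · have := (hmemA i).symm.trans mem_nbrPos
      grind
    · have := (hmemB (P.length - i)).symm.trans mem_nbrPos
      rw [Walk.getVert_reverse, Walk.length_reverse, Nat.sub_sub_self hi] at this
      grind

end IsLongestAttached

theorem IsFragment.hasLongDetour [Fintype V] {k : ℕ} (h2 : TwoConnected G)
    (hSH : IsFragment G S H) (hS : S.Nontrivial) (hH : H.Nontrivial)
    (hdeg : ∀ w ∈ H, k ≤ (G.neighborSet w).ncard) : HasLongDetour G S H k := by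
  induction H using WellFoundedLT.induction generalizing S with
  | ind H IH =>
    have ih : ∀ T K, K ⊂ H → IsFragment G T K → T.Nontrivial → K.Nontrivial →
        HasLongDetour G T K k := fun T K hKH hTK hT hK =>
      IH K hKH hTK hT hK fun w hw => hdeg w (hKH.1 hw)
    obtain ⟨a, ha, b, hb, hab⟩ := exists_isAttachedPair h2 hSH hS hH
    obtain ⟨u, v, P, hP⟩ := exists_isLongestAttached hSH.connected ha hb hab
    by_cases hu : ∃ w ∈ H, w ∉ P.support ∧ G.Adj u w
    · obtain ⟨w, hw, hwP, huw⟩ := hu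
      exact hP.hasLongDetour_of_adj_start hSH hdeg ih hw hwP huw
    by_cases hv : ∃ w ∈ H, w ∉ P.support ∧ G.Adj v w
    · obtain ⟨w, hw, hwP, hvw⟩ := hv
      exact hP.reverse.hasLongDetour_of_adj_start hSH hdeg ih hw (by simpa using hwP) hvw
    exact hP.hasLongDetour_of_ends hSH hdeg ih
      (fun y hy huy => by_contra fun hyP => hu ⟨y, hy, hyP, huy⟩)
      fun y hy hvy => by_contra fun hyP => hv ⟨y, hy, hyP, hvy⟩

/-! ### Longest odd cycles -/

section OddCycles

variable {u v : V}

theorem exists_isPath_or_exists_odd_isCycle (p : G.Walk u v) :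
    (∃ q : G.Walk u v, q.IsPath ∧ q.length % 2 = p.length % 2) ∨
      ∃ (x : V) (C : G.Walk x x), C.IsCycle ∧ Odd C.length := by
  induction p with
  | nil => exact .inl ⟨.nil, .nil, rfl⟩
  | @cons u w v huw p ih =>
    refine ih.elim (fun ⟨q, hq, hpar⟩ => ?_) .inr
    by_cases hu : u ∈ q.support
    · have hlen : (q.takeUntil u hu).length + (q.dropUntil u hu).length = q.length := by
        rw [← Walk.length_append, q.take_spec hu]
      rcases Nat.even_or_odd (q.takeUntil u hu).length with heven | hodd
      · have hpath := hasPathIn_support (hq.takeUntil hu)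
        have := hpath.two_le huw.ne'
        obtain ⟨r, hr⟩ := heven
        obtain ⟨C, hC, hCl⟩ := hpath.exists_isCycle huw (by omega)
        exact .inr ⟨_, C, hC, r, by omega⟩
      · obtain ⟨r, hr⟩ := hodd
        exact .inl ⟨q.dropUntil u hu, hq.dropUntil hu, by rw [Walk.length_cons]; omega⟩
    · exact .inl ⟨.cons huw q, hq.cons hu, by simp only [Walk.length_cons]; omega⟩

theorem exists_odd_isCycle_of_not_colorable_two (h : ¬G.Colorable 2) :
    ∃ (v : V) (C : G.Walk v v), C.IsCycle ∧ Odd C.length := by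
  rw [two_colorable_iff_forall_loop_even] at h
  push Not at h
  obtain ⟨u, p, hp⟩ := h
  refine (exists_isPath_or_exists_odd_isCycle p).resolve_left fun ⟨q, hq, hpar⟩ => ?_
  rw [Walk.length_eq_zero_iff.2 (Walk.isPath_iff_nil.1 hq)] at hpar
  exact hp (Nat.even_iff.2 hpar.symm)

theorem adj_getVert_val_add_one (C : G.Walk v v) [NeZero C.length] (x : ZMod C.length) :
    G.Adj (C.getVert x.val) (C.getVert (x + 1).val) := by
  have hval : (x + 1).val = (x.val + 1) % C.length := by
    rw [← ZMod.val_natCast, Nat.cast_add, ZMod.natCast_zmod_val, Nat.cast_one]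
  have hadj := C.adj_getVert_succ (ZMod.val_lt x)
  rcases (Nat.succ_le_of_lt (ZMod.val_lt x)).lt_or_eq with hlt | heq
  · rwa [hval, Nat.mod_eq_of_lt hlt]
  · rw [Nat.succ_eq_add_one] at heq
    rw [heq, Walk.getVert_length] at hadj
    rwa [hval, heq, Nat.mod_self, Walk.getVert_zero]

/-- `f` lists the vertices of a longest odd cycle of `G` in cyclic order. -/
structure IsLongestOddCycle (G : SimpleGraph V) {c : ℕ} (f : ZMod c → V) : Prop where
  injective : f.Injective
  adj : ∀ x, G.Adj (f x) (f (x + 1))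
  odd : Odd c
  le : ∀ {v : V} (C : G.Walk v v), C.IsCycle → Odd C.length → C.length ≤ c

theorem exists_isLongestOddCycle [Finite V] (h : ¬G.Colorable 2) :
    ∃ (v : V) (C : G.Walk v v) (f : ZMod C.length → V), C.IsCycle ∧ IsLongestOddCycle G f := by
  have := Fintype.ofFinite V
  let IsOddCycleLength (n : ℕ) : Prop :=
    ∃ (v : V) (C : G.Walk v v), C.IsCycle ∧ Odd C.length ∧ C.length = n
  have hbound : ∀ n, IsOddCycleLength n → n ≤ Fintype.card V := by
    rintro _ ⟨v, C, hC, -, rfl⟩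
    have := hC.isPath_tail.length_lt
    have := C.length_tail_add_one hC.not_nil
    omega
  obtain ⟨v, C, hC, hodd⟩ := exists_odd_isCycle_of_not_colorable_two h
  obtain ⟨m, ⟨v, C, hC, hodd, rfl⟩, hmax⟩ :
      ∃ m, IsOddCycleLength m ∧ ∀ n, IsOddCycleLength n → n ≤ m :=
    have hlen : IsOddCycleLength C.length := ⟨v, C, hC, hodd, rfl⟩
    ⟨_, Nat.findGreatest_spec (hbound _ hlen) hlen, fun n hn =>
      Nat.le_findGreatest (hbound n hn) hn⟩
  have : NeZero C.length := ⟨hC.three_le_length.trans_lt' (by omega) |>.ne'⟩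
  refine ⟨v, C, fun x => C.getVert x.val, hC, fun x y hxy => ?_, adj_getVert_val_add_one C,
    hodd, fun D hD hDodd => hmax _ ⟨_, D, hD, hDodd, rfl⟩⟩
  exact ZMod.val_injective _ (hC.getVert_injOn' (Nat.le_sub_one_of_lt (ZMod.val_lt x))
    (Nat.le_sub_one_of_lt (ZMod.val_lt y)) hxy)

end OddCycles

section LongestOddCycle

variable {c k m n : ℕ} {f : ZMod c → V} {H A : Set V} {u v w : V} {x y : ZMod c}

/-- The positions along the cyclic sequence `f` of the neighbours of `u`. -/
noncomputable def cyclePos [NeZero c] (G : SimpleGraph V) (f : ZMod c → V) (u : V) :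
    Finset (ZMod c) :=
  {x | G.Adj u (f x)}

theorem mem_cyclePos [NeZero c] : x ∈ cyclePos G f u ↔ G.Adj u (f x) := by
  simp [cyclePos]

theorem IsAttachedPair.exists_cyclePos [NeZero c] (h : IsAttachedPair G (Set.range f) u v) :
    ∃ i ∈ cyclePos G f u, ∃ j ∈ cyclePos G f v, i ≠ j := by
  obtain ⟨-, _, ⟨i, rfl⟩, _, ⟨j, rfl⟩, hij, hui, hvj⟩ := h
  exact ⟨i, mem_cyclePos.2 hui, j, mem_cyclePos.2 hvj, ne_of_apply_ne f hij⟩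

namespace IsLongestOddCycle

variable (hf : IsLongestOddCycle G f)

include hf

theorem neZero : NeZero c :=
  ⟨hf.odd.pos.ne'⟩

theorem card_cyclePos [NeZero c] : (cyclePos G f u).card = degIn G (Set.range f) u := by
  rw [degIn, ← Finset.card_image_of_injective _ hf.injective, ← Set.ncard_coe_finset]
  congr 1
  ext y
  simp only [Finset.coe_image, Set.mem_image, Finset.mem_coe, mem_cyclePos, Set.mem_inter_iff,
    mem_neighborSet, Set.mem_range]
  constructor
  · rintro ⟨x, hux, rfl⟩
    exact ⟨hux, x, rfl⟩
  · rintro ⟨huy, x, rfl⟩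
    exact ⟨x, huy, rfl⟩

theorem le_of_hasPathIn (h : HasPathIn G A u v n) (hvu : G.Adj v u) (hn : Odd n) : n ≤ c := by
  have := h.two_le hvu.ne'
  obtain ⟨r, hr⟩ := hn
  obtain ⟨C, hC, rfl⟩ := h.exists_isCycle hvu (by omega)
  exact hf.le C hC ⟨r, hr⟩

theorem injOn_add_natCast {a b : ℕ} (hb : b < a + c) :
    Set.InjOn (fun i : ℕ => f (x + i)) (Set.Icc a b) := fun i hi j hj hij => by
  have hmod := (ZMod.natCast_eq_natCast_iff i j c).1 (add_left_cancel (hf.injective hij))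
  obtain ⟨hai, hib⟩ := hi
  obtain ⟨haj, hjb⟩ := hj
  exact hmod.eq_of_abs_lt (abs_lt.2 (by omega))

theorem hasPathIn_arc {a b : ℕ} (hab : a ≤ b) (hb : b < a + c) :
    HasPathIn G ((fun i : ℕ => f (x + i)) '' Set.Icc a b) (f (x + a)) (f (x + b)) (b + 1 - a) :=
  .image_Icc hab (fun i _ _ => by simpa [add_assoc] using hf.adj (x + i)) (hf.injOn_add_natCast hb)

theorem lt_val_sub_of_hasLink (hH : Disjoint (Set.range f) H) (h : HasLink G H (f x) (f y) n)
    (hxy : x ≠ y) (hpar : (y - x).val % 2 = (n + 1) % 2) : n < (y - x).val := by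
  have := hf.neZero
  obtain ⟨u, v, huv, hxu, hyv⟩ := h
  have harc := hf.hasPathIn_arc (x := y) (x - y).val.zero_le
    ((x - y).val_lt.trans_eq (zero_add c).symm)
  rw [ZMod.natCast_zmod_val, add_sub_cancel, Nat.cast_zero, add_zero] at harc
  have hsum := val_sub_add_val_sub hxy
  obtain ⟨r, hr⟩ := hf.odd
  have := hf.le_of_hasPathIn (harc.append huv hxu (hH.mono_left ?_)) hyv.symm
    (Nat.odd_iff.2 (by omega))
  · omega
  · rintro _ ⟨i, -, rfl⟩
    exact ⟨_, rfl⟩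

theorem lt_val_sub_of_hasPathIn [NeZero c] (hH : Disjoint (Set.range f) H)
    (h : HasPathIn G H u v n) (hx : x ∈ cyclePos G f u) (hy : y ∈ cyclePos G f v) (hxy : x ≠ y) :
    ((y - x).val % 2 = (n + 1) % 2 → n < (y - x).val) ∧
      ((x - y).val % 2 = (n + 1) % 2 → n < (x - y).val) :=
  have hlink : HasLink G H (f x) (f y) n :=
    ⟨u, v, h, (mem_cyclePos.1 hx).symm, (mem_cyclePos.1 hy).symm⟩
  ⟨hf.lt_val_sub_of_hasLink hH hlink hxy, hf.lt_val_sub_of_hasLink hH hlink.symm hxy.symm⟩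

theorem two_mul_le_of_hasLongDetour (hH : Disjoint (Set.range f) H)
    (h : HasLongDetour G (Set.range f) H k) : 2 * k ≤ c + 1 := by
  have := hf.neZero
  obtain ⟨r, hr⟩ := hf.odd
  cases h with
  | link hx hy hxy h hk =>
    obtain ⟨x, rfl⟩ := hx
    obtain ⟨y, rfl⟩ := hy
    have hxy := ne_of_apply_ne f hxy
    have := hf.lt_val_sub_of_hasLink hH h hxy
    have := hf.lt_val_sub_of_hasLink hH h.symm hxy.symm
    have := val_sub_add_val_sub hxy
    have := ZMod.val_lt (y - x)
    have := ZMod.val_lt (x - y)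
    omega
  | links hx hy hxy h h' hpar hk =>
    obtain ⟨x, rfl⟩ := hx
    obtain ⟨y, rfl⟩ := hy
    have hxy := ne_of_apply_ne f hxy
    have := hf.lt_val_sub_of_hasLink hH h hxy
    have := hf.lt_val_sub_of_hasLink hH h.symm hxy.symm
    have := hf.lt_val_sub_of_hasLink hH h' hxy
    have := hf.lt_val_sub_of_hasLink hH h'.symm hxy.symm
    have := val_sub_add_val_sub hxy
    omega
  | path huv h hk =>
    have := card_add_card_add_two_mul_half_le hf.odd
      (fun i hi j hj => hf.lt_val_sub_of_hasPathIn hH h hi hj) (h.two_le huv.1) huv.exists_cyclePos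
    rw [hf.card_cyclePos, hf.card_cyclePos] at this
    omega
  | @paths u v n n' huv h h' hpar hk hk' =>
    have := h.one_le
    have := h'.one_le
    have := card_add_card_add_two_mul_le_of_lt_val_sub (n := min n n') (by omega)
      huv.exists_cyclePos fun i hi j hj hij => by
        have := hf.lt_val_sub_of_hasPathIn hH h hi hj hij
        have := hf.lt_val_sub_of_hasPathIn hH h' hi hj hij
        omega
    rw [hf.card_cyclePos, hf.card_cyclePos] at this
    omega

theorem exists_ne_adj_adj (y : ZMod c) (hk : c + 2 ≤ 2 * k) (hw : k ≤ degIn G (Set.range f) w) :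
    ∃ x ≠ y, G.Adj w (f x) ∧ G.Adj w (f (x + 1)) := by
  have := hf.neZero
  let next := (cyclePos G f w).map (Equiv.subRight 1).toEmbedding
  have hcard : next.card = (cyclePos G f w).card := Finset.card_map _
  have hunion : (cyclePos G f w ∪ next).card ≤ c :=
    (Finset.card_le_univ _).trans_eq (ZMod.card c)
  have := Finset.card_union_add_card_inter (cyclePos G f w) next
  rw [← hf.card_cyclePos] at hw
  obtain ⟨x, hx, hxy⟩ := Finset.exists_mem_ne (s := cyclePos G f w ∩ next) (by omega) y
  obtain ⟨hx, hx'⟩ := Finset.mem_inter.1 hx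
  obtain ⟨z, hz, rfl⟩ := Finset.mem_map.1 hx'
  exact ⟨_, hxy, mem_cyclePos.1 hx, by simpa using mem_cyclePos.1 hz⟩

theorem exists_disjoint_arcs (hxy : x ≠ y) : ∃ A B : Set V, ∃ m n : ℕ,
    A ⊆ Set.range f ∧ B ⊆ Set.range f ∧ Disjoint A B ∧ HasPathIn G A (f (x + 1)) (f y) m ∧
      HasPathIn G B (f (y + 1)) (f x) n ∧ m + n = c := by
  have := hf.neZero
  have hpos : 0 < (y - x).val := ZMod.val_pos.2 (sub_ne_zero.2 hxy.symm)
  have hlt := ZMod.val_lt (y - x)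
  have hy : x + ((y - x).val : ZMod c) = y := by simp
  have hxy := hf.hasPathIn_arc (x := x) (a := 1) (b := (y - x).val) hpos (by omega)
  have hyx := hf.hasPathIn_arc (x := x) (a := (y - x).val + 1) (b := c) (by omega) (by omega)
  rw [hy, Nat.cast_one] at hxy
  rw [Nat.cast_add, Nat.cast_one, ← add_assoc, hy, ZMod.natCast_self, add_zero] at hyx
  refine ⟨_, _, _, _, ?_, ?_, ?_, hxy, hyx, by omega⟩
  · rintro _ ⟨i, -, rfl⟩
    exact ⟨_, rfl⟩
  · rintro _ ⟨i, -, rfl⟩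
    exact ⟨_, rfl⟩
  · rw [Set.disjoint_left]
    rintro _ ⟨i, ⟨hi, hi'⟩, rfl⟩ ⟨j, ⟨hj, hj'⟩, hij⟩
    have := hf.injOn_add_natCast (a := 1) (b := c) (by omega) ⟨by omega, hj'⟩ ⟨hi, by omega⟩ hij
    omega

theorem not_adj_succ_of_adj_succ (hu : u ∉ Set.range f) (hv : v ∉ Set.range f) (huv : u ≠ v)
    (hxy : x ≠ y) (hux : G.Adj u (f x)) (hux' : G.Adj u (f (x + 1))) (hvy : G.Adj v (f y)) :
    ¬G.Adj v (f (y + 1)) := fun hvy' => by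
  obtain ⟨A, B, m, n, hA, hB, hAB, hxy, hyx, hmn⟩ := hf.exists_disjoint_arcs hxy
  have hAv : Disjoint A {v} := Set.disjoint_singleton_right.2 fun h => hv (hA h)
  have hvB : Disjoint {v} B := Set.disjoint_singleton_left.2 fun h => hv (hB h)
  have hABu : Disjoint (A ∪ {v} ∪ B) {u} := Set.disjoint_singleton_right.2 <| by
    rintro ((h | rfl) | h)
    exacts [hu (hA h), huv rfl, hu (hB h)]
  have hpath := (((hxy.append (.single (Set.mem_singleton v)) hvy.symm hAv).append hyx hvy'
    (hAB.union_left hvB)).append (.single (Set.mem_singleton u)) hux.symm hABu)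
  obtain ⟨r, hr⟩ := hf.odd
  have := hf.le_of_hasPathIn hpath hux' ⟨r + 1, by omega⟩
  omega

theorem two_mul_le_of_independent (hu : u ∉ Set.range f) (hv : v ∉ Set.range f) (huv : u ≠ v)
    (hku : k ≤ degIn G (Set.range f) u) (hkv : k ≤ degIn G (Set.range f) v) : 2 * k ≤ c + 1 := by
  by_contra! hk
  obtain ⟨x, -, hux, hux'⟩ := hf.exists_ne_adj_adj 0 (by omega) hku
  obtain ⟨y, hyx, hvy, hvy'⟩ := hf.exists_ne_adj_adj x (by omega) hkv
  exact hf.not_adj_succ_of_adj_succ hu hv huv hyx.symm hux hux' hvy hvy'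

theorem two_mul_le [Fintype V] (h2 : TwoConnected G) (hdeg : ∀ w, k ≤ (G.neighborSet w).ncard)
    (hcard : c + 2 ≤ Fintype.card V) : 2 * k ≤ c + 1 := by
  have := hf.neZero
  by_cases hedge : ∃ a ∉ Set.range f, ∃ b ∉ Set.range f, G.Adj a b
  · obtain ⟨a, ha, b, hb, hab⟩ := hedge
    obtain ⟨H, haH, hH⟩ := exists_isFragment ha
    have hbH := (hH.mem_or_mem a haH b hab).resolve_right hb
    exact hf.two_mul_le_of_hasLongDetour hH.disjoint <| hH.hasLongDetour h2
      ⟨_, ⟨0, rfl⟩, _, ⟨0 + 1, rfl⟩, (hf.adj 0).ne⟩ ⟨a, haH, b, hbH, hab.ne⟩ fun w _ => hdeg w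
  · push Not at hedge
    have hdegIn : ∀ w ∉ Set.range f, k ≤ degIn G (Set.range f) w := fun w hw => by
      have hsub : G.neighborSet w ⊆ Set.range f := fun y hwy =>
        not_not.1 fun hy => hedge w hw y hy hwy
      rw [degIn, Set.inter_eq_left.2 hsub]
      exact hdeg w
    have hcompl : 1 < ((Set.range f)ᶜ).ncard := by
      have := Set.ncard_add_ncard_compl (Set.range f)
      rw [Set.ncard_range_of_injective hf.injective, Nat.card_zmod, Nat.card_eq_fintype_card]
        at this
      omega
    obtain ⟨u, hu, v, hv, huv⟩ := Set.one_lt_ncard_iff_nontrivial.1 hcompl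
    exact hf.two_mul_le_of_independent hu hv huv (hdegIn u hu) (hdegIn v hv)

end IsLongestOddCycle

end LongestOddCycle

end VossZuluaga

theorem voss_zuluaga_odd_general {V : Type*} [Fintype V] (G : SimpleGraph V)
    (h2 : TwoConnected G) (hnb : ¬ G.Colorable 2) :
    ∃ (v : V) (c : G.Walk v v), c.IsCycle ∧ Odd c.length ∧
      min (2 * G.minDegree) (Fintype.card V) ≤ c.length + 1 := by
  have hdeg : ∀ w, G.minDegree ≤ (G.neighborSet w).ncard := fun w => by
    rw [Set.ncard_eq_toFinset_card', ← neighborFinset_def, card_neighborFinset_eq_degree]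
    exact G.minDegree_le_degree w
  obtain ⟨v, C, f, hC, hf⟩ := VossZuluaga.exists_isLongestOddCycle hnb
  refine ⟨v, C, hC, hf.odd, min_le_iff.2 (or_iff_not_imp_right.2 fun hcard => ?_)⟩
  exact hf.two_mul_le h2 hdeg (by omega)

/-- Voss–Zuluaga (odd case): a 2-connected non-bipartite graph with
`δ(G) ≥ k ≥ 3` on at least `2k+1` vertices contains an odd cycle of length at
least `2k-1`. -/
theorem voss_zuluaga_odd {V : Type*} [Fintype V] (G : SimpleGraph V)
    (k : ℕ) (hk : 3 ≤ k) (h2 : TwoConnected G) (hnb : ¬ G.Colorable 2)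
    (hδ : k ≤ G.minDegree) (hn : 2 * k + 1 ≤ Fintype.card V) :
    ∃ (v : V) (c : G.Walk v v), c.IsCycle ∧ Odd c.length ∧ 2 * k - 1 ≤ c.length := by
  obtain ⟨v, c, hc, hodd, hlen⟩ := voss_zuluaga_odd_general G h2 hnb
  exact ⟨v, c, hc, hodd, by omega⟩
end

section
/- Let $G$ be a graph on $n$ vertices and $H$ an induced subgraph on $h$ vertices obtained from $G$ by successively deleting vertices each of degree at most $\frac{n}{8}$ in the current graph. Then $\rho^2(G) \leq \rho^2(H) + \frac{(n-h)n}{4}$. -/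
open SimpleGraph

attribute [local instance] Classical.propDecidable

/-!
Let `x` be an eigenvector of a symmetric matrix `A` for its largest eigenvalue `r`, let `v` be an
index with `A v v = 0`, and let `s` be the squared norm of `x` off `v`. Reading the eigenvalue
equation in row `v`, the quadratic form of the principal submatrix off `v` takes the value
`r * s - r * x v ^ 2` on the restriction of `x`, hence `r * s - r * x v ^ 2 ≤ q * s` for the largest
eigenvalue `q` of that submatrix, while Cauchy–Schwarz in row `v` gives `r ^ 2 * x v ^ 2 ≤ d * s`
for the squared norm `d` of that row. Together `r ^ 2 - d ≤ r * q ≤ (r ^ 2 + q ^ 2) / 2`, that is,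
`r ^ 2 ≤ q ^ 2 + 2 * d`. For an adjacency matrix `d` is the degree of `v`; iterate.
-/

open Matrix

section MaxEigenvalue

variable {n : Type*} [Fintype n]

/-- The largest eigenvalue of a real symmetric matrix, as the supremum of its real spectrum; the
value is `0` when `n` is empty. -/
noncomputable def maxEigenvalue (A : Matrix n n ℝ) : ℝ :=
  sSup (spectrum ℝ A)

lemma maxEigenvalue_submatrix_equiv {m : Type*} [Fintype m] (A : Matrix n n ℝ) (e : m ≃ n) :
    maxEigenvalue (A.submatrix e e) = maxEigenvalue A :=
  congrArg sSup (AlgEquiv.spectrum_eq (reindexAlgEquiv ℝ ℝ e.symm) A)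

lemma le_maxEigenvalue {A : Matrix n n ℝ} {μ : ℝ} (hμ : μ ∈ spectrum ℝ A) : μ ≤ maxEigenvalue A :=
  le_csSup A.finite_spectrum.bddAbove hμ

namespace maxEigenvalue

variable {A : Matrix n n ℝ}

lemma exists_eigenvector [Nonempty n] (hA : A.IsSymm) :
    ∃ x : n → ℝ, x ≠ 0 ∧ A *ᵥ x = maxEigenvalue A • x := by
  have hA' : A.IsHermitian := by rwa [IsHermitian, conjTranspose_eq_transpose_of_trivial]
  have hmem : maxEigenvalue A ∈ spectrum ℝ A :=
    Set.Nonempty.csSup_mem ⟨_, hA'.eigenvalues_mem_spectrum_real (Classical.arbitrary n)⟩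
      A.finite_spectrum
  rw [← spectrum_toLin', ← Module.End.hasEigenvalue_iff_mem_spectrum] at hmem
  obtain ⟨x, hx⟩ := hmem.exists_hasEigenvector
  exact ⟨x, hx.2, by simpa only [toLin'_apply] using hx.apply_eq_smul⟩

lemma posSemidef_algebraMap_sub (hA : A.IsSymm) :
    (algebraMap ℝ (Matrix n n ℝ) (maxEigenvalue A) - A).PosSemidef := by
  rw [posSemidef_iff_isHermitian_and_spectrum_nonneg, ← spectrum.singleton_sub_eq]
  constructor
  · rw [IsHermitian, conjTranspose_eq_transpose_of_trivial, transpose_sub, hA.eq,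
      algebraMap_eq_diagonal, diagonal_transpose]
  · rintro _ ⟨_, rfl, μ, hμ, rfl⟩
    exact sub_nonneg.2 (le_maxEigenvalue hμ)

lemma dotProduct_mulVec_le (hA : A.IsSymm) (x : n → ℝ) :
    x ⬝ᵥ A *ᵥ x ≤ maxEigenvalue A * (x ⬝ᵥ x) := by
  have h := (posSemidef_algebraMap_sub hA).dotProduct_mulVec_nonneg x
  rw [sub_mulVec, Algebra.algebraMap_eq_smul_one, smul_mulVec, one_mulVec, star_trivial,
    dotProduct_sub, dotProduct_smul, smul_eq_mul] at h
  exact sub_nonneg.1 h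

lemma diag_le (hA : A.IsSymm) (i : n) : A i i ≤ maxEigenvalue A := by
  simpa using dotProduct_mulVec_le hA (Pi.single i 1)

end maxEigenvalue

end MaxEigenvalue

section DeleteIndex

variable {n R : Type*} [Fintype n]

lemma dotProduct_self_eq_sq_add_subtype_ne [CommSemiring R] (x : n → R) (v : n) :
    x ⬝ᵥ x = x v ^ 2 + (fun w : {w // w ≠ v} ↦ x w) ⬝ᵥ (fun w ↦ x w) := by
  simp only [dotProduct, ← pow_two]
  exact Fintype.sum_eq_add_sum_subtype_ne _ v

lemma dotProduct_mulVec_add_eq_subtype_ne [CommSemiring R] {A : Matrix n n R} (hA : A.IsSymm)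
    (x : n → R) (v : n) :
    x ⬝ᵥ A *ᵥ x + A v v * x v ^ 2 =
      (fun w : {w // w ≠ v} ↦ x w) ⬝ᵥ
        A.submatrix Subtype.val Subtype.val *ᵥ (fun w : {w // w ≠ v} ↦ x w) +
      2 * x v * (A *ᵥ x) v := by
  have hrow (w : n) : (A *ᵥ x) w = A v w * x v + ∑ u : {u // u ≠ v}, A w u * x u := by
    rw [← hA.apply]
    exact Fintype.sum_eq_add_sum_subtype_ne _ v
  have hcolumn : A v v * x v ^ 2 + ∑ w : {w // w ≠ v}, x w * (A v w * x v) =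
      x v * (A *ᵥ x) v := by
    rw [hrow v, mul_add, Finset.mul_sum]
    congr 1
    · ring
    · exact Finset.sum_congr rfl fun _ _ ↦ by ring
  calc x ⬝ᵥ A *ᵥ x + A v v * x v ^ 2
      = x v * (A *ᵥ x) v + ∑ w : {w // w ≠ v}, x w * (A *ᵥ x) w + A v v * x v ^ 2 := by
        rw [dotProduct, Fintype.sum_eq_add_sum_subtype_ne _ v]
    _ = x v * (A *ᵥ x) v +
          (A v v * x v ^ 2 + ∑ w : {w // w ≠ v}, x w * (A v w * x v)) +
          ∑ w : {w // w ≠ v}, x w * ∑ u : {u // u ≠ v}, A w u * x u := by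
        rw [Finset.sum_congr rfl fun w _ ↦ by rw [hrow w, mul_add], Finset.sum_add_distrib]
        ring
    _ = _ := by
        rw [hcolumn, ← two_mul, ← mul_assoc, add_comm]
        rfl

lemma dotProduct_sq_le_of_apply_eq_zero [CommRing R] [LinearOrder R] [IsStrictOrderedRing R]
    {a : n → R} {v : n} (hv : a v = 0) (x : n → R) :
    (a ⬝ᵥ x) ^ 2 ≤ (∑ w, a w ^ 2) * ((fun w : {w // w ≠ v} ↦ x w) ⬝ᵥ (fun w ↦ x w)) := by
  have hdot : a ⬝ᵥ x = ∑ w : {w // w ≠ v}, a w * x w := by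
    rw [dotProduct, Fintype.sum_eq_add_sum_subtype_ne _ v, hv, zero_mul, zero_add]
  have hnorm : ∑ w, a w ^ 2 = ∑ w : {w // w ≠ v}, a w ^ 2 := by
    rw [Fintype.sum_eq_add_sum_subtype_ne _ v, hv, zero_pow two_ne_zero, zero_add]
  rw [hdot, hnorm, dotProduct]
  simp only [← pow_two]
  exact Finset.sum_mul_sq_le_sq_mul_sq _ _ _

end DeleteIndex

theorem maxEigenvalue_sq_le_submatrix_add {n : Type*} [Fintype n] {A : Matrix n n ℝ}
    (hA : A.IsSymm) {v : n} (hv : A v v = 0) :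
    maxEigenvalue A ^ 2 ≤
      maxEigenvalue (A.submatrix (Subtype.val : {w // w ≠ v} → n) Subtype.val) ^ 2 +
        2 * ∑ w, A v w ^ 2 := by
  have : Nonempty n := ⟨v⟩
  obtain ⟨x, hx0, hx⟩ := maxEigenvalue.exists_eigenvector hA
  have hr : 0 ≤ maxEigenvalue A := hv.ge.trans (maxEigenvalue.diag_le hA v)
  set r := maxEigenvalue A
  set B := A.submatrix (Subtype.val : {w // w ≠ v} → n) Subtype.val
  set q := maxEigenvalue B
  set d := ∑ w, A v w ^ 2
  set y : {w // w ≠ v} → ℝ := fun w ↦ x w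
  have hd : 0 ≤ d := Finset.sum_nonneg fun _ _ ↦ sq_nonneg _
  have hnorm : x ⬝ᵥ x = x v ^ 2 + y ⬝ᵥ y := dotProduct_self_eq_sq_add_subtype_ne x v
  have hrow : (A *ᵥ x) v = r * x v := by rw [hx, Pi.smul_apply, smul_eq_mul]
  have hquad : y ⬝ᵥ B *ᵥ y = r * (y ⬝ᵥ y) - r * x v ^ 2 := by
    have h := dotProduct_mulVec_add_eq_subtype_ne hA x v
    rw [hrow, hx, hv, dotProduct_smul, smul_eq_mul, hnorm] at h
    linarith
  have hcauchy : (r * x v) ^ 2 ≤ d * (y ⬝ᵥ y) :=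
    hrow ▸ dotProduct_sq_le_of_apply_eq_zero hv x
  have hkey : (r ^ 2 - d) * (y ⬝ᵥ y) ≤ r * q * (y ⬝ᵥ y) :=
    calc (r ^ 2 - d) * (y ⬝ᵥ y) ≤ r * (y ⬝ᵥ B *ᵥ y) := by rw [hquad]; linarith
      _ ≤ r * (q * (y ⬝ᵥ y)) := by
        gcongr
        exact maxEigenvalue.dotProduct_mulVec_le (hA.submatrix _) y
      _ = r * q * (y ⬝ᵥ y) := (mul_assoc _ _ _).symm
  have hs : 0 ≤ y ⬝ᵥ y := Finset.sum_nonneg fun _ _ ↦ mul_self_nonneg _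
  obtain hs | hs := hs.eq_or_lt
  · have hxv : x v ≠ 0 := fun h ↦
      hx0 (dotProduct_self_eq_zero.1 (by rw [hnorm, ← hs, h, zero_pow two_ne_zero, add_zero]))
    have hr0 : r = 0 := by simpa [← hs, hxv] using hcauchy
    rw [hr0]
    linarith [sq_nonneg q]
  · linarith [le_of_mul_le_mul_right hkey hs, two_mul_le_add_sq r q]

lemma ncard_neighborSet_induce {V : Type*} (G : SimpleGraph V) (S : Set V) (v : S) :
    ((G.induce S).neighborSet v).ncard = (G.neighborSet v ∩ S).ncard := by
  rw [← Set.ncard_image_of_injective _ Subtype.val_injective]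
  congr 1
  ext w
  simp [and_comm]

section SpectralRadius

variable {V W : Type*} [Fintype V] [Fintype W]

lemma specRad_eq_maxEigenvalue_adjMatrix (G : SimpleGraph V) :
    specRad G = maxEigenvalue (G.adjMatrix ℝ) := by
  simp only [specRad, maxEigenvalue, Module.End.hasEigenvalue_iff_mem_spectrum, spectrum_toLin',
    Set.ofPred_mem_eq]

lemma specRad_eq_of_iso {G : SimpleGraph V} {H : SimpleGraph W} (e : G ≃g H) :
    specRad G = specRad H := by
  rw [specRad_eq_maxEigenvalue_adjMatrix, specRad_eq_maxEigenvalue_adjMatrix,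
    ← e.toEmbedding.submatrix_adjMatrix ℝ]
  exact maxEigenvalue_submatrix_equiv _ e.toEquiv

lemma specRad_induce_of_eq_univ (G : SimpleGraph V) {S : Set V} (hS : S = Set.univ) :
    specRad (G.induce S) = specRad G :=
  specRad_eq_of_iso (hS ▸ induceUnivIso G : G.induce S ≃g G)

lemma sum_adjMatrix_sq_eq_ncard_neighborSet (G : SimpleGraph V) (v : V) :
    ∑ w, G.adjMatrix ℝ v w ^ 2 = (G.neighborSet v).ncard := by
  rw [← Nat.card_coe_set_eq, Nat.card_eq_fintype_card, card_neighborSet_eq_degree,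
    ← card_neighborFinset_eq_degree, neighborFinset_eq_filter]
  simp [adjMatrix_apply]

theorem specRad_sq_le_of_range_eq_compl_singleton {G : SimpleGraph V} {H : SimpleGraph W}
    (f : H ↪g G) {v : V} (hf : Set.range f = {v}ᶜ) :
    specRad G ^ 2 ≤ specRad H ^ 2 + 2 * (G.neighborSet v).ncard := by
  let e : W ≃ {w // w ≠ v} := (Equiv.ofInjective f f.injective).trans (Equiv.setCongr hf)
  have hH : maxEigenvalue ((G.adjMatrix ℝ).submatrix (Subtype.val : {w // w ≠ v} → V) Subtype.val) =
      specRad H := by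
    rw [specRad_eq_maxEigenvalue_adjMatrix, ← f.submatrix_adjMatrix ℝ,
      ← maxEigenvalue_submatrix_equiv _ e]
    rfl
  rw [← sum_adjMatrix_sq_eq_ncard_neighborSet, specRad_eq_maxEigenvalue_adjMatrix, ← hH]
  exact maxEigenvalue_sq_le_submatrix_add G.isSymm_adjMatrix (by simp)

lemma specRad_induce_sq_le_of_eq_sdiff_singleton (G : SimpleGraph V) {S T : Set V} {v : V}
    (hv : v ∈ S) (hT : T = S \ {v}) :
    specRad (G.induce S) ^ 2 ≤
      specRad (G.induce T) ^ 2 + 2 * (G.neighborSet v ∩ S).ncard := by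
  rw [← ncard_neighborSet_induce G S ⟨v, hv⟩]
  have hTS : T ⊆ S := hT.trans_subset Set.sdiff_subset
  refine specRad_sq_le_of_range_eq_compl_singleton (G.induceHomOfLE hTS) ?_
  ext w
  simp [hT, Subtype.ext_iff]

end SpectralRadius

lemma ncard_add_eq_natCard_of_eq_sdiff_singleton {V : Type*} [Finite V]
    {S : ℕ → Set V} {v : ℕ → V} {k : ℕ} (hS0 : S 0 = Set.univ)
    (hstep : ∀ i < k, v i ∈ S i ∧ S (i + 1) = S i \ {v i}) :
    (S k).ncard + k = Nat.card V := by
  induction k with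
  | zero => rw [hS0, Set.ncard_univ, add_zero]
  | succ k ih =>
    obtain ⟨hv, hS⟩ := hstep k k.lt_succ_self
    rw [hS, ← ih fun i hi ↦ hstep i (hi.trans k.lt_succ_self),
      ← Set.ncard_sdiff_singleton_add_one hv]
    ring

section Deletion

variable {V : Type*} [Fintype V] (G : SimpleGraph V) {S : ℕ → Set V} {v : ℕ → V} {k : ℕ}

theorem specRad_sq_le_add_two_mul_sum_ncard (hS0 : S 0 = Set.univ)
    (hstep : ∀ i < k, v i ∈ S i ∧ S (i + 1) = S i \ {v i}) :
    specRad G ^ 2 ≤ specRad (G.induce (S k)) ^ 2 +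
      2 * ∑ i ∈ Finset.range k, ((G.neighborSet (v i) ∩ S i).ncard : ℝ) := by
  induction k with
  | zero => simp [specRad_induce_of_eq_univ G hS0]
  | succ k ih =>
    obtain ⟨hv, hS⟩ := hstep k k.lt_succ_self
    have hdelete := specRad_induce_sq_le_of_eq_sdiff_singleton G hv hS
    rw [Finset.sum_range_succ]
    linarith [ih fun i hi ↦ hstep i (hi.trans k.lt_succ_self)]

theorem specRad_sq_deletion_process_general {d : ℝ} (hS0 : S 0 = Set.univ)
    (hstep : ∀ i < k, v i ∈ S i ∧ S (i + 1) = S i \ {v i} ∧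
      ((G.neighborSet (v i) ∩ S i).ncard : ℝ) ≤ d) :
    specRad G ^ 2 ≤ specRad (G.induce (S k)) ^ 2 +
      2 * d * ((Fintype.card V : ℝ) - (S k).ncard) := by
  have hdelete : ∀ i < k, v i ∈ S i ∧ S (i + 1) = S i \ {v i} :=
    fun i hi ↦ ⟨(hstep i hi).1, (hstep i hi).2.1⟩
  have hsum : ∑ i ∈ Finset.range k, ((G.neighborSet (v i) ∩ S i).ncard : ℝ) ≤ k * d := by
    simpa using Finset.sum_le_card_nsmul (Finset.range k) _ d
      fun i hi ↦ (hstep i (Finset.mem_range.1 hi)).2.2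
  have hcard : ((S k).ncard : ℝ) + k = Fintype.card V := by
    rw [← Nat.card_eq_fintype_card]
    exact_mod_cast ncard_add_eq_natCard_of_eq_sdiff_singleton hS0 hdelete
  rw [← hcard]
  linarith [specRad_sq_le_add_two_mul_sum_ncard G hS0 hdelete]

end Deletion

/-- If `H = G.induce (S k)` is obtained from `G` by successively deleting
vertices whose current degree is at most `n/8`, then
`ρ²(G) ≤ ρ²(H) + (n - h)n/4`, where `h` is the number of vertices of `H`. -/
theorem specRad_sq_deletion_process {V : Type*} [Fintype V] (G : SimpleGraph V)
    (k h : ℕ) (S : ℕ → Set V) (v : ℕ → V)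
    (hS0 : S 0 = Set.univ)
    (hstep : ∀ i < k, v i ∈ S i ∧ S (i + 1) = S i \ {v i} ∧
      ((G.neighborSet (v i) ∩ S i).ncard : ℝ) ≤ (Fintype.card V : ℝ) / 8)
    (hh : (S k).ncard = h) :
    specRad G ^ 2 ≤ specRad (G.induce (S k)) ^ 2 +
      ((Fintype.card V : ℝ) - (h : ℝ)) * (Fintype.card V : ℝ) / 4 := by
  exact (specRad_sq_deletion_process_general G hS0 hstep).trans_eq (by rw [hh]; ring)
end
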